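/- Let F → E → B be a rational fibration in which F is elliptic with positive Euler characteristic and B is a wedge of odd-dimensional spheres, with model H(B),0 → H(B)⊗ΛV,D → ΛV,d, where ρ: ΛV,d → H*(F;ℚ) is the bigraded-model quasi-isomorphism of F (ρ(V_1) = 0). Then H(B)⊗ker ρ is a D-stable ideal of H(B)⊗ΛV,D, and it is acyclic: every D-cocycle lying in H(B)⊗ker ρ is the D-differential of an element of H(B)⊗ker ρ. -/

import Mathlib

/-!
Why the ideal `B ⊗ ker ρ` is acyclic.

The base is `B = ℚ ⊕ B⁺`, where `B⁺` has odd degrees and zero products (`base_one_sup_pos`,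
`base_mul_zero`, `base_sgn`), so the total algebra is `ΛV ⊕ (B⁺ ⊗ ΛV)`. For a basis `β i` of `B⁺`
the total differential is `D a = d a + ∑ β i · θ i a` up to signs, and `D² = 0` says that each `θ i`
is a derivation of `ΛV`, twisted by the degree involution `sgn a = (-1)^|a| a` and preserving
parity, which anticommutes with `d` (`FibrationModel.exists_derivation`). If the `θ i` preserve
`ker ρ`, then `B ⊗ ker ρ` is `D`-stable; and it is acyclic because `ker ρ` is acyclic, which is
applied first to the component of a cocycle in the fibre and then to each of its coordinates in
`B⁺ ⊗ ΛV` (`FibrationModel.base_mul_acyclic`).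

There remains the fact that such a derivation `θ` preserves `ker ρ` (`kernel_facts`). An element of
`ker ρ` is the sum of an element of lower degree zero and one of positive lower degree. The former
is a coboundary `d y`, and `θ (d y) = -d (θ y)` is in `ker ρ`. The latter is in the ideal generated
by the generators of positive lower degree, and for those it suffices that they have odd degree and
that `ρ` vanishes on all elements of odd degree. This is where ellipticity and the positive Euler
characteristic enter; no purity of the model is assumed, and the needed consequences are derived
from the grading by lower degree as follows.

* Every even generator has a power which is a coboundary modulo the odd generators
  (`Setup.exists_common_pow`). The first `j` generators can be killed one at a time by adjoining
  variables to `ΛV` (`Model`, `Model.oddStep`, `Model.evenStep`). Minimality lets the next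
  generator lift to a cocycle of positive filtration in the enlarged algebra. In this algebra the
  ideal generated by `ker ρ` remains acyclic, and it contains a power of the augmentation ideal
  since `H(F)` is finite-dimensional; so a power of the lift is a coboundary (`Model.nilpotent`,
  `Setup.exists_pow`).
* There are at most as many odd as even generators (`BigradedSullivan.card_odd_le`). The signed
  generating function of `ΛV`, by the sum of degree and lower degree, is the quotient of the products
  of `1 - t ^ wt` over the odd and over the even generators. The differential preserves this sum, and
  the cohomology is concentrated in lower degree zero, so the generating function is a polynomial
  whose value at `1` is the Euler characteristic. As this value is not zero, the numerator does not
  have the larger order of vanishing at `1`.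
* Filter `ΛV` by the number of odd generators in a monomial. As this number is bounded by the number
  of even generators, each of which is nilpotent up to coboundaries, a Koszul-type descent
  (`Setup.koszul`) shows that a cocycle of filtration one is a coboundary (`Setup.exact_of_F`).
  Elements of odd degree have filtration one, so `ρ` kills them. Applied to the differential of an
  even generator of positive lower degree, the same statement contradicts minimality, so that
  there is no such generator (`Setup.odd_of_low`).

All of this is computed in the monomial basis which the freeness of `ΛV` provides. Independence of
the monomials comes from the universal property, applied to an action of `ΛV` by operators on formal
combinations of exponent vectors.
-/

/-!
A self-contained framework for rational homotopy theory at the level of Sullivan models,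
following the conventions of G. Lupton, "Variations on a conjecture of Halperin".

All spaces are simply connected CW complexes of finite type over ℚ; following the paper,
a space is represented by its Sullivan minimal model (a minimal Sullivan algebra), and a
rational fibration `F → E → B` is represented by (the minimal model of the fibration,
i.e.) a KS-extension  `M_B → M_B ⊗ ΛV → ΛV`  whose quotient `ΛV, d` is a minimal model
of the fibre `F`; the total space `E` is represented by the middle (KS) algebra, which is
quasi-isomorphic to the minimal model of `E`.
-/

namespace RHT

/-- A non-negatively graded, graded-commutative differential graded algebra over `ℚ`
(a cochain algebra) : the basic algebraic object of rational homotopy theory. -/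
structure CDGA : Type 1 where
  A : Type
  [ringA : Ring A]
  [algA : Algebra ℚ A]
  grading : ℕ → Submodule ℚ A
  [gradedA : GradedAlgebra grading]
  gcomm : ∀ {i j : ℕ} {x y : A}, x ∈ grading i → y ∈ grading j →
    x * y = ((-1 : ℚ) ^ (i * j)) • (y * x)
  d : A →ₗ[ℚ] A
  d_mem : ∀ {i : ℕ} {x : A}, x ∈ grading i → d x ∈ grading (i + 1)
  d_sq : ∀ x : A, d (d x) = 0
  leibniz : ∀ {i : ℕ} (x y : A), x ∈ grading i →
    d (x * y) = d x * y + ((-1 : ℚ) ^ i) • (x * d y)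

attribute [instance] CDGA.ringA CDGA.algA CDGA.gradedA

namespace CDGA

/-- `x` is a coboundary. -/
def IsExact (C : CDGA) (x : C.A) : Prop := ∃ y : C.A, C.d y = x

def cocycles (C : CDGA) (i : ℕ) : Submodule ℚ C.A := C.grading i ⊓ LinearMap.ker C.d

def coboundaries (C : CDGA) (i : ℕ) : Submodule ℚ C.A := C.grading i ⊓ LinearMap.range C.d

/-- The degree `i` cohomology of a cochain algebra. -/
abbrev cohomology (C : CDGA) (i : ℕ) : Type :=
  ↥(C.cocycles i) ⧸ (Submodule.comap (C.cocycles i).subtype (C.coboundaries i))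

/-- The differential vanishes identically. -/
def ZeroDiff (C : CDGA) : Prop := ∀ x : C.A, C.d x = 0

/-- The rational cup-length of (the cohomology of) a cochain algebra: the greatest `n`
such that some `n`-fold product of cocycles of positive degree is not a coboundary. -/
noncomputable def cup0 (C : CDGA) : ℕ :=
  sSup {n | ∃ l : List C.A, l.length = n ∧
    (∀ x ∈ l, (∃ i, 0 < i ∧ x ∈ C.grading i) ∧ C.d x = 0) ∧ ¬ C.IsExact l.prod}

/-- All `(n+1)`-fold products of elements of the augmentation ideal vanish. -/
def NilpotentOfLength (C : CDGA) (n : ℕ) : Prop :=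
  ∀ l : List C.A, l.length = n + 1 → (∀ x ∈ l, ∃ i, 0 < i ∧ x ∈ C.grading i) →
    l.prod = 0

end CDGA

/-- A morphism of cochain algebras: a `ℚ`-algebra map preserving degrees and
commuting with the differentials. -/
structure Hom (C D : CDGA) where
  toAlgHom : C.A →ₐ[ℚ] D.A
  map_grading : ∀ {i : ℕ} {x : C.A}, x ∈ C.grading i → toAlgHom x ∈ D.grading i
  comm_d : ∀ x : C.A, toAlgHom (C.d x) = D.d (toAlgHom x)

/-- A morphism of cochain algebras is a quasi-isomorphism if it induces an isomorphism
on cohomology (stated elementwise: surjectivity and injectivity on cohomology classes). -/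
def QuasiIso {C D : CDGA} (f : Hom C D) : Prop :=
  (∀ y : D.A, D.d y = 0 → ∃ x : C.A, C.d x = 0 ∧ D.IsExact (f.toAlgHom x - y)) ∧
  (∀ x : C.A, C.d x = 0 → D.IsExact (f.toAlgHom x) → C.IsExact x)

/-- A (cofibrant) cochain algebra is formal if it admits a quasi-isomorphism to a cochain
algebra with zero differential (its cohomology algebra).  A space is formal iff its
minimal model (or any Sullivan model of it) is formal in this sense. -/
def Formal (C : CDGA) : Prop :=
  ∃ (H : CDGA) (f : Hom C H), H.ZeroDiff ∧ QuasiIso f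

/-- A Sullivan algebra: a cochain algebra which is free graded-commutative on a
(simply connected, finite type) graded vector space `V` of generators.  Freeness is
encoded by the universal property of the free graded-commutative algebra. -/
structure Sullivan extends CDGA where
  V : ℕ → Submodule ℚ A
  V_le : ∀ i, V i ≤ grading i
  V_zero : V 0 = ⊥
  V_one : V 1 = ⊥
  V_fin : ∀ i, FiniteDimensional ℚ (V i)
  generates : Algebra.adjoin ℚ (⋃ i, (V i : Set A)) = ⊤
  free : ∀ (C : Type) [instC : Ring C] [instC2 : Algebra ℚ C] (𝒞 : ℕ → Submodule ℚ C),
    (1 : C) ∈ 𝒞 0 →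
    (∀ i j (x y : C), x ∈ 𝒞 i → y ∈ 𝒞 j → x * y ∈ 𝒞 (i + j)) →
    (∀ i j (x y : C), x ∈ 𝒞 i → y ∈ 𝒞 j → x * y = ((-1 : ℚ) ^ (i * j)) • (y * x)) →
    ∀ f : (i : ℕ) → V i →ₗ[ℚ] C, (∀ i (v : V i), f i v ∈ 𝒞 i) →
    ∃! φ : A →ₐ[ℚ] C, ∀ i (v : V i), φ (v : A) = f i v

namespace Sullivan

variable (S : Sullivan)

/-- The span of the generators. -/
def genSpan : Submodule ℚ S.A := ⨆ i, S.V i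

/-- `Λ^{≥ n} V` : the ideal spanned by products of at least `n` generators. -/
def lengthGE (n : ℕ) : Submodule ℚ S.A := S.genSpan ^ n * (⊤ : Submodule ℚ S.A)

/-- Minimality: the differential is decomposable. -/
def Minimal : Prop := ∀ x ∈ S.genSpan, S.d x ∈ S.lengthGE 2

/-- The (space modelled by the) Sullivan algebra is elliptic: finitely many generators
(finite-dimensional rational homotopy) and finite-dimensional cohomology. -/
def Elliptic : Prop :=
  (∃ N, ∀ i, N ≤ i → S.V i = ⊥) ∧
  (∀ i, FiniteDimensional ℚ (S.toCDGA.cohomology i)) ∧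
  (∃ N, ∀ i, N ≤ i → Subsingleton (S.toCDGA.cohomology i))

/-- Positive Euler characteristic : `Σ (-1)^i dim H^i > 0`. -/
def PosEuler : Prop :=
  ∃ N : ℕ, (∀ i, N ≤ i → Subsingleton (S.toCDGA.cohomology i)) ∧
    0 < ∑ i ∈ Finset.range N,
      ((-1 : ℤ) ^ i * (Module.finrank ℚ (S.toCDGA.cohomology i) : ℤ))

/-- `S` is the minimal model of the odd sphere `S^m` : one generator, in odd degree `m`,
and zero differential. -/
def OddSphere (m : ℕ) : Prop :=
  Odd m ∧ Module.finrank ℚ (S.V m) = 1 ∧ (∀ j, j ≠ m → S.V j = ⊥) ∧ S.toCDGA.ZeroDiff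

/-- `S` models a space which rationally is a wedge of odd-dimensional spheres:
it is formal, has no cohomology in positive even degrees, and all products of
positive-degree cohomology classes vanish. -/
def WedgeOddSpheres : Prop :=
  Formal S.toCDGA ∧
  (∀ k, 0 < k → ∀ x ∈ S.grading (2 * k), S.d x = 0 → S.toCDGA.IsExact x) ∧
  (∀ i j (x y : S.A), 0 < i → 0 < j → x ∈ S.grading i → y ∈ S.grading j →
    S.d x = 0 → S.d y = 0 → S.toCDGA.IsExact (x * y))

/-- `S` models a rational Poincaré duality space with fundamental class in degree `N`. -/
def PoincareDuality (N : ℕ) : Prop :=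
  (∀ i, FiniteDimensional ℚ (S.toCDGA.cohomology i)) ∧
  (∀ i, N < i → Subsingleton (S.toCDGA.cohomology i)) ∧
  (Module.finrank ℚ (S.toCDGA.cohomology N) = 1) ∧
  (∀ i (x : S.A), i ≤ N → x ∈ S.grading i → S.d x = 0 → ¬ S.toCDGA.IsExact x →
    ∃ y ∈ S.grading (N - i), S.d y = 0 ∧ ¬ S.toCDGA.IsExact (x * y))

/-- Toomer's invariant `e₀` (of the space with minimal model `S`) : the greatest `n`
such that some non-coboundary cocycle lies in `Λ^{≥n} V`. -/
noncomputable def e0 : ℕ :=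
  sSup {n | ∃ x ∈ S.lengthGE n, S.d x = 0 ∧ ¬ S.toCDGA.IsExact x}

/-- The set of even-degree generators. -/
def evenGenSet : Set S.A := ⋃ k, (S.V (2 * k) : Set S.A)

/-- `Λ(V^even)` as a submodule. -/
def evenSub : Submodule ℚ S.A :=
  Subalgebra.toSubmodule (Algebra.adjoin ℚ S.evenGenSet)

/-- The span of the odd-degree generators. -/
def oddGenSpan : Submodule ℚ S.A := ⨆ k, S.V (2 * k + 1)

/-- A pure Sullivan algebra: `d(V^even) = 0` and `d(V^odd) ⊆ Λ(V^even)`. -/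
def Pure : Prop :=
  (∀ k, ∀ v ∈ S.V (2 * k), S.d v = 0) ∧
  (∀ k, ∀ v ∈ S.V (2 * k + 1), S.d v ∈ S.evenSub)

/-- For a pure Sullivan algebra, the lower (second) grading:
`(ΛV)_k = Λ(V^even) ⊗ Λ^k(V^odd)`. -/
def pureLow (k : ℕ) : Submodule ℚ S.A := S.evenSub * S.oddGenSpan ^ k

/-- The part of positive lower degree `(ΛV)_+`. -/
def pureLowPlus : Submodule ℚ S.A := ⨆ k, S.pureLow (k + 1)

/-- The cohomology of `S` is spherically generated: every cocycle agrees, modulo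
coboundaries, with an element of the subalgebra generated by the cocycles lying in
the generating space `V` (the spherical classes). -/
def SphericallyGenerated : Prop :=
  ∀ x : S.A, S.d x = 0 →
    ∃ y ∈ Algebra.adjoin ℚ {w : S.A | w ∈ S.genSpan ∧ S.d w = 0},
      S.toCDGA.IsExact (x - y)

end Sullivan

/-- A bigraded (minimal) Sullivan algebra: the bigraded model of a formal space.
The lower grading `low` is multiplicative, the generators split into pure lower
degrees, the differential lowers the lower degree by exactly one, and all cocycles
of positive lower degree are coboundaries (`H_+ = 0`). -/
structure BigradedSullivan extends Sullivan where
  low : ℕ → Submodule ℚ A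
  low_one : (1 : A) ∈ low 0
  low_mul : ∀ i j (x y : A), x ∈ low i → y ∈ low j → x * y ∈ low (i + j)
  low_internal : DirectSum.IsInternal low
  V_low : ∀ i, V i = ⨆ k, (V i ⊓ low k)
  d_low_zero : ∀ x ∈ low 0, d x = 0
  d_low : ∀ k, ∀ x ∈ low (k + 1), d x ∈ low k
  acyclic_plus : ∀ k, ∀ x ∈ low (k + 1), d x = 0 → ∃ y : A, d y = x

/-- The lower-degree-`0` part of the generators: `V_k` for `k = 0`, etc. -/
def BigradedSullivan.lowGens (S : BigradedSullivan) (k : ℕ) : Submodule ℚ S.A :=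
  ⨆ i, (S.V i ⊓ S.low k)

/-- The universal property of a KS-extension `B → B ⊗ ΛV` : the total algebra is the
free graded-commutative algebra over `B` on the (lifted) generating space `V`. -/
def RelativelyFree (B T : CDGA) (incl : Hom B T) (V : ℕ → Submodule ℚ T.A) : Prop :=
  ∀ (C : Type) [instC : Ring C] [instC2 : Algebra ℚ C] (𝒞 : ℕ → Submodule ℚ C),
    (1 : C) ∈ 𝒞 0 →
    (∀ i j (x y : C), x ∈ 𝒞 i → y ∈ 𝒞 j → x * y ∈ 𝒞 (i + j)) →
    (∀ i j (x y : C), x ∈ 𝒞 i → y ∈ 𝒞 j → x * y = ((-1 : ℚ) ^ (i * j)) • (y * x)) →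
    ∀ (g : B.A →ₐ[ℚ] C), (∀ i (x : B.A), x ∈ B.grading i → g x ∈ 𝒞 i) →
    ∀ (f : (i : ℕ) → V i →ₗ[ℚ] C), (∀ i (v : V i), f i v ∈ 𝒞 i) →
    ∃! φ : T.A →ₐ[ℚ] C, (∀ x : B.A, φ (incl.toAlgHom x) = g x) ∧
      (∀ i (v : V i), φ (v : T.A) = f i v)

/-- The KS (Koszul–Sullivan) condition: the lifted generators admit a well-ordered
basis `{v_α}` with `D v_α ∈ B ⊗ Λ(V_{<α})`. -/
def KSBasisCondition (B T : CDGA) (incl : Hom B T) (V : ℕ → Submodule ℚ T.A) : Prop :=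
  ∃ (ι : Set ℕ) (b : ι → T.A),
    LinearIndependent ℚ b ∧
    Submodule.span ℚ (Set.range b) = (⨆ i, V i) ∧
    (∀ α : ι, ∃ i, b α ∈ V i) ∧
    (∀ α : ι, T.d (b α) ∈
      Algebra.adjoin ℚ
        (Set.range (incl.toAlgHom : B.A → T.A) ∪ b '' {β : ι | (β : ℕ) < (α : ℕ)}))

/-- `incl : B → T` is a KS-extension of `B`. -/
def IsRelKS (B T : CDGA) (incl : Hom B T) : Prop :=
  ∃ V : ℕ → Submodule ℚ T.A, (∀ i, V i ≤ T.grading i) ∧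
    RelativelyFree B T incl V ∧ KSBasisCondition B T incl V

/-- A model of a rational fibration `F → E → B` with base algebra `B` (a Sullivan model
of the base, or e.g. its cohomology `H(B)` when the base is formal) and fibre a Sullivan
algebra `F = (ΛV, d)`: a KS-extension `B → B ⊗ ΛV → ΛV` whose quotient by the ideal
generated by `B⁺` is `F`.  The total algebra `T` represents the total space `E`. -/
structure FibrationModel (B : CDGA) (F : Sullivan) where
  T : CDGA
  incl : Hom B T
  proj : Hom T F.toCDGA
  V : ℕ → Submodule ℚ T.A
  V_le : ∀ i, V i ≤ T.grading i
  incl_inj : Function.Injective (incl.toAlgHom : B.A → T.A)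
  relFree : RelativelyFree B T incl V
  ksBasis : KSBasisCondition B T incl V
  proj_incl : ∀ i, 0 < i → ∀ x ∈ B.grading i, proj.toAlgHom (incl.toAlgHom x) = 0
  proj_V : ∀ i, (V i).map (proj.toAlgHom.toLinearMap) = F.V i
  fiber_inj : ∀ x ∈ Subalgebra.toSubmodule (Algebra.adjoin ℚ (⋃ i, (V i : Set T.A))),
    proj.toAlgHom x = 0 → x = 0
  ker_proj : ∀ x : T.A, proj.toAlgHom x = 0 ↔
    x ∈ (Submodule.map (incl.toAlgHom.toLinearMap) (⨆ i, B.grading (i + 1))) *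
      (⊤ : Submodule ℚ T.A)

namespace FibrationModel

variable {B : CDGA} {F : Sullivan} (P : FibrationModel B F)

/-- The copy `1 ⊗ ΛV ⊆ B ⊗ ΛV` of the fibre inside the total algebra: the subalgebra
generated by the lifted generators. -/
def fiberSub : Submodule ℚ P.T.A :=
  Subalgebra.toSubmodule (Algebra.adjoin ℚ (⋃ i, (P.V i : Set P.T.A)))

/-- The image `B ⊗ 1 ⊆ B ⊗ ΛV` of the base. -/
def baseSub : Submodule ℚ P.T.A := LinearMap.range (P.incl.toAlgHom.toLinearMap)

/-- The span of the lifted fibre generators. -/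
def fiberGenSpan : Submodule ℚ P.T.A := ⨆ i, P.V i

/-- The span of all generators (base generators `W` together with the fibre ones). -/
def totalGenSpan (W : Submodule ℚ B.A) : Submodule ℚ P.T.A :=
  Submodule.map P.incl.toAlgHom.toLinearMap W ⊔ P.fiberGenSpan

/-- `Λ^{≥n}(W ⊕ V)` in the total algebra. -/
def totalLengthGE (W : Submodule ℚ B.A) (n : ℕ) : Submodule ℚ P.T.A :=
  (P.totalGenSpan W) ^ n * (⊤ : Submodule ℚ P.T.A)

/-- The part of the fibre copy `1 ⊗ ΛV` lying over a submodule `K ⊆ ΛV`. -/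
def fiberComap (K : Submodule ℚ F.A) : Submodule ℚ P.T.A :=
  P.fiberSub ⊓ Submodule.comap P.proj.toAlgHom.toLinearMap K

/-- The span of the even-degree lifted generators. -/
def evenGenSpan : Submodule ℚ P.T.A := ⨆ k, P.V (2 * k)

/-- `Λ(V^even)` inside the total algebra. -/
def evenSub : Submodule ℚ P.T.A :=
  Subalgebra.toSubmodule (Algebra.adjoin ℚ (⋃ k, (P.V (2 * k) : Set P.T.A)))

/-- `Λ⁺(V^even)` inside the total algebra. -/
def evenPlus : Submodule ℚ P.T.A := P.evenGenSpan * P.evenSub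

/-- The fibration (model) is totally non-cohomologous to zero: the projection onto the
fibre (modelling the fibre inclusion `j : F → E`) is surjective on cohomology. -/
def TNCZ : Prop :=
  ∀ y : F.A, F.d y = 0 → ∃ x : P.T.A, P.T.d x = 0 ∧
    CDGA.IsExact F.toCDGA (P.proj.toAlgHom x - y)

end FibrationModel

/-- A (quasi-isomorphism) ladder between two fibration models: quasi-isomorphisms of
base, total and fibre algebras making both squares commute. -/
structure FibLadder {B B' : CDGA} {F F' : Sullivan}
    (P : FibrationModel B F) (P' : FibrationModel B' F') where
  fB : Hom B B'
  fT : Hom P.T P'.T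
  fF : Hom F.toCDGA F'.toCDGA
  hB : QuasiIso fB
  hT : QuasiIso fT
  hF : QuasiIso fF
  commB : ∀ x : B.A, fT.toAlgHom (P.incl.toAlgHom x) = P'.incl.toAlgHom (fB.toAlgHom x)
  commF : ∀ x : P.T.A,
    fF.toAlgHom (P.proj.toAlgHom x) = P'.proj.toAlgHom (fT.toAlgHom x)

/-- Two fibration models are quasi-isomorphic (model the same rational fibration). -/
def ModelPair {B B' : CDGA} {F F' : Sullivan}
    (P : FibrationModel B F) (P' : FibrationModel B' F') : Prop :=
  Nonempty (FibLadder P P') ∨ Nonempty (FibLadder P' P)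

/-- An isomorphism of KS-extensions. -/
def FibIso {B B' : CDGA} {F F' : Sullivan}
    (P : FibrationModel B F) (P' : FibrationModel B' F') : Prop :=
  ∃ L : FibLadder P P', Function.Bijective (L.fB.toAlgHom : B.A → B'.A) ∧
    Function.Bijective (L.fT.toAlgHom : P.T.A → P'.T.A) ∧
    Function.Bijective (L.fF.toAlgHom : F.A → F'.A)

/-- `cat₀ ≤ n` (Félix–Halperin): the projection `p_n : ΛV → ΛV/Λ^{≥n+1}V` makes `ΛV`
into a homotopy retract: for a relative KS-model `ΛV → R → ΛV/Λ^{≥n+1}V` of `p_n`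
there is a retraction `ρ : R → ΛV` restricting to the identity on `ΛV`. -/
def catLe (S : Sullivan) (n : ℕ) : Prop :=
  ∃ (Q : CDGA) (q : Hom S.toCDGA Q),
    Function.Surjective (q.toAlgHom : S.A → Q.A) ∧
    (∀ x : S.A, q.toAlgHom x = 0 ↔ x ∈ S.lengthGE (n + 1)) ∧
    ∃ (R : CDGA) (ι : Hom S.toCDGA R) (ψ : Hom R Q) (ρ : Hom R S.toCDGA),
      IsRelKS S.toCDGA R ι ∧ QuasiIso ψ ∧
      (∀ x : S.A, ψ.toAlgHom (ι.toAlgHom x) = q.toAlgHom x) ∧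
      (∀ x : S.A, ρ.toAlgHom (ι.toAlgHom x) = x)

/-- The rational Lusternik–Schnirelmann category of the space with minimal model `S`. -/
noncomputable def cat0 (S : Sullivan) : ℕ := sInf {n | catLe S n}

/-- The rational cone-length (Cornea): the least `n` such that the minimal model is
quasi-isomorphic to a cochain algebra whose augmentation ideal has vanishing
`(n+1)`-fold products. -/
noncomputable def cl0 (S : Sullivan) : ℕ :=
  sInf {n | ∃ (Q : CDGA) (f : Hom S.toCDGA Q), QuasiIso f ∧ CDGA.NilpotentOfLength Q n}

/-- For a formal space the invariants `cup₀, e₀, cat₀, cl₀` all agree; `nil₀` denotes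
their common value (here represented by `cat₀`). -/
noncomputable def nil0 (S : Sullivan) : ℕ := cat0 S

end RHT

namespace RHT

/-! ### Monomials -/

/-- A finite family of generators `v` of degrees `deg` that commute up to the Koszul sign, and whose
monomials with odd generators occurring at most once form a basis.  A monomial is indexed by the
multiset of its factors, multiplied in the order of `Multiset.toList`. -/
structure MonoBasis (A : Type) [Ring A] [Algebra ℚ A] (n : ℕ) where
  v : Fin n → A
  deg : Fin n → ℕ
  comm : ∀ i j, v i * v j = ((-1 : ℚ) ^ (deg i * deg j)) • (v j * v i)
  indep : LinearIndependent ℚ (fun m : {m : Multiset (Fin n) // ∀ i, Odd (deg i) → m.count i ≤ 1} =>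
    (m.1.toList.map v).prod)
  spans : Submodule.span ℚ (Set.range (fun m : {m : Multiset (Fin n) //
    ∀ i, Odd (deg i) → m.count i ≤ 1} => (m.1.toList.map v).prod)) = ⊤

/-- Words commute up to sign. -/
theorem prod_perm_sign {A : Type} [Ring A] [Algebra ℚ A] {n : ℕ} {v : Fin n → A} {deg : Fin n → ℕ}
    (comm : ∀ i j, v i * v j = ((-1 : ℚ) ^ (deg i * deg j)) • (v j * v i))
    {l l' : List (Fin n)} (h : l.Perm l') :
    ∃ e : ℤˣ, (l.map v).prod = ((e : ℤ) : ℚ) • (l'.map v).prod := by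
  induction h with
  | nil => exact ⟨1, by simp⟩
  | cons x _ ih =>
    obtain ⟨e, he⟩ := ih
    exact ⟨e, by simp [he]⟩
  | swap x y l =>
    refine ⟨(-1) ^ (deg y * deg x), ?_⟩
    simp only [List.map_cons, List.prod_cons, ← mul_assoc]
    rw [comm y x]
    simp
  | trans _ _ ih1 ih2 =>
    obtain ⟨e, he⟩ := ih1
    obtain ⟨e', he'⟩ := ih2
    exact ⟨e * e', by rw [he, he', smul_smul]; push_cast; rfl⟩

namespace MonoBasis

variable {A : Type} [Ring A] [Algebra ℚ A] {n : ℕ} (M : MonoBasis A n)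

/-- The exponent vectors of nonzero monomials: odd generators occur at most once. -/
def Valid (m : Multiset (Fin n)) : Prop := ∀ i, Odd (M.deg i) → m.count i ≤ 1

/-- The monomial with exponent vector `m`. -/
noncomputable def mono (m : Multiset (Fin n)) : A := (m.toList.map M.v).prod

/-- The monomial basis of the algebra. -/
noncomputable def bas : Module.Basis {m // M.Valid m} ℚ A :=
  Module.Basis.mk (v := fun m : {m // M.Valid m} => M.mono m.1) M.indep M.spans.ge

@[simp] theorem bas_apply (m : {m // M.Valid m}) : M.bas m = M.mono m.1 :=
  Module.Basis.mk_apply M.indep M.spans.ge m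

/-- The span of the monomials whose exponent vector satisfies `p`. -/
def Sp (p : Multiset (Fin n) → Prop) : Submodule ℚ A :=
  Submodule.span ℚ (M.mono '' {m | p m})

theorem mono_mem {p : Multiset (Fin n) → Prop} {m} (h : p m) : M.mono m ∈ M.Sp p :=
  Submodule.subset_span ⟨m, h, rfl⟩

theorem word_eq (l : List (Fin n)) :
    ∃ e : ℤˣ, (l.map M.v).prod = ((e : ℤ) : ℚ) • M.mono (l : Multiset (Fin n)) :=
  prod_perm_sign M.comm (Multiset.coe_eq_coe.1 (Multiset.coe_toList _).symm)

theorem mono_eq_word (l : List (Fin n)) :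
    ∃ e : ℤˣ, M.mono (l : Multiset (Fin n)) = ((e : ℤ) : ℚ) • (l.map M.v).prod :=
  prod_perm_sign M.comm (Multiset.coe_eq_coe.1 (Multiset.coe_toList _))

@[simp] theorem mono_zero : M.mono 0 = 1 := by simp [mono]

theorem mono_singleton (i : Fin n) : M.mono {i} = M.v i := by simp [mono]

theorem mono_mul (m m' : Multiset (Fin n)) :
    ∃ e : ℤˣ, M.mono m * M.mono m' = ((e : ℤ) : ℚ) • M.mono (m + m') := by
  obtain ⟨e, he⟩ := M.word_eq (m.toList ++ m'.toList)
  refine ⟨e, ?_⟩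
  rw [← Multiset.coe_add, Multiset.coe_toList, Multiset.coe_toList] at he
  rw [← he, List.map_append, List.prod_append]; rfl

theorem sq_odd (i : Fin n) (h : Odd (M.deg i)) : M.v i * M.v i = 0 := by
  have := M.comm i i
  rw [(h.mul h).neg_one_pow, neg_one_smul] at this
  have h2 : (2 : ℚ) • (M.v i * M.v i) = 0 := by
    rw [two_smul]; nth_rw 1 [this]; simp
  simpa using h2

theorem mono_invalid {m : Multiset (Fin n)} (h : ¬ M.Valid m) : M.mono m = 0 := by
  unfold Valid at h
  push Not at h
  obtain ⟨i, hi, hc⟩ := h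
  have h2 : ({i} + {i} : Multiset (Fin n)) ≤ m := by
    rw [← Multiset.cons_zero, Multiset.le_iff_count]
    intro a
    by_cases hai : a = i
    · subst hai
      have : 2 ≤ m.count a := hc
      simpa using this
    · simp [hai]
  obtain ⟨m', rfl⟩ := Multiset.le_iff_exists_add.1 h2
  obtain ⟨e, he⟩ := M.mono_mul ({i} + {i}) m'
  obtain ⟨e', he'⟩ := M.mono_mul {i} {i}
  rw [M.mono_singleton, M.sq_odd i hi] at he'
  have h0 : M.mono ({i} + {i}) = 0 := by
    have := he'.symm
    rwa [smul_eq_zero_iff_right (by simp)] at this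
  rw [h0, zero_mul] at he
  have := he.symm
  rwa [smul_eq_zero_iff_right (by simp)] at this

theorem repr_mono_self {m : Multiset (Fin n)} (h : M.Valid m) :
    M.bas.repr (M.mono m) = Finsupp.single ⟨m, h⟩ 1 := by
  rw [← M.bas.repr_self ⟨m, h⟩, bas_apply]

theorem mem_Sp {p : Multiset (Fin n) → Prop} {a : A} :
    a ∈ M.Sp p ↔ ∀ m, M.bas.repr a m ≠ 0 → p m.1 := by
  constructor
  · intro h
    induction h using Submodule.span_induction with
    | mem x hx =>
      obtain ⟨m, hm, rfl⟩ := hx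
      intro m' hm'
      by_cases hv : M.Valid m
      · rw [M.repr_mono_self hv, Finsupp.single_apply] at hm'
        split_ifs at hm' with h
        · subst h; exact hm
        · simp at hm'
      · simp [M.mono_invalid hv] at hm'
    | zero => simp
    | add x y _ _ hx hy =>
      intro m hm
      by_contra hp
      have h1 : M.bas.repr x m = 0 := by by_contra h; exact hp (hx m h)
      have h2 : M.bas.repr y m = 0 := by by_contra h; exact hp (hy m h)
      simp [h1, h2] at hm
    | smul c x _ hx =>
      intro m hm
      apply hx
      intro h
      simp [h] at hm
  · intro h
    rw [← M.bas.linearCombination_repr a, Finsupp.linearCombination_apply]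
    refine Submodule.sum_mem _ fun m hm => Submodule.smul_mem _ _ ?_
    rw [bas_apply]
    exact M.mono_mem (h m (by simpa using hm))

theorem mono_mem_iff {p : Multiset (Fin n) → Prop} {m} (hv : M.Valid m) :
    M.mono m ∈ M.Sp p ↔ p m := by
  refine ⟨fun h => ?_, M.mono_mem⟩
  have := M.mem_Sp.1 h ⟨m, hv⟩
  rw [M.repr_mono_self hv] at this
  simpa using this

theorem Sp_le {p : Multiset (Fin n) → Prop} {S : Submodule ℚ A} (h : ∀ m, p m → M.mono m ∈ S) :
    M.Sp p ≤ S := by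
  rw [Sp, Submodule.span_le]
  rintro _ ⟨m, hm, rfl⟩
  exact h m hm

theorem Sp_mono {p q : Multiset (Fin n) → Prop} (h : ∀ m, p m → q m) : M.Sp p ≤ M.Sp q :=
  M.Sp_le fun m hm => M.mono_mem (h m hm)

theorem Sp_true : M.Sp (fun _ => True) = ⊤ := by
  rw [eq_top_iff]
  intro a _
  exact M.mem_Sp.2 fun _ _ => trivial

theorem Sp_false : M.Sp (fun _ => False) = ⊥ := by
  rw [eq_bot_iff]
  exact M.Sp_le fun m hm => hm.elim

theorem Sp_or (p q : Multiset (Fin n) → Prop) : M.Sp (fun m => p m ∨ q m) = M.Sp p ⊔ M.Sp q := by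
  rw [Sp, Sp, Sp, ← Submodule.span_union, ← Set.image_union]; rfl

theorem Sp_and (p q : Multiset (Fin n) → Prop) : M.Sp (fun m => p m ∧ q m) = M.Sp p ⊓ M.Sp q := by
  ext a
  simp only [Submodule.mem_inf, M.mem_Sp]
  exact ⟨fun h => ⟨fun m hm => (h m hm).1, fun m hm => (h m hm).2⟩, fun h m hm => ⟨h.1 m hm, h.2 m hm⟩⟩

theorem mul_mem {p q r : Multiset (Fin n) → Prop} (h : ∀ m m', p m → q m' → r (m + m'))
    {a b : A} (ha : a ∈ M.Sp p) (hb : b ∈ M.Sp q) : a * b ∈ M.Sp r := by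
  have : M.Sp p * M.Sp q ≤ M.Sp r := by
    rw [Sp, Sp, Submodule.span_mul_span, Submodule.span_le]
    rintro _ ⟨_, ⟨m, hm, rfl⟩, _, ⟨m', hm', rfl⟩, rfl⟩
    obtain ⟨e, he⟩ := M.mono_mul m m'
    simp only [he]
    exact Submodule.smul_mem _ _ (M.mono_mem (h m m' hm hm'))
  exact this (Submodule.mul_mem_mul ha hb)

theorem word_mem {p : Multiset (Fin n) → Prop} {l : List (Fin n)} (h : p l) :
    (l.map M.v).prod ∈ M.Sp p := by
  obtain ⟨e, he⟩ := M.word_eq l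
  rw [he]
  exact Submodule.smul_mem _ _ (M.mono_mem h)

/-- A linear condition satisfied by the spanning monomials is satisfied by every element of the
span. -/
theorem linear_le {B : Type} [AddCommGroup B] [Module ℚ B] (f : A →ₗ[ℚ] B)
    {p : Multiset (Fin n) → Prop} {S : Submodule ℚ B} (h : ∀ m, p m → f (M.mono m) ∈ S)
    {a : A} (ha : a ∈ M.Sp p) : f a ∈ S :=
  (M.Sp_le (S := S.comap f) h) ha

/-- Multiplication by a monomial permutes the monomials up to sign, so it reflects membership in
monomial submodules, apart from monomials that it kills. -/
theorem cancel {p q : Multiset (Fin n) → Prop} (m0 : Multiset (Fin n)) {a : A}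
    (ha : M.mono m0 * a ∈ M.Sp p)
    (h : ∀ m, M.Valid m → (M.Valid (m0 + m) → p (m0 + m)) → q m) : a ∈ M.Sp q := by
  rw [mem_Sp]
  intro m hm
  apply h m.1 m.2
  intro hv
  refine M.mem_Sp.1 ha ⟨m0 + m.1, hv⟩ ?_
  have key : ∀ b : A, ∃ c : ℚ, c ≠ 0 ∧ ∀ b : A, M.bas.repr (M.mono m0 * b) ⟨m0 + m.1, hv⟩ =
      c * M.bas.repr b m := by
    intro _
    obtain ⟨e, he⟩ := M.mono_mul m0 m.1
    refine ⟨((e : ℤ) : ℚ), by simp, fun b => ?_⟩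
    have : (Finsupp.lapply ⟨m0 + m.1, hv⟩ ∘ₗ M.bas.repr.toLinearMap ∘ₗ LinearMap.mulLeft ℚ (M.mono m0))
        = ((e : ℤ) : ℚ) • (Finsupp.lapply m ∘ₗ M.bas.repr.toLinearMap) := by
      refine M.bas.ext fun m' => ?_
      simp only [LinearMap.comp_apply, LinearMap.mulLeft_apply, bas_apply, LinearEquiv.coe_coe,
        LinearMap.smul_apply, Finsupp.lapply_apply]
      obtain ⟨e', he'⟩ := M.mono_mul m0 m'.1
      rw [he', M.repr_mono_self m'.2, map_smul, Finsupp.smul_apply]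
      by_cases hmm : m' = m
      · subst hmm
        have hee : M.mono m0 * M.mono m'.1 = M.mono m0 * M.mono m'.1 := rfl
        rw [M.repr_mono_self hv]
        have h1 : ((e : ℤ) : ℚ) • M.mono (m0 + m'.1) = ((e' : ℤ) : ℚ) • M.mono (m0 + m'.1) := by
          rw [← he, he']
        have h2 := congrArg (fun x => M.bas.repr x ⟨m0 + m'.1, hv⟩) h1
        simp only [map_smul, M.repr_mono_self hv] at h2
        simp at h2
        simp [h2]
      · have h1 : M.bas.repr (M.mono (m0 + m'.1)) ⟨m0 + m.1, hv⟩ = 0 := by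
          by_cases hv' : M.Valid (m0 + m'.1)
          · rw [M.repr_mono_self hv', Finsupp.single_eq_of_ne]
            intro h
            apply hmm
            have := congrArg Subtype.val h
            simp only [add_right_inj] at this
            exact Subtype.ext this.symm
          · simp [M.mono_invalid hv']
        rw [h1, Finsupp.single_eq_of_ne (Ne.symm hmm)]
        simp
    have := LinearMap.congr_fun this b
    simpa using this
  obtain ⟨c, hc, hk⟩ := key 0
  rw [hk a]
  exact mul_ne_zero hc hm

end MonoBasis
end RHT

namespace RHT

theorem word_comm_single {A : Type} [Ring A] [Algebra ℚ A] {n : ℕ} {v : Fin n → A} {deg : Fin n → ℕ}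
    (comm : ∀ i j, v i * v j = ((-1 : ℚ) ^ (deg i * deg j)) • (v j * v i)) (i : Fin n)
    (l : List (Fin n)) : v i * (l.map v).prod =
      ((-1 : ℚ) ^ (deg i * (l.map deg).sum)) • ((l.map v).prod * v i) := by
  induction l with
  | nil => simp
  | cons j l ih =>
    simp only [List.map_cons, List.prod_cons, List.sum_cons]
    rw [← mul_assoc, comm, smul_mul_assoc, mul_assoc, ih, mul_smul_comm, smul_smul, mul_add, pow_add,
      mul_assoc]

theorem word_comm {A : Type} [Ring A] [Algebra ℚ A] {n : ℕ} {v : Fin n → A} {deg : Fin n → ℕ}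
    (comm : ∀ i j, v i * v j = ((-1 : ℚ) ^ (deg i * deg j)) • (v j * v i))
    (l l' : List (Fin n)) : (l.map v).prod * (l'.map v).prod =
      ((-1 : ℚ) ^ ((l.map deg).sum * (l'.map deg).sum)) • ((l'.map v).prod * (l.map v).prod) := by
  induction l with
  | nil => simp
  | cons j l ih =>
    simp only [List.map_cons, List.prod_cons, List.sum_cons]
    rw [mul_assoc, ih, mul_smul_comm, ← mul_assoc, word_comm_single comm, smul_mul_assoc, smul_smul,
      add_mul, pow_add, mul_assoc, mul_comm ((-1 : ℚ) ^ _)]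

/-! ### Linear independence of the monomials -/

section Operators

variable {n : ℕ} (deg : Fin n → ℕ)

/-- The sign (or zero) of left multiplication by the `i`-th generator on a normalized monomial. -/
noncomputable def opSign (i : Fin n) (m : Multiset (Fin n)) : ℚ := by
  classical
  exact if Odd (deg i) then
    (if i ∈ m then 0 else (-1) ^ (m.filter (fun j => Odd (deg j) ∧ j < i)).card) else 1

/-- Left multiplication by the `i`-th generator, as an operator on formal combinations of
exponent vectors. -/
noncomputable def op (i : Fin n) : Module.End ℚ (Multiset (Fin n) →₀ ℚ) :=
  Finsupp.linearCombination ℚ (fun m => Finsupp.single (i ::ₘ m) (opSign deg i m))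

theorem op_single (i : Fin n) (m : Multiset (Fin n)) (c : ℚ) :
    op deg i (Finsupp.single m c) = Finsupp.single (i ::ₘ m) (c * opSign deg i m) := by
  simp [op]

theorem opSign_comm (i j : Fin n) (m : Multiset (Fin n)) :
    opSign deg j m * opSign deg i (j ::ₘ m) =
      (-1) ^ (deg i * deg j) * (opSign deg i m * opSign deg j (i ::ₘ m)) := by
  classical
  unfold opSign
  by_cases hi : Odd (deg i)
  · by_cases hj : Odd (deg j)
    · rw [(hi.mul hj).neg_one_pow]
      by_cases him : i ∈ m
      · simp [hi, hj, him]
      by_cases hjm : j ∈ m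
      · simp [hi, hj, hjm]
      rcases lt_trichotomy i j with h | h | h
      · simp [hi, hj, him, hjm, h, h.ne, h.ne', h.not_gt, pow_succ]
        ring
      · subst h; simp [hi]
      · simp [hi, hj, him, hjm, h, h.ne, h.ne', h.not_gt, pow_succ]
        ring
    · have hij : i ≠ j := by rintro rfl; exact hj hi
      rw [((Nat.not_odd_iff_even.1 hj).mul_left _).neg_one_pow]
      simp [hi, hj, hij]
  · rw [((Nat.not_odd_iff_even.1 hi).mul_right _).neg_one_pow]
    by_cases hj : Odd (deg j)
    · have hij : j ≠ i := by rintro rfl; exact hi hj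
      simp [hi, hj, hij]
    · simp [hi, hj]

theorem op_comm (i j : Fin n) :
    op deg i * op deg j = ((-1 : ℚ) ^ (deg i * deg j)) • (op deg j * op deg i) := by
  refine Finsupp.lhom_ext fun m c => ?_
  simp only [Module.End.mul_apply, LinearMap.smul_apply, op_single, Finsupp.smul_single,
    smul_eq_mul, mul_assoc]
  rw [opSign_comm, Multiset.cons_swap]
  congr 1
  ring

theorem op_word (l : List (Fin n)) (hl : ∀ i, Odd (deg i) → (l : Multiset (Fin n)).count i ≤ 1) :
    ∃ c : ℚ, c ≠ 0 ∧ (l.map (op deg)).prod (Finsupp.single 0 1) =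
      Finsupp.single (l : Multiset (Fin n)) c := by
  classical
  induction l with
  | nil => exact ⟨1, one_ne_zero, by simp⟩
  | cons i l ih =>
    obtain ⟨c, hc, h⟩ := ih fun j hj => by
      refine le_trans ?_ (hl j hj)
      rw [← Multiset.cons_coe]
      exact Multiset.count_le_of_le _ (Multiset.le_cons_self _ _)
    refine ⟨c * opSign deg i l, mul_ne_zero hc ?_, ?_⟩
    · unfold opSign
      by_cases hi : Odd (deg i)
      · have : i ∉ (l : Multiset (Fin n)) := by
          intro hm
          have h1 := hl i hi
          rw [← Multiset.cons_coe, Multiset.count_cons_self] at h1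
          have h2 := Multiset.count_pos.2 hm
          omega
        simp only [hi, this, if_true, if_false]
        positivity
      · simp [hi]
    · rw [List.map_cons, List.prod_cons, Module.End.mul_apply, h, op_single, Multiset.cons_coe]

/-- The operators of total degree `k`. -/
noncomputable def opGrading (k : ℕ) : Submodule ℚ (Module.End ℚ (Multiset (Fin n) →₀ ℚ)) :=
  Submodule.span ℚ {x | ∃ l : List (Fin n), (l.map deg).sum = k ∧ x = (l.map (op deg)).prod}

theorem opGrading_mul (i j : ℕ) (x y) (hx : x ∈ opGrading deg i) (hy : y ∈ opGrading deg j) :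
    x * y ∈ opGrading deg (i + j) := by
  have : opGrading deg i * opGrading deg j ≤ opGrading deg (i + j) := by
    unfold opGrading
    rw [Submodule.span_mul_span, Submodule.span_le]
    rintro _ ⟨_, ⟨l, hl, rfl⟩, _, ⟨l', hl', rfl⟩, rfl⟩
    exact Submodule.subset_span ⟨l ++ l', by simp [hl, hl'], by simp⟩
  exact this (Submodule.mul_mem_mul hx hy)

theorem opGrading_comm (i j : ℕ) (x y) (hx : x ∈ opGrading deg i) (hy : y ∈ opGrading deg j) :
    x * y = ((-1 : ℚ) ^ (i * j)) • (y * x) := by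
  induction hx using Submodule.span_induction with
  | zero => simp
  | add a b _ _ ha hb => rw [add_mul, ha, hb, mul_add, smul_add]
  | smul c a _ ha => rw [smul_mul_assoc, ha, mul_smul_comm, smul_comm]
  | mem x hx =>
    obtain ⟨l, hl, rfl⟩ := hx
    induction hy using Submodule.span_induction with
    | zero => simp
    | add a b _ _ ha hb => rw [mul_add, ha, hb, add_mul, smul_add]
    | smul c a _ ha => rw [mul_smul_comm, ha, smul_mul_assoc, smul_comm]
    | mem y hy =>
      obtain ⟨l', hl', rfl⟩ := hy
      rw [word_comm (op_comm deg) l l', hl, hl']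

end Operators

/-- A homogeneous basis of the generating space. -/
structure GenBasis (S : Sullivan) (n : ℕ) where
  v : Fin n → S.A
  deg : Fin n → ℕ
  mem : ∀ i, v i ∈ S.V (deg i)
  li : LinearIndependent ℚ v
  sp : Submodule.span ℚ (Set.range v) = S.genSpan

namespace GenBasis
variable {S : Sullivan} {n : ℕ} (g : GenBasis S n)

theorem V_le_span (i : ℕ) : S.V i ≤ Submodule.span ℚ (Set.range g.v) := by
  rw [g.sp]; exact le_iSup S.V i

theorem comm (i j : Fin n) :
    g.v i * g.v j = ((-1 : ℚ) ^ (g.deg i * g.deg j)) • (g.v j * g.v i) :=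
  S.gcomm (S.V_le _ (g.mem i)) (S.V_le _ (g.mem j))

theorem exists_op : ∃ φ : S.A →ₐ[ℚ] Module.End ℚ (Multiset (Fin n) →₀ ℚ),
    ∀ i, φ (g.v i) = op g.deg i := by
  classical
  let b := Module.Basis.span g.li
  let f : (i : ℕ) → S.V i →ₗ[ℚ] Module.End ℚ (Multiset (Fin n) →₀ ℚ) := fun i =>
    ∑ j : Fin n, (if g.deg j = i then (1 : ℚ) else 0) •
      LinearMap.smulRight (b.coord j ∘ₗ Submodule.inclusion (g.V_le_span i)) (op g.deg j)
  have hf : ∀ i (x : S.V i), f i x = ∑ j : Fin n, (if g.deg j = i then (1 : ℚ) else 0) •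
      b.coord j (Submodule.inclusion (g.V_le_span i) x) • op g.deg j := by
    intro i x
    simp only [f, LinearMap.sum_apply, LinearMap.smul_apply, LinearMap.smulRight_apply,
      LinearMap.comp_apply]
  obtain ⟨φ, hφ, -⟩ := S.free (Module.End ℚ (Multiset (Fin n) →₀ ℚ)) (opGrading g.deg)
    (Submodule.subset_span ⟨[], by simp, by simp⟩) (opGrading_mul g.deg) (opGrading_comm g.deg) f
    (by
      intro i x
      rw [hf]
      refine Submodule.sum_mem _ fun j _ => ?_
      split_ifs with h
      · refine Submodule.smul_mem _ _ (Submodule.smul_mem _ _ (Submodule.subset_span ⟨[j], ?_, ?_⟩))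
        · simpa using h
        · simp
      · simp)
  refine ⟨φ, fun i => ?_⟩
  have h1 := hφ (g.deg i) ⟨g.v i, g.mem i⟩
  rw [hf] at h1
  rw [h1, Finset.sum_eq_single i]
  · have : Submodule.inclusion (g.V_le_span (g.deg i)) ⟨g.v i, g.mem i⟩ = b i := by
      apply Subtype.ext
      simp [b, Module.Basis.span_apply]
    rw [this]
    simp
  · intro j _ hj
    have : Submodule.inclusion (g.V_le_span (g.deg i)) ⟨g.v i, g.mem i⟩ = b i := by
      apply Subtype.ext
      simp [b, Module.Basis.span_apply]
    rw [this]
    simp [Finsupp.single_eq_of_ne hj]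
  · simp

theorem indep : LinearIndependent ℚ (fun m : {m : Multiset (Fin n) // ∀ i, Odd (g.deg i) → m.count i ≤ 1} =>
    (m.1.toList.map g.v).prod) := by
  obtain ⟨φ, hφ⟩ := g.exists_op
  have key : ∀ m : {m : Multiset (Fin n) // ∀ i, Odd (g.deg i) → m.count i ≤ 1},
      ∃ c : ℚ, c ≠ 0 ∧ φ (m.1.toList.map g.v).prod (Finsupp.single 0 1) = Finsupp.single m.1 c := by
    intro m
    obtain ⟨c, hc, h⟩ := op_word g.deg m.1.toList (by simpa using m.2)
    refine ⟨c, hc, ?_⟩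
    rw [map_list_prod, List.map_map]
    have : (⇑φ ∘ g.v) = op g.deg := funext hφ
    rw [this, h, Multiset.coe_toList]
  choose c hc h using key
  let ev : Module.End ℚ (Multiset (Fin n) →₀ ℚ) →ₗ[ℚ] (Multiset (Fin n) →₀ ℚ) :=
    LinearMap.applyₗ (Finsupp.single 0 1)
  refine LinearIndependent.of_comp (ev ∘ₗ φ.toLinearMap) ?_
  rw [linearIndependent_iff']
  intro s a ha m hm
  have h2 := DFunLike.congr_fun ha m.1
  simp only [Function.comp_apply, LinearMap.comp_apply, AlgHom.toLinearMap_apply,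
    LinearMap.applyₗ_apply_apply, ev, h] at h2
  rw [Finsupp.finsetSum_apply, Finset.sum_eq_single m] at h2
  · simpa [hc m] using h2
  · intro m' _ hne
    rw [Finsupp.smul_apply, Finsupp.single_eq_of_ne (by intro h; exact hne (Subtype.ext h.symm)), smul_zero]
  · exact fun h => absurd hm h

theorem spans : Submodule.span ℚ (Set.range (fun m : {m : Multiset (Fin n) //
    ∀ i, Odd (g.deg i) → m.count i ≤ 1} => (m.1.toList.map g.v).prod)) = ⊤ := by
  set T := Submodule.span ℚ (Set.range (fun m : {m : Multiset (Fin n) //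
    ∀ i, Odd (g.deg i) → m.count i ≤ 1} => (m.1.toList.map g.v).prod)) with hT
  have hw : ∀ l : List (Fin n), (l.map g.v).prod ∈ T := by
    intro l
    obtain ⟨e, he⟩ := prod_perm_sign g.comm (Multiset.coe_eq_coe.1 (Multiset.coe_toList (l : Multiset (Fin n))).symm)
    rw [he]
    by_cases hl : ∀ i, Odd (g.deg i) → (l : Multiset (Fin n)).count i ≤ 1
    · exact Submodule.smul_mem _ _ (Submodule.subset_span ⟨⟨_, hl⟩, rfl⟩)
    · push Not at hl
      obtain ⟨i, hi, hc⟩ := hl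
      have h2 : (Multiset.replicate 2 i) ≤ (l : Multiset (Fin n)) := Multiset.le_count_iff_replicate_le.1 hc
      obtain ⟨m', hm'⟩ := Multiset.le_iff_exists_add.1 h2
      rw [hm']
      obtain ⟨e', he'⟩ := prod_perm_sign g.comm
        (l := (Multiset.replicate 2 i + m').toList) (l' := i :: i :: m'.toList) (by
          rw [← Multiset.coe_eq_coe, Multiset.coe_toList, ← Multiset.cons_coe, ← Multiset.cons_coe,
            Multiset.coe_toList]
          simp [Multiset.replicate_succ])
      have hsq : g.v i * g.v i = 0 := by
        have := g.comm i i
        rw [(hi.mul hi).neg_one_pow, neg_one_smul] at this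
        have h2 : (2 : ℚ) • (g.v i * g.v i) = 0 := by
          rw [two_smul]; nth_rw 1 [this]; simp
        simpa using h2
      rw [he']
      simp [← mul_assoc, hsq]
  have hle : (Subalgebra.toSubmodule (Algebra.adjoin ℚ (⋃ i, (S.V i : Set S.A)))) ≤ T := by
    have h1 : Algebra.adjoin ℚ (⋃ i, (S.V i : Set S.A)) ≤ Algebra.adjoin ℚ (Set.range g.v) := by
      apply Algebra.adjoin_le
      refine Set.iUnion_subset fun i x hx => ?_
      exact Algebra.span_le_adjoin ℚ _ (g.V_le_span i hx)
    refine le_trans (Subalgebra.toSubmodule.monotone h1) ?_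
    rw [Algebra.adjoin_eq_span, Submodule.span_le]
    intro x hx
    suffices ∃ l : List (Fin n), x = (l.map g.v).prod by
      obtain ⟨l, rfl⟩ := this; exact hw l
    induction hx using Submonoid.closure_induction with
    | mem x hx => obtain ⟨i, rfl⟩ := hx; exact ⟨[i], by simp⟩
    | one => exact ⟨[], by simp⟩
    | mul x y _ _ hx hy =>
      obtain ⟨l, rfl⟩ := hx
      obtain ⟨l', rfl⟩ := hy
      exact ⟨l ++ l', by simp⟩
  rw [S.generates] at hle
  exact top_le_iff.1 hle

/-- The monomial basis attached to a homogeneous basis of generators. -/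
def toMono : MonoBasis S.A n where
  v := g.v
  deg := g.deg
  comm := g.comm
  indep := g.indep
  spans := g.spans

end GenBasis
end RHT

namespace RHT

/-! ### Bigraded minimal models in monomial coordinates -/

namespace MonoBasis

variable {A : Type} [Ring A] [Algebra ℚ A] {n : ℕ} (M : MonoBasis A n)

/-- A family of independent submodules containing the monomials of each weight consists of the
monomial submodules. -/
theorem eq_Sp_of_internal {G : ℕ → Submodule ℚ A} (hG : iSupIndep G) (wt : Multiset (Fin n) → ℕ)
    (h : ∀ m, M.mono m ∈ G (wt m)) (i : ℕ) : G i = M.Sp (fun m => wt m = i) := by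
  have hle : M.Sp (fun m => wt m = i) ≤ G i := M.Sp_le fun m hm => hm ▸ h m
  refine le_antisymm (fun a ha => ?_) hle
  have htop : a ∈ M.Sp (fun m => wt m = i ∨ wt m ≠ i) :=
    M.mem_Sp.2 fun m _ => em _
  rw [Sp_or] at htop
  obtain ⟨b, hb, c, hc, rfl⟩ := Submodule.mem_sup.1 htop
  have hc1 : c ∈ G i := by
    have := Submodule.sub_mem _ ha (hle hb)
    simpa using this
  have hc2 : c ∈ ⨆ j ≠ i, G j := by
    refine M.Sp_le (fun m hm => ?_) hc
    exact Submodule.mem_iSup_of_mem (wt m) (Submodule.mem_iSup_of_mem hm (h m))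
  have : c = 0 := by
    have := (Submodule.disjoint_def.1 (hG i)) c hc1 hc2
    exact this
  rw [this, add_zero]; exact hb

end MonoBasis

/-- The degree involution on the direct sum of the homogeneous components. -/
noncomputable def CDGA.sgnAux (C : CDGA) : DirectSum ℕ (fun i => C.grading i) →ₐ[ℚ] C.A :=
  DirectSum.toAlgebra ℚ (fun i => C.grading i)
    (fun i => ((-1 : ℚ) ^ i) • (C.grading i).subtype)
    (by simp)
    (by
      intro i j x y
      simp only [LinearMap.smul_apply, Submodule.subtype_apply, SetLike.coe_gMul]
      rw [smul_mul_smul_comm, pow_add])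

/-- The degree involution `x ↦ (-1)^|x| x`. -/
noncomputable def CDGA.sgn (C : CDGA) : C.A →ₐ[ℚ] C.A :=
  C.sgnAux.comp (DirectSum.decomposeAlgEquiv C.grading).toAlgHom

theorem CDGA.sgn_apply (C : CDGA) {i : ℕ} {x : C.A} (hx : x ∈ C.grading i) :
    C.sgn x = ((-1 : ℚ) ^ i) • x := by
  have : DirectSum.decomposeAlgEquiv C.grading x = DirectSum.of (fun i => C.grading i) i ⟨x, hx⟩ :=
    DirectSum.decompose_of_mem C.grading hx
  refine (congrArg C.sgnAux this).trans ?_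
  exact DirectSum.toAddMonoid_of (β := fun i => C.grading i)
    (fun i => (((-1 : ℚ) ^ i) • (C.grading i).subtype).toAddMonoidHom) i ⟨x, hx⟩

theorem CDGA.hom_induction (C : CDGA) {p : C.A → Prop} (x : C.A) (h : ∀ i, ∀ x ∈ C.grading i, p x)
    (h0 : p 0) (hadd : ∀ x y, p x → p y → p (x + y)) : p x :=
  DirectSum.Decomposition.inductionOn C.grading h0 (fun {i} x => h i x x.2) (fun x y => hadd x y) x

theorem CDGA.leibniz_sgn (C : CDGA) (x y : C.A) : C.d (x * y) = C.d x * y + C.sgn x * C.d y := by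
  refine C.hom_induction (p := fun x => C.d (x * y) = C.d x * y + C.sgn x * C.d y) x
    (fun i x hx => ?_) (by simp) (fun a b ha hb => ?_)
  · rw [C.leibniz x y hx, C.sgn_apply hx, smul_mul_assoc]
  · rw [add_mul, map_add, ha, hb]; simp only [map_add]; noncomm_ring

theorem CDGA.sgn_d (C : CDGA) (x : C.A) : C.sgn (C.d x) = - C.d (C.sgn x) := by
  refine C.hom_induction (p := fun x => C.sgn (C.d x) = - C.d (C.sgn x)) x
    (fun i x hx => ?_) (by simp) (fun a b ha hb => ?_)
  · rw [C.sgn_apply hx, C.sgn_apply (C.d_mem hx), map_smul, pow_succ]; simp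
  · simp only [map_add, ha, hb]; abel

/-- A finitely generated minimal bigraded algebra written in a monomial basis, with the degree
involution `σ` and the differential `d`. -/
structure Setup (A : Type) [Ring A] [Algebra ℚ A] (n : ℕ) extends MonoBasis A n where
  low : Fin n → ℕ
  d : A →ₗ[ℚ] A
  σ : A →ₐ[ℚ] A
  deg_ge : ∀ i, 2 ≤ deg i
  deg_mono : Monotone deg
  σ_v : ∀ i, σ (v i) = ((-1 : ℚ) ^ deg i) • v i
  leib : ∀ a b, d (a * b) = d a * b + σ a * d b
  d_sq : ∀ a, d (d a) = 0
  d_v : ∀ i, d (v i) ∈ toMonoBasis.Sp (fun m => 2 ≤ m.card ∧ (m.map deg).sum = deg i + 1 ∧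
    (m.map low).sum + 1 = low i)

theorem BigradedSullivan.exists_genBasis (S : BigradedSullivan) (hS : S.toSullivan.Elliptic) :
    ∃ (n : ℕ) (g : GenBasis S.toSullivan n) (low : Fin n → ℕ), Monotone g.deg ∧
      ∀ i, g.v i ∈ S.low (low i) := by
  classical
  set U : Set S.A := ⋃ i, ⋃ k, ((S.V i ⊓ S.low k : Submodule ℚ S.A) : Set S.A) with hU
  have hspan : Submodule.span ℚ U = S.toSullivan.genSpan := by
    simp only [hU, Submodule.span_iUnion, Submodule.span_eq]
    unfold Sullivan.genSpan
    exact iSup_congr fun i => (S.V_low i).symm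
  have hfin : FiniteDimensional ℚ S.toSullivan.genSpan := by
    obtain ⟨N, hN⟩ := hS.1
    have h1 : S.toSullivan.genSpan = ⨆ i : Fin N, S.V i := by
      apply le_antisymm
      · refine iSup_le fun i => ?_
        by_cases hi : i < N
        · exact le_iSup (fun i : Fin N => S.V i) ⟨i, hi⟩
        · rw [hN i (not_lt.1 hi)]; exact bot_le
      · exact iSup_le fun i => le_iSup S.V i
    rw [h1]
    have := S.V_fin
    infer_instance
  obtain ⟨b, hbU, hbs, hbi⟩ := exists_linearIndependent ℚ U
  have hfb : Finite b := by
    have hfin' : FiniteDimensional ℚ (Submodule.span ℚ (Set.range ((↑) : b → S.A))) := by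
      rw [Subtype.range_coe, hbs, hspan]; exact hfin
    have := (Module.Basis.span hbi)
    exact Module.Finite.finite_basis this
  obtain ⟨n, ⟨e⟩⟩ := Finite.exists_equiv_fin b
  have hmem : ∀ x : b, ∃ i k, (x : S.A) ∈ S.V i ∧ (x : S.A) ∈ S.low k := by
    intro x
    have := hbU x.2
    simp only [hU, Set.mem_iUnion] at this
    obtain ⟨i, k, h⟩ := this
    exact ⟨i, k, h.1, h.2⟩
  choose dg lw hd hl using hmem
  let τ := Tuple.sort (fun i => dg (e.symm i))
  refine ⟨n, ⟨fun i => (e.symm (τ i) : S.A), fun i => dg (e.symm (τ i)), fun i => hd _, ?_, ?_⟩,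
    fun i => lw (e.symm (τ i)), Tuple.monotone_sort (fun i => dg (e.symm i)), fun i => hl _⟩
  · exact hbi.comp (fun i => e.symm (τ i)) (e.symm.injective.comp τ.injective)
  · rw [← hspan, ← hbs]
    congr 1
    ext x
    constructor
    · rintro ⟨i, rfl⟩; exact (e.symm (τ i)).2
    · intro hx
      exact ⟨τ.symm (e ⟨x, hx⟩), by simp⟩

theorem word_mem_of_mul {A : Type} [Ring A] [Algebra ℚ A] {n : ℕ} (v : Fin n → A) (wt : Fin n → ℕ)
    (G : ℕ → Submodule ℚ A) (h1 : (1 : A) ∈ G 0)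
    (hm : ∀ i j (x y : A), x ∈ G i → y ∈ G j → x * y ∈ G (i + j)) (hv : ∀ i, v i ∈ G (wt i))
    (m : Multiset (Fin n)) : (m.toList.map v).prod ∈ G (m.map wt).sum := by
  have : ∀ l : List (Fin n), (l.map v).prod ∈ G (l.map wt).sum := by
    intro l
    induction l with
    | nil => simpa using h1
    | cons i l ih =>
      simp only [List.map_cons, List.prod_cons, List.sum_cons]
      exact hm _ _ _ _ (hv i) ih
  have h2 := this m.toList
  rwa [← Multiset.sum_coe, ← Multiset.map_coe, Multiset.coe_toList] at h2

theorem BigradedSullivan.exists_setup (S : BigradedSullivan) (hS : S.toSullivan.Elliptic)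
    (hmin : S.toSullivan.Minimal) :
    ∃ (n : ℕ) (M : Setup S.A n), M.d = S.d ∧ M.σ = S.toCDGA.sgn ∧
      (∀ i, S.grading i = M.Sp (fun m => (m.map M.deg).sum = i)) ∧
      (∀ k, S.low k = M.Sp (fun m => (m.map M.low).sum = k)) ∧
      (∀ i, M.v i ∈ S.V (M.deg i)) := by
  obtain ⟨n, g, low, hmono, hlow⟩ := S.exists_genBasis hS
  have hgr : ∀ i, S.grading i = g.toMono.Sp (fun m => (m.map g.deg).sum = i) :=
    g.toMono.eq_Sp_of_internal (DirectSum.Decomposition.isInternal S.grading).submodule_iSupIndep _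
      (fun m => word_mem_of_mul g.v g.deg S.grading (SetLike.GradedOne.one_mem)
        (fun i j x y hx hy => SetLike.GradedMul.mul_mem hx hy) (fun i => S.V_le _ (g.mem i)) m)
  have hlw : ∀ i, S.low i = g.toMono.Sp (fun m => (m.map low).sum = i) :=
    g.toMono.eq_Sp_of_internal S.low_internal.submodule_iSupIndep _
      (fun m => word_mem_of_mul g.v low S.low S.low_one S.low_mul hlow m)
  have hgen : S.toSullivan.genSpan ≤ g.toMono.Sp (fun m => 1 ≤ m.card) := by
    rw [← g.sp, Submodule.span_le]
    rintro _ ⟨i, rfl⟩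
    have := g.toMono.mono_mem (p := fun m => 1 ≤ m.card) (m := {i}) (by simp)
    rwa [g.toMono.mono_singleton] at this
  have hlen : S.toSullivan.lengthGE 2 ≤ g.toMono.Sp (fun m => 2 ≤ m.card) := by
    unfold Sullivan.lengthGE
    rw [pow_two, Submodule.mul_le]
    intro x hx y _
    have hy : y ∈ g.toMono.Sp (fun _ => True) := by rw [g.toMono.Sp_true]; trivial
    refine g.toMono.mul_mem (p := fun m => 2 ≤ m.card) (q := fun _ => True) (fun m m' h _ => ?_) ?_ hy
    · rw [Multiset.card_add]; omega
    · revert hx x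
      rw [← SetLike.le_def, Submodule.mul_le]
      intro x hx z hz
      exact g.toMono.mul_mem (p := fun m => 1 ≤ m.card) (q := fun m => 1 ≤ m.card)
        (fun m m' h h' => by rw [Multiset.card_add]; omega) (hgen hx) (hgen hz)
  have hdeg : ∀ i, 2 ≤ g.deg i := by
    intro i
    have hne := g.li.ne_zero i
    have hm := g.mem i
    by_contra h
    have : g.deg i = 0 ∨ g.deg i = 1 := by omega
    rcases this with h | h <;> rw [h] at hm
    · rw [S.V_zero] at hm; exact hne hm
    · rw [S.V_one] at hm; exact hne hm
  refine ⟨n, { g.toMono with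
    low := low
    d := S.d
    σ := S.toCDGA.sgn
    deg_ge := hdeg
    deg_mono := hmono
    σ_v := fun i => S.toCDGA.sgn_apply (S.V_le _ (g.mem i))
    leib := S.toCDGA.leibniz_sgn
    d_sq := S.d_sq
    d_v := ?_ }, rfl, rfl, hgr, hlw, g.mem⟩
  intro i
  have h1 : S.d (g.v i) ∈ g.toMono.Sp (fun m => 2 ≤ m.card) := hlen (hmin _ (by
    rw [← g.sp]; exact Submodule.subset_span ⟨i, rfl⟩))
  have h2 : S.d (g.v i) ∈ g.toMono.Sp (fun m => (m.map g.deg).sum = g.deg i + 1) := by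
    rw [← hgr]; exact S.d_mem (S.V_le _ (g.mem i))
  have h3 : S.d (g.v i) ∈ g.toMono.Sp (fun m => (m.map low).sum + 1 = low i) := by
    have h := hlow i
    rcases hk : low i with _ | k
    · rw [hk] at h
      rw [S.d_low_zero _ h]; exact Submodule.zero_mem _
    · rw [hk] at h
      have := S.d_low k _ h
      rw [hlw] at this
      exact g.toMono.Sp_mono (fun m hm => by omega) this
  have := Submodule.mem_inf.2 ⟨h1, Submodule.mem_inf.2 ⟨h2, h3⟩⟩
  rwa [← MonoBasis.Sp_and, ← MonoBasis.Sp_and] at this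

end RHT

namespace RHT

/-! ### Adjoining an odd variable -/

/-- The algebra `E ⊕ E s` obtained from `E` by adjoining an odd variable `s` with `s² = 0` and
`s c = σ(c) s`; the pair `(a, b)` stands for `a + b s`. -/
def OddExt {E : Type} [Ring E] [Algebra ℚ E] (_σ : E →ₐ[ℚ] E) : Type := E × E

namespace OddExt

variable {E : Type} [Ring E] [Algebra ℚ E] {σ : E →ₐ[ℚ] E}

instance : AddCommGroup (OddExt σ) := inferInstanceAs (AddCommGroup (E × E))
noncomputable instance : Module ℚ (OddExt σ) := inferInstanceAs (Module ℚ (E × E))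

/-- The element `a + b s`. -/
def mk (a b : E) : OddExt σ := (a, b)
/-- The coefficient of `1`. -/
def re (x : OddExt σ) : E := x.1
/-- The coefficient of `s`. -/
def im (x : OddExt σ) : E := x.2

@[ext] theorem ext {x y : OddExt σ} (h1 : x.re = y.re) (h2 : x.im = y.im) : x = y := Prod.ext h1 h2

instance : One (OddExt σ) := ⟨mk 1 0⟩
instance : Mul (OddExt σ) := ⟨fun x y => mk (x.re * y.re) (x.re * y.im + x.im * σ y.re)⟩

@[simp] theorem mk_re (a b : E) : (mk a b : OddExt σ).re = a := rfl
@[simp] theorem mk_im (a b : E) : (mk a b : OddExt σ).im = b := rfl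
@[simp] theorem one_re : (1 : OddExt σ).re = 1 := rfl
@[simp] theorem one_im : (1 : OddExt σ).im = 0 := rfl
@[simp] theorem zero_re : (0 : OddExt σ).re = 0 := rfl
@[simp] theorem zero_im : (0 : OddExt σ).im = 0 := rfl
@[simp] theorem mul_re (x y : OddExt σ) : (x * y).re = x.re * y.re := rfl
@[simp] theorem mul_im (x y : OddExt σ) : (x * y).im = x.re * y.im + x.im * σ y.re := rfl
@[simp] theorem add_re (x y : OddExt σ) : (x + y).re = x.re + y.re := rfl
@[simp] theorem add_im (x y : OddExt σ) : (x + y).im = x.im + y.im := rfl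
@[simp] theorem neg_re (x : OddExt σ) : (-x).re = -x.re := rfl
@[simp] theorem neg_im (x : OddExt σ) : (-x).im = -x.im := rfl
@[simp] theorem sub_re (x y : OddExt σ) : (x - y).re = x.re - y.re := rfl
@[simp] theorem sub_im (x y : OddExt σ) : (x - y).im = x.im - y.im := rfl
@[simp] theorem smul_re (c : ℚ) (x : OddExt σ) : (c • x).re = c • x.re := rfl
@[simp] theorem smul_im (c : ℚ) (x : OddExt σ) : (c • x).im = c • x.im := rfl

instance : Ring (OddExt σ) :=
  { (inferInstance : AddCommGroup (OddExt σ)) with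
    one := 1
    mul := (· * ·)
    left_distrib := fun x y z => by
      ext <;> simp [mul_add]; abel
    right_distrib := fun x y z => by
      ext <;> simp [add_mul]; abel
    zero_mul := fun x => by ext <;> simp
    mul_zero := fun x => by ext <;> simp
    mul_assoc := fun x y z => by
      ext <;> simp [mul_add, add_mul, mul_assoc]; abel
    one_mul := fun x => by ext <;> simp
    mul_one := fun x => by ext <;> simp }

noncomputable instance : Algebra ℚ (OddExt σ) :=
  Algebra.ofModule (fun r x y => by ext <;> simp) (fun r x y => by ext <;> simp)

/-- The projection onto the coefficient of `1`. -/
noncomputable def reHom (σ : E →ₐ[ℚ] E) : OddExt σ →ₐ[ℚ] E :=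
  AlgHom.ofLinearMap { toFun := re, map_add' := fun _ _ => rfl, map_smul' := fun _ _ => rfl } rfl
    (fun _ _ => rfl)

@[simp] theorem reHom_apply (x : OddExt σ) : reHom σ x = x.re := rfl

/-- The linear projection onto the coefficient of `s`. -/
def imLin (σ : E →ₐ[ℚ] E) : OddExt σ →ₗ[ℚ] E :=
  { toFun := im, map_add' := fun _ _ => rfl, map_smul' := fun _ _ => rfl }

@[simp] theorem imLin_apply (x : OddExt σ) : imLin σ x = x.im := rfl

/-- The inclusion of `E`. -/
noncomputable def inl (σ : E →ₐ[ℚ] E) : E →ₐ[ℚ] OddExt σ :=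
  AlgHom.ofLinearMap { toFun := fun a => mk a 0, map_add' := fun _ _ => by ext <;> simp, map_smul' := fun _ _ => by ext <;> simp } rfl
    (fun _ _ => by ext <;> simp)

@[simp] theorem inl_re (a : E) : (inl σ a).re = a := rfl
@[simp] theorem inl_im (a : E) : (inl σ a).im = 0 := rfl

end OddExt

/-! ### Filtered differential graded algebras -/

/-- A graded-commutative differential algebra `(E, D)` with degree involution `σ` and a
multiplicative filtration `W` raised by the differential.  The submodules `G i` consist of
homogeneous elements; they are not required to span. -/
structure DGF (E : Type) [Ring E] [Algebra ℚ E] where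
  G : ℤ → Submodule ℚ E
  σ : E →ₐ[ℚ] E
  D : E →ₗ[ℚ] E
  W : ℕ → Submodule ℚ E
  one_mem : 1 ∈ G 0
  mul_mem : ∀ {i j a b}, a ∈ G i → b ∈ G j → a * b ∈ G (i + j)
  neg : ∀ {i a}, i < 0 → a ∈ G i → a = 0
  σ_even : ∀ {i a}, Even i → a ∈ G i → σ a = a
  σ_odd : ∀ {i a}, Odd i → a ∈ G i → σ a = -a
  comm_even : ∀ {i z}, Even i → z ∈ G i → ∀ a, z * a = a * z
  comm_odd : ∀ {i z}, Odd i → z ∈ G i → ∀ a, z * a = σ a * z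
  D_mem : ∀ {i a}, a ∈ G i → D a ∈ G (i + 1)
  D_sq : ∀ a, D (D a) = 0
  leib : ∀ a b, D (a * b) = D a * b + σ a * D b
  σ_D : ∀ a, σ (D a) = - D (σ a)
  σ_σ : ∀ a, σ (σ a) = a
  W_zero : W 0 = ⊤
  W_mul : ∀ {i j a b}, a ∈ W i → b ∈ W j → a * b ∈ W (i + j)
  W_D : ∀ {i a}, a ∈ W i → D a ∈ W (i + 1)
  W_σ : ∀ {i a}, a ∈ W i → σ a ∈ W i

namespace DGF

variable {E : Type} [Ring E] [Algebra ℚ E] (X : DGF E)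

theorem σ_mem {i : ℤ} {a : E} (h : a ∈ X.G i) : X.σ a ∈ X.G i := by
  rcases Int.even_or_odd i with hi | hi
  · rwa [X.σ_even hi h]
  · rw [X.σ_odd hi h]; exact Submodule.neg_mem _ h

theorem W_top (a : E) : a ∈ X.W 0 := by rw [X.W_zero]; trivial

theorem W_mul_right {i : ℕ} {a : E} (h : a ∈ X.W i) (b : E) : a * b ∈ X.W i := X.W_mul h (X.W_top b)

theorem W_mul_left {i : ℕ} {a : E} (b : E) (h : a ∈ X.W i) : b * a ∈ X.W i := by
  have := X.W_mul (X.W_top b) h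
  rwa [zero_add] at this

theorem W_pow {a : E} (h : a ∈ X.W 1) (L : ℕ) : a ^ L ∈ X.W L := by
  induction L with
  | zero => exact X.W_top _
  | succ L ih => rw [pow_succ]; exact X.W_mul ih h

theorem sq_zero {k : ℤ} {z : E} (hk : Odd k) (hz : z ∈ X.G k) : z * z = 0 := by
  have h := X.comm_odd hk hz z
  rw [X.σ_odd hk hz, neg_mul] at h
  have h2 : (2 : ℚ) • (z * z) = 0 := by
    rw [two_smul]; nth_rw 1 [h]; simp
  simpa using h2

theorem D_one : X.D 1 = 0 := by
  have := X.leib 1 1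
  simp only [mul_one, one_mul, map_one] at this
  simpa using this

theorem D_pow {z : E} (hz : X.D z = 0) (L : ℕ) : X.D (z ^ L) = 0 := by
  induction L with
  | zero => rw [pow_zero]; exact X.D_one
  | succ L ih => rw [pow_succ, X.leib, ih, hz]; simp

/-- The differential of `E ⊕ E s` with `D s = z`. -/
noncomputable def oddD (z : E) : OddExt X.σ →ₗ[ℚ] OddExt X.σ where
  toFun x := OddExt.mk (X.D x.re + X.σ x.im * z) (X.D x.im)
  map_add' x y := by ext <;> simp [add_mul]; abel
  map_smul' c x := by ext <;> simp

/-- The degree involution of `E ⊕ E s`. -/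
noncomputable def oddσ : OddExt X.σ →ₐ[ℚ] OddExt X.σ :=
  AlgHom.ofLinearMap
    { toFun := fun x => OddExt.mk (X.σ x.re) (- X.σ x.im)
      map_add' := fun x y => by ext <;> simp; abel
      map_smul' := fun c x => by ext <;> simp }
    (by ext <;> simp) (fun x y => by ext <;> simp; abel)

theorem oddσ_re (x : OddExt X.σ) : (X.oddσ x).re = X.σ x.re := rfl
theorem oddσ_im (x : OddExt X.σ) : (X.oddσ x).im = -X.σ x.im := rfl
theorem oddD_re (z : E) (x : OddExt X.σ) : (X.oddD z x).re = X.D x.re + X.σ x.im * z := rfl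
theorem oddD_im (z : E) (x : OddExt X.σ) : (X.oddD z x).im = X.D x.im := rfl

/-- Adjoining an odd variable `s` with `D s = z`, for a cocycle `z` of even degree `k`. -/
noncomputable def oddExt {k : ℤ} {z : E} (hk1 : 1 ≤ k) (hk : Even k) (hz : z ∈ X.G k) (hD : X.D z = 0)
    (hW : z ∈ X.W 1) : DGF (OddExt X.σ) where
  G n := (X.G n).comap (OddExt.reHom X.σ).toLinearMap ⊓ (X.G (n - (k - 1))).comap (OddExt.imLin X.σ)
  σ := X.oddσ
  D := X.oddD z
  W n := (X.W n).comap (OddExt.reHom X.σ).toLinearMap ⊓ (X.W n).comap (OddExt.imLin X.σ)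
  one_mem := ⟨X.one_mem, Submodule.zero_mem _⟩
  mul_mem := by
    intro i j a b ha hb
    refine ⟨X.mul_mem ha.1 hb.1, Submodule.add_mem _ ?_ ?_⟩
    · have := X.mul_mem ha.1 hb.2
      rwa [← add_sub_assoc] at this
    · have := X.mul_mem ha.2 (X.σ_mem hb.1)
      rwa [sub_add_eq_add_sub] at this
  neg := by
    intro i a hi ha
    ext
    · exact X.neg hi ha.1
    · exact X.neg (i := i - (k - 1)) (by omega) ha.2
  σ_even := by
    intro i a hi ha
    have : Odd (i - (k - 1)) := by
      obtain ⟨r, rfl⟩ := hk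
      obtain ⟨t, rfl⟩ := hi
      exact ⟨t - r, by ring⟩
    ext
    · exact X.σ_even hi ha.1
    · rw [oddσ_im]
      have := X.σ_odd this ha.2
      simp only [OddExt.imLin_apply] at this
      rw [this, neg_neg]
  σ_odd := by
    intro i a hi ha
    have : Even (i - (k - 1)) := by
      obtain ⟨r, rfl⟩ := hk
      obtain ⟨t, rfl⟩ := hi
      exact ⟨t - r + 1, by ring⟩
    ext
    · exact X.σ_odd hi ha.1
    · rw [oddσ_im]
      have := X.σ_even this ha.2
      simp only [OddExt.imLin_apply] at this
      rw [this]; rfl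
  comm_even := by
    intro i a hi ha b
    have : Odd (i - (k - 1)) := by
      obtain ⟨r, rfl⟩ := hk
      obtain ⟨t, rfl⟩ := hi
      exact ⟨t - r, by ring⟩
    have h1 := X.comm_even hi ha.1
    have h2 := X.comm_odd this ha.2
    have h3 := X.σ_even hi ha.1
    simp only [OddExt.imLin_apply, AlgHom.toLinearMap_apply, OddExt.reHom_apply] at h1 h2 h3
    ext
    · simp [h1]
    · simp [h1, h2, h3, X.σ_σ, add_comm]
  comm_odd := by
    intro i a hi ha b
    have : Even (i - (k - 1)) := by
      obtain ⟨r, rfl⟩ := hk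
      obtain ⟨t, rfl⟩ := hi
      exact ⟨t - r + 1, by ring⟩
    have h1 := X.comm_odd hi ha.1
    have h2 := X.comm_even this ha.2
    have h3 := X.σ_odd hi ha.1
    simp only [OddExt.imLin_apply, AlgHom.toLinearMap_apply, OddExt.reHom_apply] at h1 h2 h3
    ext
    · simp [h1, oddσ_re]
    · simp [h1, h2, h3, oddσ_re, oddσ_im, add_comm]
  D_mem := by
    intro i a ha
    refine ⟨Submodule.add_mem _ (X.D_mem ha.1) ?_, ?_⟩
    · have := X.mul_mem (X.σ_mem ha.2) hz
      rwa [show i - (k - 1) + k = i + 1 by ring] at this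
    · have := X.D_mem ha.2
      rwa [show i - (k - 1) + 1 = i + 1 - (k - 1) by ring] at this
  D_sq := by
    intro a
    ext
    · simp [oddD_re, oddD_im, X.D_sq, X.leib, X.σ_D, hD]
    · simp [oddD_im, X.D_sq]
  leib := by
    intro a b
    have h1 := X.comm_even hk hz
    ext
    · simp only [oddD_re, OddExt.mul_re, OddExt.mul_im, OddExt.add_re, X.leib, oddσ_re, map_add,
        map_mul, X.σ_σ, add_mul, mul_add, mul_assoc, h1]
      abel
    · simp only [oddD_re, oddD_im, OddExt.mul_im, OddExt.add_im, X.leib, oddσ_re,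
        oddσ_im, map_add, map_mul, X.σ_D, X.σ_σ, X.σ_even hk hz, add_mul, mul_add, mul_assoc, h1]
      noncomm_ring
  σ_D := by
    intro a
    ext
    · simp only [oddσ_re, oddD_re, OddExt.neg_re, map_add, X.σ_D, map_mul, X.σ_even hk hz, oddσ_im,
        map_neg, neg_mul]
      abel
    · simp [oddσ_im, oddD_im, X.σ_D]
  σ_σ := by
    intro a
    ext <;> simp [oddσ_re, oddσ_im, X.σ_σ]
  W_zero := by
    rw [X.W_zero]; simp
  W_mul := by
    intro i j a b ha hb
    exact ⟨X.W_mul ha.1 hb.1, Submodule.add_mem _ (X.W_mul ha.1 hb.2) (X.W_mul ha.2 (X.W_σ hb.1))⟩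
  W_D := by
    intro i a ha
    exact ⟨Submodule.add_mem _ (X.W_D ha.1) (X.W_mul (X.W_σ ha.2) hW), X.W_D ha.2⟩
  W_σ := by
    intro i a ha
    exact ⟨X.W_σ ha.1, Submodule.neg_mem _ (X.W_σ ha.2)⟩

end DGF
end RHT

namespace RHT

/-! ### Adjoining an even variable -/

open Polynomial

/-- Coefficientwise application of a linear map. -/
noncomputable def polyLin {E : Type} [Ring E] [Algebra ℚ E] (f : E →ₗ[ℚ] E) : E[X] →ₗ[ℚ] E[X] where
  toFun p := ∑ i ∈ p.support, monomial i (f (p.coeff i))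
  map_add' p q := by
    ext m
    simp only [finsetSum_coeff, coeff_monomial, Finset.sum_ite_eq', mem_support_iff, coeff_add]
    split_ifs <;> simp_all
    rw [← map_add]; simp_all
  map_smul' c p := by
    ext m
    simp only [finsetSum_coeff, coeff_monomial, Finset.sum_ite_eq', mem_support_iff, coeff_smul,
      RingHom.id_apply]
    split_ifs <;> simp_all

theorem coeff_polyLin {E : Type} [Ring E] [Algebra ℚ E] (f : E →ₗ[ℚ] E) (p : E[X]) (m : ℕ) :
    (polyLin f p).coeff m = f (p.coeff m) := by
  simp only [polyLin, LinearMap.coe_mk, AddHom.coe_mk, finsetSum_coeff, coeff_monomial,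
    Finset.sum_ite_eq', mem_support_iff]
  split_ifs with h <;> simp_all

/-- The polynomials whose coefficient of index `m` lies in `G m`, for all `m`. -/
noncomputable def polySub {E : Type} [Ring E] [Algebra ℚ E] (G : ℕ → Submodule ℚ E) :
    Submodule ℚ E[X] where
  carrier := {p | ∀ m, p.coeff m ∈ G m}
  zero_mem' := fun m => by simp
  add_mem' := fun {p q} hp hq m => by rw [coeff_add]; exact Submodule.add_mem _ (hp m) (hq m)
  smul_mem' := fun c p hp m => by rw [coeff_smul]; exact Submodule.smul_mem _ _ (hp m)

theorem mem_polySub {E : Type} [Ring E] [Algebra ℚ E] {G : ℕ → Submodule ℚ E} {p : E[X]} :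
    p ∈ polySub G ↔ ∀ m, p.coeff m ∈ G m := Iff.rfl

namespace DGF

variable {E : Type} [Ring E] [Algebra ℚ E] (X : DGF E)

/-- The degree involution of `E[s]`. -/
noncomputable def polyσ : E[X] →ₐ[ℚ] E[X] := Polynomial.mapAlgHom X.σ

theorem coeff_polyσ (p : E[X]) (m : ℕ) : (X.polyσ p).coeff m = X.σ (p.coeff m) := by
  simp [polyσ]

/-- The differential of `E[s]` with `D s = z`. -/
noncomputable def polyD (z : E) : E[X] →ₗ[ℚ] E[X] :=
  polyLin X.D + LinearMap.mulRight ℚ (C z) ∘ₗ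
    (Polynomial.derivative (R := E)).restrictScalars ℚ ∘ₗ X.polyσ.toLinearMap

theorem polyD_apply (z : E) (p : E[X]) :
    X.polyD z p = polyLin X.D p + derivative (X.polyσ p) * C z := rfl

theorem coeff_polyD (z : E) (p : E[X]) (m : ℕ) :
    (X.polyD z p).coeff m = X.D (p.coeff m) + ((m : ℚ) + 1) • (X.σ (p.coeff (m + 1)) * z) := by
  rw [polyD_apply, coeff_add, coeff_polyLin, coeff_mul_C, coeff_derivative, coeff_polyσ]
  congr 1
  rw [show (m : E) + 1 = algebraMap ℚ E ((m : ℚ) + 1) by simp, Algebra.smul_def,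
    ← Algebra.commutes, mul_assoc]

theorem polyLin_mul (p q : E[X]) :
    polyLin X.D (p * q) = polyLin X.D p * q + X.polyσ p * polyLin X.D q := by
  ext m
  simp only [coeff_polyLin, coeff_add, coeff_mul, map_sum, X.leib, Finset.sum_add_distrib, coeff_polyσ]

theorem polyLin_derivative (p : E[X]) :
    polyLin X.D (derivative p) = derivative (polyLin X.D p) := by
  ext m
  simp only [coeff_polyLin, coeff_derivative]
  rw [show (m : E) + 1 = algebraMap ℚ E ((m : ℚ) + 1) by simp, ← Algebra.commutes,
    ← Algebra.commutes, ← Algebra.smul_def, ← Algebra.smul_def, map_smul]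

theorem polyσ_derivative (p : E[X]) :
    X.polyσ (derivative p) = derivative (X.polyσ p) := by
  ext m
  simp [coeff_polyσ, coeff_derivative]

/-- Adjoining an even variable `s` with `D s = z`, for a cocycle `z` of odd degree `k`. -/
noncomputable def evenExt {k : ℤ} {z : E} (hk1 : 1 ≤ k) (hk : Odd k) (hz : z ∈ X.G k)
    (hD : X.D z = 0) (hW : z ∈ X.W 1) : DGF E[X] where
  G n := polySub fun m => X.G (n - m * (k - 1))
  σ := X.polyσ
  D := X.polyD z
  W n := polySub fun _ => X.W n
  one_mem := by
    intro m
    rw [coeff_one]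
    split_ifs with h
    · subst h; simpa using X.one_mem
    · exact Submodule.zero_mem _
  mul_mem := by
    intro i j a b ha hb m
    rw [coeff_mul]
    refine Submodule.sum_mem _ fun x hx => ?_
    have := X.mul_mem (ha x.1) (hb x.2)
    have h : x.1 + x.2 = m := by simpa using hx
    rwa [show i - x.1 * (k - 1) + (j - x.2 * (k - 1)) = i + j - m * (k - 1) by
      rw [← h]; push_cast; ring] at this
  neg := by
    intro i a hi ha
    ext m
    refine X.neg ?_ (ha m)
    have : 0 ≤ (m : ℤ) * (k - 1) := mul_nonneg (by positivity) (by omega)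
    omega
  σ_even := by
    intro i a hi ha
    ext m
    rw [coeff_polyσ]
    refine X.σ_even ?_ (ha m)
    obtain ⟨r, rfl⟩ := hk
    obtain ⟨t, rfl⟩ := hi
    exact ⟨t - m * r, by ring⟩
  σ_odd := by
    intro i a hi ha
    ext m
    rw [coeff_polyσ, coeff_neg]
    refine X.σ_odd ?_ (ha m)
    obtain ⟨r, rfl⟩ := hk
    obtain ⟨t, rfl⟩ := hi
    exact ⟨t - m * r, by ring⟩
  comm_even := by
    intro i a hi ha b
    ext m
    have : ∀ m : ℕ, Even (i - m * (k - 1)) := by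
      intro m
      obtain ⟨r, rfl⟩ := hk
      obtain ⟨t, rfl⟩ := hi
      exact ⟨t - m * r, by ring⟩
    rw [coeff_mul, coeff_mul, ← Finset.Nat.sum_antidiagonal_swap]
    refine Finset.sum_congr rfl fun x _ => ?_
    exact X.comm_even (this _) (ha _) _
  comm_odd := by
    intro i a hi ha b
    ext m
    have : ∀ m : ℕ, Odd (i - m * (k - 1)) := by
      intro m
      obtain ⟨r, rfl⟩ := hk
      obtain ⟨t, rfl⟩ := hi
      exact ⟨t - m * r, by ring⟩
    rw [coeff_mul, coeff_mul, ← Finset.Nat.sum_antidiagonal_swap]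
    refine Finset.sum_congr rfl fun x _ => ?_
    rw [coeff_polyσ]
    exact X.comm_odd (this _) (ha _) _
  D_mem := by
    intro i a ha m
    rw [coeff_polyD]
    refine Submodule.add_mem _ ?_ (Submodule.smul_mem _ _ ?_)
    · have := X.D_mem (ha m)
      rwa [show i - m * (k - 1) + 1 = i + 1 - m * (k - 1) by ring] at this
    · have := X.mul_mem (X.σ_mem (ha (m + 1))) hz
      rwa [show i - (m + 1 : ℕ) * (k - 1) + k = i + 1 - m * (k - 1) by push_cast; ring] at this
  D_sq := by
    intro a
    ext m
    simp only [coeff_polyD, map_add, X.D_sq, map_smul, X.leib, map_mul, X.σ_D, X.σ_σ, hD,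
      X.σ_odd hk hz, mul_zero, add_zero, add_mul, zero_add, coeff_zero, smul_mul_assoc, mul_assoc,
      neg_mul, mul_neg, X.sq_zero hk hz, smul_zero, neg_zero]
    simp
  leib := by
    intro a b
    have hc : ∀ q : E[X], C z * q = X.polyσ q * C z := by
      intro q
      ext m
      rw [coeff_C_mul, coeff_mul_C, coeff_polyσ, X.comm_odd hk hz]
    rw [polyD_apply, polyLin_mul, map_mul, derivative_mul, polyD_apply, polyD_apply]
    simp only [add_mul, mul_add, mul_assoc, hc]
    abel
  σ_D := by
    intro a
    ext m
    simp only [coeff_polyσ, coeff_polyD, coeff_neg, map_add, X.σ_D, map_smul, map_mul,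
      X.σ_odd hk hz, mul_neg, smul_neg]
    abel
  σ_σ := by
    intro a
    ext m
    rw [coeff_polyσ, coeff_polyσ, X.σ_σ]
  W_zero := by
    rw [eq_top_iff]
    intro p _ m
    exact X.W_top _
  W_mul := by
    intro i j a b ha hb m
    rw [coeff_mul]
    exact Submodule.sum_mem _ fun x _ => X.W_mul (ha _) (hb _)
  W_D := by
    intro i a ha m
    rw [coeff_polyD]
    exact Submodule.add_mem _ (X.W_D (ha m)) (Submodule.smul_mem _ _ (X.W_mul (X.W_σ (ha _)) hW))
  W_σ := by
    intro i a ha m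
    rw [coeff_polyσ]
    exact X.W_σ (ha m)

end DGF
end RHT

namespace RHT

/-! ### Killing generators one at a time -/

open Polynomial

/-- The passage from the ideal `I` to the ideal `I' = I + A x`, where the generator `x` of degree
`k` is a cocycle modulo `I` and is regular modulo `I` in the graded-commutative sense. -/
structure Killable {A : Type} [Ring A] [Algebra ℚ A] (Y : DGF A) (I I' : Submodule ℚ A) (x : A)
    (k : ℤ) : Prop where
  two_le : 2 ≤ k
  x_mem : x ∈ Y.G k
  dx : Y.D x ∈ I
  mul_l : ∀ {a} b, a ∈ I → b * a ∈ I
  mul_r : ∀ {a} b, a ∈ I → a * b ∈ I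
  I_D : ∀ {a}, a ∈ I → Y.D a ∈ I
  I_W : I ≤ Y.W 1
  x_W : x ∈ Y.W 1
  x_ind : ∀ (c : ℚ) a w i, w ∈ Y.W 2 → i ∈ I → c • x = Y.D a + w + i → c = 0
  one_W : ∀ c : ℚ, algebraMap ℚ A c ∈ Y.W 1 → c = 0
  I_le : I ≤ I'
  mul_x : ∀ b, b * x ∈ I'
  split : ∀ {n a}, a ∈ Y.G n → a ∈ I' → ∃ c ∈ Y.G (n - k), a - c * x ∈ I
  reg_even : Even k → ∀ {c}, c * x ∈ I → c ∈ I
  reg_odd : Odd k → ∀ {c}, c * x ∈ I → c ∈ I'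

/-- `E` is a model of `A / I`, obtained from `A` by adjoining variables that kill the generators of
`I`; `g` is the projection `E → A` and `K` is an acyclic differential ideal containing a power of
the augmentation ideal. -/
structure Model {A : Type} [Ring A] [Algebra ℚ A] (Y : DGF A) (I : Submodule ℚ A)
    {E : Type} [Ring E] [Algebra ℚ E] (X : DGF E) (g : E →ₐ[ℚ] A) (K : Submodule ℚ E) (L : ℕ) :
    Prop where
  g_G : ∀ {n a}, a ∈ X.G n → g a ∈ Y.G n
  g_surj : ∀ {n a}, a ∈ Y.G n → ∃ e ∈ X.G n, g e = a
  g_σ : ∀ e, g (X.σ e) = Y.σ (g e)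
  g_D : ∀ e, g (X.D e) - Y.D (g e) ∈ I
  g_W : ∀ {n e}, e ∈ X.W n → g e ∈ Y.W n
  const : ∀ {e}, X.D e ∈ X.W 2 → ∃ c : ℚ, e - algebraMap ℚ E c ∈ X.W 1
  K_mul : ∀ {a} b, a ∈ K → a * b ∈ K
  K_D : ∀ {a}, a ∈ K → X.D a ∈ K
  K_σ : ∀ {a}, a ∈ K → X.σ a ∈ K
  W_K : X.W L ≤ K
  acyc : ∀ {e}, e ∈ K → X.D e = 0 → ∃ b ∈ K, X.D b = e
  ker_acyc : ∀ {n e}, e ∈ X.G n → g e ∈ I → X.D e = 0 → ∃ b ∈ X.G (n - 1), g b ∈ I ∧ X.D b = e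

namespace Model

variable {A : Type} [Ring A] [Algebra ℚ A] {Y : DGF A} {I I' : Submodule ℚ A} {x : A} {k : ℤ}
  {E : Type} [Ring E] [Algebra ℚ E] {X : DGF E} {g : E →ₐ[ℚ] A} {K : Submodule ℚ E} {L : ℕ}

theorem exists_lift (h : Model Y I X g K L) (hx : Killable Y I I' x k) :
    ∃ z ∈ X.G k, X.D z = 0 ∧ g z - x ∈ I ∧ z ∈ X.W 1 := by
  obtain ⟨e, he, hge⟩ := h.g_surj hx.x_mem
  obtain ⟨b, hb, hgb, hDb⟩ := h.ker_acyc (X.D_mem he) (by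
    have := Submodule.add_mem _ (h.g_D e) (hge ▸ hx.dx)
    simpa using this) (X.D_sq e)
  rw [add_sub_cancel_right] at hb
  have hD : X.D (e - b) = 0 := by rw [map_sub, hDb, sub_self]
  have hg : g (e - b) - x ∈ I := by
    rw [map_sub, hge]
    have := Submodule.neg_mem _ hgb
    simpa using this
  refine ⟨e - b, Submodule.sub_mem _ he hb, hD, hg, ?_⟩
  obtain ⟨c, hc⟩ := h.const (e := e - b) (by rw [hD]; exact Submodule.zero_mem _)
  have h1 := h.g_W hc
  rw [map_sub, AlgHom.commutes] at h1
  have h2 : algebraMap ℚ A c ∈ Y.W 1 := by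
    have := Submodule.sub_mem _ (Submodule.add_mem _ (hx.I_W hg) hx.x_W) h1
    convert this using 1
    abel
  rw [hx.one_W c h2] at hc
  simpa using hc

/-- A cocycle of positive filtration is nilpotent up to coboundaries; hence so is `x` modulo `I`. -/
theorem nilpotent (h : Model Y I X g K L) (hx : Killable Y I I' x k) :
    ∃ (N : ℕ) (b : A), x ^ N - Y.D b ∈ I := by
  obtain ⟨z, -, hD, hg, hW⟩ := h.exists_lift hx
  obtain ⟨b, -, hb⟩ := h.acyc (h.W_K (X.W_pow hW L)) (X.D_pow hD L)
  refine ⟨L, g b, ?_⟩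
  have hp : ∀ N : ℕ, g z ^ N - x ^ N ∈ I := by
    intro N
    induction N with
    | zero => simp
    | succ N ih =>
      have h1 := Submodule.add_mem _ (hx.mul_r (g z) ih) (hx.mul_l (x ^ N) hg)
      convert h1 using 1
      rw [pow_succ, pow_succ]; noncomm_ring
  have h1 := h.g_D b
  rw [hb, map_pow] at h1
  have h2 := Submodule.sub_mem _ h1 (hp L)
  convert h2 using 1
  abel

theorem coeff_zero (h : Model Y I X g K L) (hx : Killable Y I I' x k) {z : E}
    (hg : g z - x ∈ I) {c : ℚ} {e : E} (he : X.D e + c • z ∈ X.W 2) : c = 0 := by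
  have h1 := h.g_W he
  rw [map_add, map_smul] at h1
  refine hx.x_ind c (-g e) _ _ h1 (Submodule.sub_mem _ (Submodule.neg_mem _ (h.g_D e))
    (Submodule.smul_mem _ c hg)) ?_
  rw [map_neg, smul_sub]; abel

/-- Modulo `I` the projection sends `b z` to `g(b) x`. -/
theorem g_mul_z (hx : Killable Y I I' x k) {z : E} (hg : g z - x ∈ I) (b : E) :
    g (b * z) - g b * x ∈ I := by
  rw [map_mul, ← mul_sub]
  exact hx.mul_l _ hg

/-- If `x` has even degree, adjoining an odd variable `s`, with `D s` a cocycle lifting `x`, turns a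
model of `A / I` into a model of `A / I'`. -/
theorem oddStep (h : Model Y I X g K L) (hx : Killable Y I I' x k) (hk : Even k) :
    ∃ (E' : Type) (_ : Ring E') (_ : Algebra ℚ E') (X' : DGF E') (g' : E' →ₐ[ℚ] A)
      (K' : Submodule ℚ E'), Model Y I' X' g' K' L := by
  obtain ⟨z, hz, hD, hg, hW⟩ := h.exists_lift hx
  have hk1 : 1 ≤ k := by have := hx.two_le; omega
  refine ⟨OddExt X.σ, inferInstance, inferInstance, X.oddExt hk1 hk hz hD hW,
    g.comp (OddExt.reHom X.σ), K.comap (OddExt.reHom X.σ).toLinearMap ⊓ K.comap (OddExt.imLin X.σ),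
    ?_⟩
  refine
    { g_G := fun ha => h.g_G ha.1
      g_surj := ?_
      g_σ := fun e => h.g_σ e.re
      g_D := ?_
      g_W := fun he => h.g_W he.1
      const := ?_
      K_mul := ?_
      K_D := ?_
      K_σ := fun ha => ⟨h.K_σ ha.1, Submodule.neg_mem _ (h.K_σ ha.2)⟩
      W_K := fun a ha => ⟨h.W_K ha.1, h.W_K ha.2⟩
      acyc := ?_
      ker_acyc := ?_ }
  · intro n a ha
    obtain ⟨e, he, rfl⟩ := h.g_surj ha
    exact ⟨OddExt.mk e 0, ⟨he, Submodule.zero_mem _⟩, rfl⟩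
  · intro e
    change g (X.D e.re + X.σ e.im * z) - Y.D (g e.re) ∈ I'
    have h1 := hx.I_le (Submodule.add_mem _ (h.g_D e.re) (g_mul_z hx hg (X.σ e.im)))
    have h2 := Submodule.add_mem _ h1 (hx.mul_x (g (X.σ e.im)))
    convert h2 using 1
    rw [map_add]; abel
  · rintro e ⟨h1, h2⟩
    change X.D e.re + X.σ e.im * z ∈ X.W 2 at h1
    change X.D e.im ∈ X.W 2 at h2
    obtain ⟨c, hc⟩ := h.const h2
    have hc0 : c = 0 := by
      refine h.coeff_zero hx hg (e := e.re) ?_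
      have h3 := Submodule.sub_mem _ h1 (X.W_mul (X.W_σ hc) hW)
      convert h3 using 1
      rw [map_sub, AlgHom.commutes, sub_mul, Algebra.smul_def]; abel
    subst hc0
    rw [map_zero, sub_zero] at hc
    obtain ⟨c', hc'⟩ := h.const (e := e.re) (by
      have h3 := Submodule.sub_mem _ h1 (X.W_mul (X.W_σ hc) hW)
      simpa using h3)
    refine ⟨c', ?_, ?_⟩
    · have : (OddExt.reHom X.σ) (e - algebraMap ℚ _ c') = e.re - algebraMap ℚ E c' := by
        rw [map_sub, AlgHom.commutes]; rfl
      change (OddExt.reHom X.σ) (e - algebraMap ℚ _ c') ∈ X.W 1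
      rw [this]; exact hc'
    · have : (OddExt.imLin X.σ) (e - algebraMap ℚ _ c') = e.im := by
        rw [Algebra.algebraMap_eq_smul_one]; simp
      change (OddExt.imLin X.σ) (e - algebraMap ℚ _ c') ∈ X.W 1
      rw [this]; exact hc
  · intro a b ha
    exact ⟨h.K_mul _ ha.1, Submodule.add_mem _ (h.K_mul _ ha.1) (h.K_mul _ ha.2)⟩
  · intro a ha
    exact ⟨Submodule.add_mem _ (h.K_D ha.1) (h.K_mul _ (h.K_σ ha.2)), h.K_D ha.2⟩
  · intro e he hDe
    have h1 : X.D e.re + X.σ e.im * z = 0 := congrArg OddExt.re hDe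
    have h2 : X.D e.im = 0 := congrArg OddExt.im hDe
    obtain ⟨b, hb, hDb⟩ := h.acyc he.2 h2
    change X.D b = e.im at hDb
    obtain ⟨a, ha, hDa⟩ := h.acyc (e := e.re - X.σ b * z)
      (Submodule.sub_mem _ he.1 (h.K_mul _ (h.K_σ hb))) (by
        rw [map_sub, X.leib, hD, ← neg_eq_iff_eq_neg.2 (X.σ_D b), hDb]
        simpa using h1)
    refine ⟨OddExt.mk a b, ⟨ha, hb⟩, ?_⟩
    apply OddExt.ext
    · change X.D a + X.σ b * z = e.re
      rw [hDa]; abel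
    · exact hDb
  · intro n e he hge hDe
    -- first arrange that the constant coefficient is mapped into `I`
    obtain ⟨c, hc, hcI⟩ := hx.split (h.g_G he.1) hge
    obtain ⟨a, ha, hga⟩ := h.g_surj hc
    have haz : X.σ (X.σ a) * z = a * z := by rw [X.σ_σ]
    have h1 : X.D e.re + X.σ e.im * z = 0 := congrArg OddExt.re hDe
    have h2 : X.D e.im = 0 := congrArg OddExt.im hDe
    have her : e.re ∈ X.G n := he.1
    have hei : e.im ∈ X.G (n - (k - 1)) := he.2
    have hσa : X.σ a ∈ X.G (n - k) := X.σ_mem ha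
    set r := e.re - a * z with hr
    set i := e.im - X.D (X.σ a) with hi
    have hrI : g r ∈ I := by
      have := Submodule.sub_mem _ hcI (g_mul_z hx hg a)
      rw [hga] at this
      convert this using 1
      rw [hr, map_sub]; simp
    have hrG : r ∈ X.G n := by
      refine Submodule.sub_mem _ her ?_
      have := X.mul_mem ha hz
      rwa [sub_add_cancel] at this
    have hiG : i ∈ X.G (n - (k - 1)) := by
      refine Submodule.sub_mem _ hei ?_
      have := X.D_mem hσa
      rwa [show n - k + 1 = n - (k - 1) by ring] at this
    have h1' : X.D r + X.σ i * z = 0 := by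
      rw [hr, hi, map_sub, map_sub, X.leib, hD, X.σ_D, X.σ_σ]
      rw [sub_mul, neg_mul, mul_zero, add_zero]
      rw [← h1]; abel
    have h2' : X.D i = 0 := by rw [hi, map_sub, h2, X.D_sq, sub_zero]
    -- the coefficient of `s` is then mapped into `I`, by regularity of `x`
    have hgi : g (X.σ i) ∈ I := by
      refine hx.reg_even hk ?_
      have h3 := g_mul_z hx hg (X.σ i)
      have h4 : g (X.D r) ∈ I := by
        have := Submodule.add_mem _ (h.g_D r) (hx.I_D hrI)
        simpa using this
      rw [eq_neg_of_add_eq_zero_right h1', map_neg] at h3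
      have := Submodule.neg_mem _ (Submodule.add_mem _ h3 h4)
      simpa using this
    have hgi' : g i ∈ I := by
      rcases Int.even_or_odd (n - (k - 1)) with hp | hp
      · rwa [X.σ_even hp hiG] at hgi
      · rw [X.σ_odd hp hiG, map_neg] at hgi
        simpa using hgi
    obtain ⟨b, hb, hgb, hDb⟩ := h.ker_acyc hiG hgi' h2'
    have hσb := X.σ_mem hb
    obtain ⟨b', hb', hgb', hDb'⟩ := h.ker_acyc (e := r - X.σ b * z) (n := n) (by
        refine Submodule.sub_mem _ hrG ?_
        have := X.mul_mem hσb hz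
        rwa [show n - (k - 1) - 1 + k = n by ring] at this) (by
        rw [map_sub]
        refine Submodule.sub_mem _ hrI ?_
        rw [map_mul]
        refine hx.mul_r _ ?_
        rcases Int.even_or_odd (n - (k - 1) - 1) with hp | hp
        · rwa [X.σ_even hp hb]
        · rw [X.σ_odd hp hb, map_neg]; exact Submodule.neg_mem _ hgb) (by
        rw [map_sub, X.leib, hD, ← neg_eq_iff_eq_neg.2 (X.σ_D b), hDb]
        simpa using h1')
    refine ⟨OddExt.mk b' (b + X.σ a), ⟨hb', Submodule.add_mem _ ?_ ?_⟩, hx.I_le hgb', ?_⟩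
    · convert hb using 2; ring
    · convert hσa using 2; ring
    apply OddExt.ext
    · change X.D b' + X.σ (b + X.σ a) * z = e.re
      rw [hDb', map_add, X.σ_σ, add_mul, hr]; abel
    · change X.D (b + X.σ a) = e.im
      rw [map_add, hDb, hi]; abel

end Model
end RHT

namespace RHT

open Polynomial

namespace DGF

variable {E : Type} [Ring E] [Algebra ℚ E] (X : DGF E)

theorem coeff_polyD_monomial (z b : E) (N m : ℕ) :
    (X.polyD z (monomial N b)).coeff m =
      (if N = m then X.D b else 0) + (if N = m + 1 then (N : ℚ) • (X.σ b * z) else 0) := by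
  rw [coeff_polyD, coeff_monomial, coeff_monomial]
  congr 1
  · split_ifs <;> simp
  · split_ifs with h
    · rw [h]; push_cast; rfl
    · simp

/-- A cocycle of `E[s]` is a coboundary as soon as its coefficients can be integrated one after
the other, starting with the leading one. -/
theorem poly_acyclic {z : E} (hsq : ∀ p, X.polyD z (X.polyD z p) = 0) (P Q : ℕ → Submodule ℚ E)
    (h1 : ∀ m e, e ∈ P m → X.D e = 0 → ∃ b ∈ Q m, X.D b = e)
    (h2 : ∀ m b, b ∈ Q (m + 1) → X.σ b * z ∈ P m) (N : ℕ) :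
    ∀ p : E[X], (∀ m, p.coeff m ∈ P m) → X.polyD z p = 0 → (∀ m, N ≤ m → p.coeff m = 0) →
      ∃ b : E[X], (∀ m, b.coeff m ∈ Q m) ∧ X.polyD z b = p := by
  induction N with
  | zero =>
    intro p _ _ h0
    refine ⟨0, fun m => by simp, ?_⟩
    rw [map_zero]
    ext m
    rw [h0 m (Nat.zero_le m), coeff_zero]
  | succ N ih =>
    intro p hp hDp h0
    have hN : X.D (p.coeff N) = 0 := by
      have := X.coeff_polyD z p N
      rw [hDp, h0 (N + 1) le_rfl] at this
      simpa using this.symm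
    obtain ⟨b, hb, hDb⟩ := h1 N _ (hp N) hN
    have hc := X.coeff_polyD_monomial z b N
    obtain ⟨b', hb', hDb'⟩ := ih (p - X.polyD z (monomial N b)) (by
        intro m
        rw [coeff_sub, hc]
        refine Submodule.sub_mem _ (hp m) (Submodule.add_mem _ ?_ ?_)
        · split_ifs with h
          · subst h; rw [hDb]; exact hp N
          · exact Submodule.zero_mem _
        · split_ifs with h
          · subst h; exact Submodule.smul_mem _ _ (h2 m b hb)
          · exact Submodule.zero_mem _)
      (by rw [map_sub, hDp, hsq, sub_zero]) (by
        intro m hm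
        rw [coeff_sub, hc, if_neg (by omega : ¬ N = m + 1), add_zero]
        rcases hm.eq_or_lt with rfl | h
        · rw [if_pos rfl, hDb, sub_self]
        · rw [if_neg (by omega), h0 m (by omega), sub_zero])
    refine ⟨b' + monomial N b, fun m => ?_, by rw [map_add, hDb']; abel⟩
    rw [coeff_add, coeff_monomial]
    refine Submodule.add_mem _ (hb' m) ?_
    split_ifs with h
    · subst h; exact hb
    · exact Submodule.zero_mem _

end DGF

namespace Model

variable {A : Type} [Ring A] [Algebra ℚ A] {Y : DGF A} {I I' : Submodule ℚ A} {x : A} {k : ℤ}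
  {E : Type} [Ring E] [Algebra ℚ E] {X : DGF E} {g : E →ₐ[ℚ] A} {K : Submodule ℚ E} {L : ℕ}

theorem g_D_mem (h : Model Y I X g K L) (hx : Killable Y I I' x k) {e : E} (he : g e ∈ I) :
    g (X.D e) ∈ I := by
  have := Submodule.add_mem _ (h.g_D e) (hx.I_D he)
  simpa using this

theorem g_σ_mem {n : ℤ} {e : E} (he : e ∈ X.G n) (hI : g e ∈ I) : g (X.σ e) ∈ I := by
  rcases Int.even_or_odd n with hp | hp
  · rwa [X.σ_even hp he]
  · rw [X.σ_odd hp he, map_neg]; exact Submodule.neg_mem _ hI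

/-- If the coefficient of index `M` of a cocycle is mapped into `I`, then the coefficient of index
`M + 1` is mapped into `I'`. -/
theorem coeff_mem (h : Model Y I X g K L) (hx : Killable Y I I' x k) (hk : Odd k) {z : E}
    (hg : g z - x ∈ I) (hII : ∀ {n : ℤ} {e : E}, e ∈ X.G n → g (X.σ e) ∈ I' → g e ∈ I')
    {p : E[X]} {f : ℕ → ℤ} (hp : ∀ m, p.coeff m ∈ X.G (f m)) (hDp : X.polyD z p = 0) (M : ℕ)
    (hM : g (p.coeff M) ∈ I) : g (p.coeff (M + 1)) ∈ I' := by
  have h1 := X.coeff_polyD z p M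
  rw [hDp, Polynomial.coeff_zero] at h1
  have h2 : (X.σ (p.coeff (M + 1)) * z) =
      (-((M : ℚ) + 1)⁻¹) • X.D (p.coeff M) := by
    have h0 : ((M : ℚ) + 1) ≠ 0 := by positivity
    rw [eq_neg_of_add_eq_zero_left h1.symm, smul_neg, neg_smul, neg_neg, smul_smul,
      inv_mul_cancel₀ h0, one_smul]
  have h3 := g_mul_z hx hg (X.σ (p.coeff (M + 1)))
  rw [h2, map_smul] at h3
  have h4 := Submodule.sub_mem _ (Submodule.smul_mem _ (-((M : ℚ) + 1)⁻¹) (h.g_D_mem hx hM)) h3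
  rw [sub_sub_cancel] at h4
  exact hII (hp _) (hx.reg_odd hk h4)

/-- If `x` has odd degree, adjoining an even variable `s`, with `D s` a cocycle lifting `x`, turns a
model of `A / I` into a model of `A / I'`. -/
theorem evenStep (h : Model Y I X g K L) (hx : Killable Y I I' x k) (hk : Odd k) :
    ∃ (E' : Type) (_ : Ring E') (_ : Algebra ℚ E') (X' : DGF E') (g' : E' →ₐ[ℚ] A)
      (K' : Submodule ℚ E'), Model Y I' X' g' K' L := by
  obtain ⟨z, hz, hD, hg, hW⟩ := h.exists_lift hx
  have hk1 : 1 ≤ k := by have := hx.two_le; omega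
  have hk2 := hx.two_le
  have hsq : ∀ p, X.polyD z (X.polyD z p) = 0 := (X.evenExt hk1 hk hz hD hW).D_sq
  have hII : ∀ {n : ℤ} {e : E}, e ∈ X.G n → g (X.σ e) ∈ I' → g e ∈ I' := by
    intro n e he hI
    rcases Int.even_or_odd n with hp | hp
    · rwa [X.σ_even hp he] at hI
    · rw [X.σ_odd hp he, map_neg] at hI; simpa using hI
  let ev : E[X] →ₐ[ℚ] E :=
    { (constantCoeff : E[X] →+* E) with
      commutes' := fun r => by
        change (algebraMap ℚ E[X] r).coeff 0 = _
        rw [Polynomial.algebraMap_apply, coeff_C_zero] }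
  have hev : ∀ p, ev p = p.coeff 0 := fun p => rfl
  refine ⟨E[X], inferInstance, inferInstance, X.evenExt hk1 hk hz hD hW,
    g.comp ev, polySub fun _ => K, ?_⟩
  refine
    { g_G := fun {n a} ha => ?_
      g_surj := ?_
      g_σ := fun e => ?_
      g_D := ?_
      g_W := fun he => h.g_W (he 0)
      const := ?_
      K_mul := ?_
      K_D := ?_
      K_σ := fun {a} ha m => ?_
      W_K := fun a ha m => h.W_K (ha m)
      acyc := ?_
      ker_acyc := ?_ }
  · have := h.g_G (ha 0)
    rw [Nat.cast_zero, zero_mul, sub_zero] at this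
    exact this
  · intro n a ha
    obtain ⟨e, he, rfl⟩ := h.g_surj ha
    refine ⟨C e, fun m => ?_, by simp [hev]⟩
    rw [coeff_C]
    split_ifs with h0
    · subst h0; simpa using he
    · exact Submodule.zero_mem _
  · change g ((X.polyσ e).coeff 0) = Y.σ (g (e.coeff 0))
    rw [X.coeff_polyσ]; exact h.g_σ _
  · intro e
    change g ((X.polyD z e).coeff 0) - Y.D (g (e.coeff 0)) ∈ I'
    rw [X.coeff_polyD, map_add]
    have h1 := hx.I_le (Submodule.add_mem _ (h.g_D (e.coeff 0)) (g_mul_z hx hg (X.σ (e.coeff 1))))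
    have h2 := Submodule.add_mem _ h1 (hx.mul_x (g (X.σ (e.coeff 1))))
    convert h2 using 1
    simp only [Nat.cast_zero, zero_add, one_smul]; abel
  · intro p hp
    have hp' : ∀ m, X.D (p.coeff m) + ((m : ℚ) + 1) • (X.σ (p.coeff (m + 1)) * z) ∈ X.W 2 := by
      intro m
      rw [← X.coeff_polyD]; exact hp m
    have hbase : ∀ m, p.coeff (m + 1) ∈ X.W 1 →
        ∃ c : ℚ, p.coeff m - algebraMap ℚ E c ∈ X.W 1 := by
      intro m hm
      refine h.const ?_
      have := Submodule.sub_mem _ (hp' m)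
        (Submodule.smul_mem _ ((m : ℚ) + 1) (X.W_mul (X.W_σ hm) hW))
      simpa using this
    have hpos : ∀ j m, p.natDegree < m + 1 + j → p.coeff (m + 1) ∈ X.W 1 := by
      intro j
      induction j with
      | zero =>
        intro m hm
        rw [coeff_eq_zero_of_natDegree_lt (by omega)]
        exact Submodule.zero_mem _
      | succ j ih =>
        intro m hm
        obtain ⟨c, hc⟩ := hbase (m + 1) (ih (m + 1) (by omega))
        have hc0 : ((m : ℚ) + 1) * c = 0 := by
          refine h.coeff_zero hx hg (e := p.coeff m) ?_
          have h3 := Submodule.sub_mem _ (hp' m)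
            (Submodule.smul_mem _ ((m : ℚ) + 1) (X.W_mul (X.W_σ hc) hW))
          convert h3 using 1
          rw [map_sub, AlgHom.commutes, sub_mul, smul_sub, mul_smul, Algebra.smul_def c z]; abel
        have hc1 : c = 0 := by
          rcases mul_eq_zero.1 hc0 with h0 | h0
          · have : (0 : ℚ) < (m : ℚ) + 1 := by positivity
            exact absurd h0 this.ne'
          · exact h0
        subst hc1
        simpa using hc
    obtain ⟨c, hc⟩ := hbase 0 (hpos p.natDegree 0 (by omega))
    refine ⟨c, fun m => ?_⟩
    rw [Polynomial.algebraMap_apply, coeff_sub, coeff_C]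
    cases m with
    | zero => simpa using hc
    | succ m => simpa using hpos p.natDegree m (by omega)
  · intro a b ha m
    rw [coeff_mul]
    exact Submodule.sum_mem _ fun y _ => h.K_mul _ (ha y.1)
  · intro a ha m
    change (X.polyD z a).coeff m ∈ K
    rw [X.coeff_polyD]
    exact Submodule.add_mem _ (h.K_D (ha m)) (Submodule.smul_mem _ _ (h.K_mul _ (h.K_σ (ha _))))
  · change (X.polyσ a).coeff m ∈ K
    rw [X.coeff_polyσ]; exact h.K_σ (ha m)
  · intro e he hDe
    obtain ⟨b, hb, hDb⟩ := X.poly_acyclic hsq (fun _ => K) (fun _ => K)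
      (fun m e he hDe => h.acyc he hDe) (fun m b hb => h.K_mul _ (h.K_σ hb)) (e.natDegree + 1)
      e he hDe (fun m hm => coeff_eq_zero_of_natDegree_lt (by omega))
    exact ⟨b, hb, hDb⟩
  · -- by ascending induction, the coefficients of the cocycle are moved into the preimage of `I`
    have key : ∀ (j M : ℕ) (n : ℤ) (p : E[X]), (∀ m : ℕ, p.coeff m ∈ X.G (n - m * (k - 1))) →
        X.polyD z p = 0 → (∀ i, i < M → g (p.coeff i) ∈ I) → g (p.coeff 0) ∈ I' →
        n < M + j → ∃ b : E[X], (∀ m : ℕ, b.coeff m ∈ X.G (n - 1 - m * (k - 1))) ∧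
          b.coeff 0 = 0 ∧ ∀ i, g ((p - X.polyD z b).coeff i) ∈ I := by
      intro j
      induction j with
      | zero =>
        intro M n p hp hDp hi h0 hn
        refine ⟨0, fun m => by simp, by simp, fun i => ?_⟩
        rw [map_zero, sub_zero]
        by_cases hiM : i < M
        · exact hi i hiM
        · have : p.coeff i = 0 := by
            refine X.neg ?_ (hp i)
            have h1 : (M : ℤ) ≤ i := by exact_mod_cast not_lt.1 hiM
            have h2 : (i : ℤ) * 1 ≤ i * (k - 1) := mul_le_mul_of_nonneg_left (by omega) (by omega)
            push_cast at hn
            omega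
          rw [this, map_zero]; exact Submodule.zero_mem _
      | succ j ih =>
        intro M n p hp hDp hi h0 hn
        have hM : g (p.coeff M) ∈ I' := by
          cases M with
          | zero => exact h0
          | succ M => exact h.coeff_mem hx hk hg hII hp hDp M (hi M (by omega))
        obtain ⟨c, hc, hcI⟩ := hx.split (h.g_G (hp M)) hM
        obtain ⟨a, ha, rfl⟩ := h.g_surj hc
        set b : E[X] := monomial (M + 1) (((M + 1 : ℕ) : ℚ)⁻¹ • X.σ a) with hb
        have hbG : ∀ m : ℕ, b.coeff m ∈ X.G (n - 1 - m * (k - 1)) := by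
          intro m
          rw [hb, coeff_monomial]
          split_ifs with hm
          · subst hm
            refine Submodule.smul_mem _ _ ?_
            convert X.σ_mem ha using 2
            push_cast; ring
          · exact Submodule.zero_mem _
        have hDb : ∀ m, (X.polyD z b).coeff m =
            (if M + 1 = m then X.D (((M + 1 : ℕ) : ℚ)⁻¹ • X.σ a) else 0) +
              (if M = m then a * z else 0) := by
          intro m
          rw [hb, X.coeff_polyD_monomial]
          congr 1
          have h00 : (((M + 1 : ℕ) : ℚ)) ≠ 0 := by positivity
          by_cases hm : M = m
          · rw [if_pos (by omega), if_pos hm, map_smul, X.σ_σ, smul_mul_assoc, smul_smul,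
              mul_inv_cancel₀ h00, one_smul]
          · rw [if_neg (by omega), if_neg hm]
        have hDbG : ∀ m : ℕ, (X.polyD z b).coeff m ∈ X.G (n - m * (k - 1)) := by
          have := (X.evenExt hk1 hk hz hD hW).D_mem (i := n - 1) (a := b) hbG
          rw [sub_add_cancel] at this
          exact this
        have hlow : ∀ i, i < M + 1 → g ((p - X.polyD z b).coeff i) ∈ I := by
          intro i hiM
          rw [coeff_sub, hDb, if_neg (by omega), zero_add]
          by_cases h' : M = i
          · subst h'
            rw [if_pos rfl, map_sub]
            have := Submodule.sub_mem _ hcI (g_mul_z hx hg a)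
            convert this using 1
            abel
          · rw [if_neg h', sub_zero]; exact hi i (by omega)
        obtain ⟨b', hb', hb0', hbI'⟩ := ih (M + 1) n (p - X.polyD z b)
          (fun m => by rw [coeff_sub]; exact Submodule.sub_mem _ (hp m) (hDbG m))
          (by rw [map_sub, hDp, hsq, sub_zero]) hlow (hx.I_le (hlow 0 (by omega)))
          (by push_cast at hn ⊢; omega)
        refine ⟨b + b', fun m => ?_, ?_, fun i => ?_⟩
        · rw [coeff_add]; exact Submodule.add_mem _ (hbG m) (hb' m)
        · rw [coeff_add, hb0', hb, coeff_monomial, if_neg (by omega), add_zero]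
        · have := hbI' i
          rwa [sub_sub, ← map_add] at this
    intro n e he hge hDe
    have he' : ∀ m : ℕ, e.coeff m ∈ X.G (n - m * (k - 1)) := he
    obtain ⟨b, hb, hb0, hbI⟩ := key (n.toNat + 1) 0 n e he' hDe (fun i hi => by omega) hge
      (by push_cast; omega)
    have hDbG : ∀ m : ℕ, (X.polyD z b).coeff m ∈ X.G (n - m * (k - 1)) := by
      have := (X.evenExt hk1 hk hz hD hW).D_mem (i := n - 1) (a := b) hb
      rw [sub_add_cancel] at this
      exact this
    obtain ⟨b', hb', hDb'⟩ := X.poly_acyclic hsq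
      (fun m => X.G (n - m * (k - 1)) ⊓ I.comap g.toLinearMap)
      (fun m => X.G (n - 1 - m * (k - 1)) ⊓ I.comap g.toLinearMap)
      (by
        rintro m e ⟨he1, he2⟩ hDe
        obtain ⟨b, hb, hgb, hDb⟩ := h.ker_acyc he1 he2 hDe
        refine ⟨b, ⟨?_, hgb⟩, hDb⟩
        rwa [sub_right_comm] at hb)
      (by
        rintro m b ⟨hb1, hb2⟩
        refine ⟨?_, ?_⟩
        · have := X.mul_mem (X.σ_mem hb1) hz
          rwa [show n - 1 - ((m + 1 : ℕ) : ℤ) * (k - 1) + k = n - m * (k - 1) by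
            push_cast; ring] at this
        · change g (X.σ b * z) ∈ I
          rw [map_mul]
          exact hx.mul_r _ (g_σ_mem hb1 hb2))
      ((e - X.polyD z b).natDegree + 1) (e - X.polyD z b)
      (fun m => ⟨by rw [coeff_sub]; exact Submodule.sub_mem _ (he' m) (hDbG m), hbI m⟩)
      (by rw [map_sub, hsq, sub_zero]; exact hDe)
      (fun m hm => coeff_eq_zero_of_natDegree_lt (by omega))
    refine ⟨b' + b, fun m => ?_, ?_, ?_⟩
    · rw [coeff_add]; exact Submodule.add_mem _ (hb' m).1 (hb m)
    · change g ((b' + b).coeff 0) ∈ I'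
      rw [coeff_add, hb0, add_zero]
      exact hx.I_le (hb' 0).2
    · change X.polyD z (b' + b) = e
      rw [map_add, hDb']; abel

end Model
end RHT

namespace RHT

/-! ### The monomial basis and the differential -/

namespace Setup

variable {A : Type} [Ring A] [Algebra ℚ A] {n : ℕ} (M : Setup A n)

/-- The degree of a monomial. -/
def dg (m : Multiset (Fin n)) : ℕ := (m.map M.deg).sum

/-- The lower degree of a monomial. -/
def lw (m : Multiset (Fin n)) : ℕ := (m.map M.low).sum

/-- The monomials which may occur in the differential of the `i`-th generator. -/
def Good (i : Fin n) (m : Multiset (Fin n)) : Prop :=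
  2 ≤ m.card ∧ M.dg m = M.deg i + 1 ∧ M.lw m + 1 = M.low i

@[simp] theorem dg_add (m m' : Multiset (Fin n)) : M.dg (m + m') = M.dg m + M.dg m' := by simp [dg]
@[simp] theorem lw_add (m m' : Multiset (Fin n)) : M.lw (m + m') = M.lw m + M.lw m' := by simp [lw]
@[simp] theorem dg_cons (i) (m : Multiset (Fin n)) : M.dg (i ::ₘ m) = M.deg i + M.dg m := by simp [dg]
@[simp] theorem lw_cons (i) (m : Multiset (Fin n)) : M.lw (i ::ₘ m) = M.low i + M.lw m := by simp [lw]
@[simp] theorem dg_zero : M.dg 0 = 0 := by simp [dg]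
@[simp] theorem lw_zero : M.lw 0 = 0 := by simp [lw]
@[simp] theorem dg_singleton (i) : M.dg {i} = M.deg i := by simp [dg]
@[simp] theorem lw_singleton (i) : M.lw {i} = M.low i := by simp [lw]

theorem two_mul_card_le (m : Multiset (Fin n)) : 2 * m.card ≤ M.dg m := by
  induction m using Multiset.induction_on with
  | empty => simp
  | cons i m ih => have := M.deg_ge i; simp; omega

theorem dg_toList (m : Multiset (Fin n)) : (m.toList.map M.deg).sum = M.dg m := by
  rw [dg, ← Multiset.sum_coe, ← Multiset.map_coe, Multiset.coe_toList]

theorem v_mem {p : Multiset (Fin n) → Prop} {i : Fin n} (h : p {i}) : M.v i ∈ M.Sp p := by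
  rw [← M.mono_singleton]; exact M.mono_mem h

theorem one_mem_Sp {p : Multiset (Fin n) → Prop} (h : p 0) : (1 : A) ∈ M.Sp p := by
  rw [← M.mono_zero]; exact M.mono_mem h

theorem mem_top (a : A) : a ∈ M.Sp (fun _ => True) := by rw [M.Sp_true]; trivial

theorem σ_word (l : List (Fin n)) :
    M.σ (l.map M.v).prod = ((-1 : ℚ) ^ (l.map M.deg).sum) • (l.map M.v).prod := by
  induction l with
  | nil => simp
  | cons i l ih =>
    simp only [List.map_cons, List.prod_cons, List.sum_cons, map_mul, ih, M.σ_v, pow_add, mul_smul,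
      smul_mul_assoc, mul_smul_comm]
    rw [smul_comm]

theorem σ_mono (m : Multiset (Fin n)) : M.σ (M.mono m) = ((-1 : ℚ) ^ M.dg m) • M.mono m := by
  rw [← M.dg_toList]; exact M.σ_word _

theorem σ_mem {p : Multiset (Fin n) → Prop} {a : A} (ha : a ∈ M.Sp p) : M.σ a ∈ M.Sp p :=
  M.linear_le M.σ.toLinearMap (fun m hm => by
    change M.σ (M.mono m) ∈ _
    rw [M.σ_mono]; exact Submodule.smul_mem _ _ (M.mono_mem hm)) ha

theorem σ_even {a : A} (ha : a ∈ M.Sp (fun m => Even (M.dg m))) : M.σ a = a := by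
  have := M.linear_le (M.σ.toLinearMap - LinearMap.id) (S := ⊥) (fun m hm => by
    change M.σ (M.mono m) - M.mono m ∈ _
    rw [M.σ_mono, hm.neg_one_pow]; simp) ha
  exact sub_eq_zero.1 (by simpa using this)

theorem σ_odd {a : A} (ha : a ∈ M.Sp (fun m => Odd (M.dg m))) : M.σ a = -a := by
  have := M.linear_le (M.σ.toLinearMap + LinearMap.id) (S := ⊥) (fun m hm => by
    change M.σ (M.mono m) + M.mono m ∈ _
    rw [M.σ_mono, hm.neg_one_pow]; simp) ha
  exact eq_neg_of_add_eq_zero_left (by simpa using this)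

theorem σ_σ (a : A) : M.σ (M.σ a) = a := by
  have := M.linear_le (M.σ.toLinearMap ∘ₗ M.σ.toLinearMap - LinearMap.id) (S := ⊥) (fun m hm => by
    change M.σ (M.σ (M.mono m)) - M.mono m ∈ _
    rw [M.σ_mono, map_smul, M.σ_mono, smul_smul, ← pow_add, (Even.add_self _).neg_one_pow]; simp)
    (M.mem_top a)
  exact sub_eq_zero.1 (by simpa using this)

theorem mono_comm (m m' : Multiset (Fin n)) : M.mono m * M.mono m' =
    ((-1 : ℚ) ^ (M.dg m * M.dg m')) • (M.mono m' * M.mono m) := by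
  rw [← M.dg_toList, ← M.dg_toList]
  exact word_comm M.comm _ _

theorem comm_even {z : A} (hz : z ∈ M.Sp (fun m => Even (M.dg m))) (a : A) : z * a = a * z := by
  have h1 : ∀ m, Even (M.dg m) → M.mono m * a = a * M.mono m := by
    intro m hm
    have := M.linear_le (LinearMap.mulLeft ℚ (M.mono m) - LinearMap.mulRight ℚ (M.mono m)) (S := ⊥)
      (fun m' _ => by
        change M.mono m * M.mono m' - M.mono m' * M.mono m ∈ _
        rw [M.mono_comm, (hm.mul_right _).neg_one_pow]; simp) (M.mem_top a)
    exact sub_eq_zero.1 (by simpa using this)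
  have := M.linear_le (LinearMap.mulRight ℚ a - LinearMap.mulLeft ℚ a) (S := ⊥)
      (fun m hm => by
        change M.mono m * a - a * M.mono m ∈ _
        rw [h1 m hm]; simp) hz
  exact sub_eq_zero.1 (by simpa using this)

theorem comm_odd {z : A} (hz : z ∈ M.Sp (fun m => Odd (M.dg m))) (a : A) : z * a = M.σ a * z := by
  have h1 : ∀ m, Odd (M.dg m) → M.mono m * a = M.σ a * M.mono m := by
    intro m hm
    have := M.linear_le (LinearMap.mulLeft ℚ (M.mono m) -
        LinearMap.mulRight ℚ (M.mono m) ∘ₗ M.σ.toLinearMap) (S := ⊥)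
      (fun m' _ => by
        change M.mono m * M.mono m' - M.σ (M.mono m') * M.mono m ∈ _
        rw [M.mono_comm, M.σ_mono, pow_mul, hm.neg_one_pow]; simp) (M.mem_top a)
    exact sub_eq_zero.1 (by simpa using this)
  have := M.linear_le (LinearMap.mulRight ℚ a - LinearMap.mulLeft ℚ (M.σ a)) (S := ⊥)
      (fun m hm => by
        change M.mono m * a - M.σ a * M.mono m ∈ _
        rw [h1 m hm]; simp) hz
  exact sub_eq_zero.1 (by simpa using this)

theorem d_one : M.d 1 = 0 := by
  have := M.leib 1 1
  simpa using this

theorem d_word_mem (l : List (Fin n)) : ∀ {q : Multiset (Fin n) → Prop},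
    (∀ m0 i, (l : Multiset (Fin n)) = i ::ₘ m0 → ∀ m', M.Good i m' → q (m0 + m')) →
    M.d (l.map M.v).prod ∈ M.Sp q := by
  induction l with
  | nil => intro q _; simp [M.d_one]
  | cons j l ih =>
    intro q h
    rw [List.map_cons, List.prod_cons, M.leib]
    refine Submodule.add_mem _ ?_ ?_
    · refine M.mul_mem (q := fun m => m = (l : Multiset (Fin n))) ?_ (M.d_v j) (M.word_mem rfl)
      rintro m _ hm rfl
      rw [add_comm]
      exact h l j rfl m hm
    · refine M.mul_mem (p := fun m => m = {j}) (q := fun m => q (j ::ₘ m)) ?_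
        (M.σ_mem (M.v_mem rfl)) (ih ?_)
      · rintro _ m rfl hm; exact hm
      · intro m0 i hl m' hm'
        rw [← Multiset.cons_add]
        refine h (j ::ₘ m0) i ?_ m' hm'
        rw [← Multiset.cons_coe, hl, Multiset.cons_swap]

/-- The differential replaces one factor of a monomial by a monomial of its differential. -/
theorem d_mem {p q : Multiset (Fin n) → Prop}
    (h : ∀ i m0, p (i ::ₘ m0) → ∀ m', M.Good i m' → q (m0 + m')) {a : A} (ha : a ∈ M.Sp p) :
    M.d a ∈ M.Sp q :=
  M.linear_le M.d (fun m hm => M.d_word_mem _ fun m0 i hm0 m' hm' => h i m0 (by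
    rw [Multiset.coe_toList] at hm0; rwa [← hm0]) m' hm') ha

theorem d_dg {a : A} {k : ℕ} (ha : a ∈ M.Sp (fun m => M.dg m = k)) :
    M.d a ∈ M.Sp (fun m => M.dg m = k + 1) :=
  M.d_mem (fun i m0 h m' hm' => by
    have := hm'.2.1
    simp at h ⊢; omega) ha

theorem σ_d (a : A) : M.σ (M.d a) = - M.d (M.σ a) := by
  have := M.linear_le (M.σ.toLinearMap ∘ₗ M.d + M.d ∘ₗ M.σ.toLinearMap) (S := ⊥) (fun m hm => by
    change M.σ (M.d (M.mono m)) + M.d (M.σ (M.mono m)) ∈ _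
    have h1 := M.d_dg (M.mono_mem (p := fun m' => M.dg m' = M.dg m) (m := m) rfl)
    rw [M.σ_mono, map_smul]
    rcases Nat.even_or_odd (M.dg m) with h | h
    · rw [M.σ_odd (M.Sp_mono (fun m' hm' => hm' ▸ h.add_one) h1), h.neg_one_pow]; simp
    · rw [M.σ_even (M.Sp_mono (fun m' hm' => hm' ▸ h.add_one) h1), h.neg_one_pow]; simp)
    (M.mem_top a)
  exact eq_neg_of_add_eq_zero_left (by simpa using this)

theorem Good.lt {M : Setup A n} {i : Fin n} {m : Multiset (Fin n)} (h : M.Good i m) {a : Fin n}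
    (ha : a ∈ m) : a < i := by
  obtain ⟨m', rfl⟩ := Multiset.exists_cons_of_mem ha
  obtain ⟨h1, h2, -⟩ := h
  by_contra hlt
  have h3 := M.deg_mono (not_lt.1 hlt)
  have h4 := M.two_mul_card_le m'
  simp at h1 h2
  omega

/-- The ideal generated by the first `j` generators. -/
noncomputable def Id (j : ℕ) : Submodule ℚ A := M.Sp (fun m => ∃ i ∈ m, (i : ℕ) < j)

/-- The algebra with its degrees, its involution and the word length filtration. -/
noncomputable def dgf : DGF A where
  G k := M.Sp (fun m => (M.dg m : ℤ) = k)
  σ := M.σ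
  D := M.d
  W k := M.Sp (fun m => k ≤ m.card)
  one_mem := M.one_mem_Sp (by simp)
  mul_mem := fun ha hb => M.mul_mem (fun m m' h h' => by simp [h, h']) ha hb
  neg := by
    intro i a hi ha
    have : a ∈ M.Sp (fun _ => False) := M.Sp_mono (fun m hm => by omega) ha
    rw [M.Sp_false] at this
    simpa using this
  σ_even := fun hi ha => M.σ_even (M.Sp_mono (fun m hm => by rw [← hm] at hi; exact_mod_cast hi) ha)
  σ_odd := fun hi ha => M.σ_odd (M.Sp_mono (fun m hm => by rw [← hm] at hi; exact_mod_cast hi) ha)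
  comm_even := fun hi ha =>
    M.comm_even (M.Sp_mono (fun m hm => by rw [← hm] at hi; exact_mod_cast hi) ha)
  comm_odd := fun hi ha =>
    M.comm_odd (M.Sp_mono (fun m hm => by rw [← hm] at hi; exact_mod_cast hi) ha)
  D_mem := fun ha => M.d_mem (fun i m0 h m' hm' => by
    have := hm'.2.1
    simp at h ⊢; omega) ha
  D_sq := M.d_sq
  leib := M.leib
  σ_D := M.σ_d
  σ_σ := M.σ_σ
  W_zero := by
    rw [eq_top_iff]
    exact fun a _ => M.Sp_mono (fun m _ => Nat.zero_le _) (M.mem_top a)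
  W_mul := fun ha hb => M.mul_mem (fun m m' h h' => by simp; omega) ha hb
  W_D := fun ha => M.d_mem (fun i m0 h m' hm' => by
    have := hm'.1
    simp at h ⊢; omega) ha
  W_σ := fun ha => M.σ_mem ha

theorem d_Id (j : ℕ) {a : A} (ha : a ∈ M.Id j) : M.d a ∈ M.Id j := by
  refine M.d_mem ?_ ha
  rintro i m0 ⟨i', hi', hj⟩ m' hm'
  rcases Multiset.mem_cons.1 hi' with rfl | h
  · have h2 := hm'.1
    obtain ⟨a, ha⟩ := Multiset.card_pos_iff_exists_mem.1 (show 0 < m'.card by omega)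
    exact ⟨a, by simp [ha], lt_trans (Fin.lt_def.1 (hm'.lt ha)) hj⟩
  · exact ⟨i', by simp [h], hj⟩

theorem killable (j : Fin n) : Killable M.dgf (M.Id j) (M.Id (j + 1)) (M.v j) (M.deg j) where
  two_le := by exact_mod_cast M.deg_ge j
  x_mem := M.v_mem (by simp)
  dx := by
    refine M.Sp_mono (fun m' hm' => ?_) (M.d_v j)
    obtain ⟨a, ha⟩ := Multiset.card_pos_iff_exists_mem.1 (show 0 < m'.card by have := hm'.1; omega)
    exact ⟨a, ha, Fin.lt_def.1 (Good.lt (M := M) hm' ha)⟩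
  mul_l := fun b ha => M.mul_mem (fun m m' _ ⟨i, hi, hj⟩ => ⟨i, by simp [hi], hj⟩) (M.mem_top b) ha
  mul_r := fun b ha => M.mul_mem (fun m m' ⟨i, hi, hj⟩ _ => ⟨i, by simp [hi], hj⟩) ha (M.mem_top b)
  I_D := fun ha => M.d_Id j ha
  I_W := M.Sp_mono fun m ⟨i, hi, _⟩ => Multiset.card_pos_iff_exists_mem.2 ⟨i, hi⟩
  x_W := M.v_mem (by simp)
  x_ind := by
    intro c a w i hw hi h
    by_contra hc
    have h1 : M.d a ∈ M.Sp (fun m => 2 ≤ m.card) :=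
      M.d_mem (fun i m0 _ m' hm' => by have := hm'.1; simp; omega) (M.mem_top a)
    have h2 : c • M.v j ∈ M.Sp (fun m => 2 ≤ m.card ∨ ∃ i ∈ m, (i : ℕ) < j) := by
      rw [h]
      exact Submodule.add_mem _ (M.Sp_mono (fun m hm => Or.inl hm) (Submodule.add_mem _ h1 hw))
        (M.Sp_mono (fun m hm => Or.inr hm) hi)
    have h3 := Submodule.smul_mem _ c⁻¹ h2
    rw [smul_smul, inv_mul_cancel₀ hc, one_smul, ← M.mono_singleton, M.mono_mem_iff] at h3
    · simp at h3
    · intro i _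
      exact (Multiset.count_le_card _ _).trans (by simp)
  one_W := by
    intro c h
    by_contra hc
    have h3 := Submodule.smul_mem _ c⁻¹ h
    rw [Algebra.algebraMap_eq_smul_one, smul_smul, inv_mul_cancel₀ hc, one_smul] at h3
    change (1 : A) ∈ M.Sp _ at h3
    rw [← M.mono_zero, M.mono_mem_iff] at h3
    · simp at h3
    · intro i _; simp
  I_le := M.Sp_mono fun m ⟨i, hi, hj⟩ => ⟨i, hi, by omega⟩
  mul_x := fun b => M.mul_mem (q := fun m => m = {j}) (fun m m' _ h => ⟨j, by simp [h], by omega⟩)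
    (M.mem_top b) (M.v_mem rfl)
  split := by
    intro k a ha haI
    have h1 : a ∈ M.Sp (fun m => (M.dg m : ℤ) = k ∧ ∃ i ∈ m, (i : ℕ) < j + 1) := by
      rw [M.Sp_and]; exact ⟨ha, haI⟩
    have h2 : a ∈ (M.dgf.G (k - M.deg j)).map (LinearMap.mulRight ℚ (M.v j)) ⊔ M.Id j := by
      refine M.Sp_le ?_ h1
      rintro m ⟨hm, i, hi, hj⟩
      by_cases h : (i : ℕ) < j
      · exact Submodule.mem_sup_right (M.mono_mem ⟨i, hi, h⟩)
      · have : i = j := Fin.ext (by omega)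
        subst this
        obtain ⟨m', rfl⟩ := Multiset.exists_cons_of_mem hi
        refine Submodule.mem_sup_left ?_
        obtain ⟨e, he⟩ := M.mono_mul m' {i}
        refine ⟨((e : ℤ) : ℚ) • M.mono m', Submodule.smul_mem _ _ (M.mono_mem ?_), ?_⟩
        · simp at hm; omega
        · rw [LinearMap.mulRight_apply, smul_mul_assoc, ← M.mono_singleton, he, smul_smul,
            add_comm, Multiset.singleton_add]
          rcases Int.units_eq_one_or e with rfl | rfl <;> simp
    obtain ⟨_, ⟨c, hc, rfl⟩, i, hi, rfl⟩ := Submodule.mem_sup.1 h2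
    exact ⟨c, hc, by simpa using hi⟩
  reg_even := by
    intro hk c hc
    have hk' : Even (M.deg j) := by exact_mod_cast hk
    rw [← M.comm_even (M.v_mem (by simpa using hk')), ← M.mono_singleton] at hc
    refine M.cancel {j} hc ?_
    intro m hm h
    obtain ⟨i, hi, hj⟩ := h (by
      intro i hi
      have : i ≠ j := by
        rintro rfl
        exact (Nat.not_even_iff_odd.2 hi) hk'
      rw [Multiset.count_add, Multiset.count_singleton, if_neg this, zero_add]
      exact hm i hi)
    rcases Multiset.mem_add.1 hi with h | h
    · rw [Multiset.mem_singleton.1 h] at hj; omega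
    · exact ⟨i, h, hj⟩
  reg_odd := by
    intro hk c hc
    have hk' : Odd (M.deg j) := by exact_mod_cast hk
    have h1 := M.comm_odd (M.v_mem (p := fun m => Odd (M.dg m)) (i := j) (by simpa using hk'))
      (M.σ c)
    rw [M.σ_σ] at h1
    rw [← h1, ← M.mono_singleton] at hc
    have h2 : M.σ c ∈ M.Id (j + 1) := by
      refine M.cancel {j} hc ?_
      intro m hm h
      by_cases hjm : j ∈ m
      · exact ⟨j, hjm, by omega⟩
      obtain ⟨i, hi, hj⟩ := h (by
        intro i hi
        rw [Multiset.count_add, Multiset.count_singleton]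
        split_ifs with hij
        · subst hij; rw [Multiset.count_eq_zero_of_notMem hjm]
        · rw [zero_add]; exact hm i hi)
      rcases Multiset.mem_add.1 hi with h | h
      · rw [Multiset.mem_singleton.1 h] at hj; omega
      · exact ⟨i, h, by omega⟩
    have := M.σ_mem h2
    rwa [M.σ_σ] at this

theorem exists_const (e : A) : ∃ c : ℚ, e - algebraMap ℚ A c ∈ M.Sp (fun m => 1 ≤ m.card) := by
  have h : e ∈ M.Sp (fun m => m = 0 ∨ 1 ≤ m.card) :=
    M.Sp_mono (fun m _ => by
      rcases Nat.eq_zero_or_pos m.card with h | h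
      · exact Or.inl (Multiset.card_eq_zero.1 h)
      · exact Or.inr h) (M.mem_top e)
  rw [M.Sp_or] at h
  obtain ⟨a, ha, b, hb, rfl⟩ := Submodule.mem_sup.1 h
  have ha' : a ∈ Submodule.span ℚ {(1 : A)} := by
    refine M.Sp_le ?_ ha
    rintro _ rfl
    rw [M.mono_zero]; exact Submodule.mem_span_singleton_self _
  obtain ⟨c, rfl⟩ := Submodule.mem_span_singleton.1 ha'
  exact ⟨c, by rw [Algebra.algebraMap_eq_smul_one, add_sub_cancel_left]; exact hb⟩

/-- If there is an acyclic differential ideal containing all long words, then every generator is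
nilpotent up to coboundaries, modulo the previous generators. -/
theorem exists_pow (K : Submodule ℚ A) (L : ℕ) (K_mul : ∀ {a} b, a ∈ K → a * b ∈ K)
    (K_D : ∀ {a}, a ∈ K → M.d a ∈ K) (K_σ : ∀ {a}, a ∈ K → M.σ a ∈ K)
    (W_K : M.Sp (fun m => L ≤ m.card) ≤ K)
    (acyc : ∀ {e}, e ∈ K → M.d e = 0 → ∃ b ∈ K, M.d b = e) (j : Fin n) :
    ∃ (N : ℕ) (b : A), M.v j ^ N - M.d b ∈ M.Id j := by
  have key : ∀ j : ℕ, j ≤ n → ∃ (E : Type) (_ : Ring E) (_ : Algebra ℚ E) (X : DGF E)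
      (g : E →ₐ[ℚ] A) (K' : Submodule ℚ E), Model M.dgf (M.Id j) X g K' L := by
    intro j
    induction j with
    | zero =>
      intro _
      have h0 : M.Id 0 = ⊥ := by
        rw [Id, ← M.Sp_false]; congr 1; ext m; simp
      refine ⟨A, inferInstance, inferInstance, M.dgf, AlgHom.id ℚ A, K, ?_⟩
      exact
        { g_G := fun h => h
          g_surj := fun {n a} h => ⟨a, h, rfl⟩
          g_σ := fun e => rfl
          g_D := fun e => by simp
          g_W := fun h => h
          const := fun {e} _ => M.exists_const e
          K_mul := K_mul
          K_D := K_D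
          K_σ := K_σ
          W_K := W_K
          acyc := acyc
          ker_acyc := fun {n e} _ he _ => by
            rw [h0] at he ⊢
            have : e = 0 := by simpa using he
            subst this
            exact ⟨0, Submodule.zero_mem _, by simp, by simp⟩ }
    | succ j ih =>
      intro hj
      obtain ⟨E, _, _, X, g, K', h⟩ := ih (by omega)
      have hk := M.killable ⟨j, hj⟩
      rcases Nat.even_or_odd (M.deg ⟨j, hj⟩) with hp | hp
      · exact h.oddStep hk (by exact_mod_cast hp)
      · exact h.evenStep hk (by exact_mod_cast hp)
  obtain ⟨E, _, _, X, g, K', h⟩ := key j j.2.le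
  exact h.nilpotent (M.killable j)

end Setup
end RHT

namespace RHT

/-! ### The filtration by the number of odd generators -/

namespace Setup

variable {A : Type} [Ring A] [Algebra ℚ A] {n : ℕ} (M : Setup A n)

/-- The number of odd generators in a monomial. -/
def oc (m : Multiset (Fin n)) : ℕ := (m.map fun i => M.deg i % 2).sum

@[simp] theorem oc_add (m m' : Multiset (Fin n)) : M.oc (m + m') = M.oc m + M.oc m' := by simp [oc]
@[simp] theorem oc_cons (i) (m : Multiset (Fin n)) : M.oc (i ::ₘ m) = M.deg i % 2 + M.oc m := by
  simp [oc]
@[simp] theorem oc_zero : M.oc 0 = 0 := by simp [oc]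
@[simp] theorem oc_singleton (i) : M.oc {i} = M.deg i % 2 := by simp [oc]

theorem oc_mod (m : Multiset (Fin n)) : M.oc m % 2 = M.dg m % 2 := by
  induction m using Multiset.induction_on with
  | empty => simp
  | cons i m ih => simp; omega

theorem oc_le_card (m : Multiset (Fin n)) : M.oc m ≤ m.card := by
  induction m using Multiset.induction_on with
  | empty => simp
  | cons i m ih => simp; omega

/-- The span of the monomials with at least `l` odd factors. -/
noncomputable def F (l : ℕ) : Submodule ℚ A := M.Sp (fun m => l ≤ M.oc m)

theorem mem_F_of_odd {a : A} (ha : a ∈ M.Sp (fun m => Odd (M.dg m))) : a ∈ M.F 1 :=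
  M.Sp_mono (fun m hm => by
    have := M.oc_mod m
    have h2 := Nat.odd_iff.1 hm
    omega) ha

theorem F_mul {i j : ℕ} {a b : A} (ha : a ∈ M.F i) (hb : b ∈ M.F j) : a * b ∈ M.F (i + j) :=
  M.mul_mem (fun m m' h h' => by simp; omega) ha hb

theorem F_zero (a : A) : a ∈ M.F 0 := M.Sp_mono (fun _ _ => Nat.zero_le _) (M.mem_top a)

theorem F_mul_right {i : ℕ} {a : A} (ha : a ∈ M.F i) (b : A) : a * b ∈ M.F i := by
  have := M.F_mul ha (M.F_zero b)
  rwa [add_zero] at this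

theorem F_mul_left {i : ℕ} {a : A} (b : A) (ha : a ∈ M.F i) : b * a ∈ M.F i := by
  have := M.F_mul (M.F_zero b) ha
  rwa [zero_add] at this

theorem F_mono {i j : ℕ} (h : i ≤ j) : M.F j ≤ M.F i := M.Sp_mono fun _ hm => le_trans h hm

theorem Good.oc_even {M : Setup A n} {i : Fin n} {m : Multiset (Fin n)} (h : M.Good i m)
    (hi : M.deg i % 2 = 0) : 1 ≤ M.oc m := by
  have := M.oc_mod m
  have h2 := h.2.1
  omega

theorem d_F {l : ℕ} {a : A} (ha : a ∈ M.F (l + 1)) : M.d a ∈ M.F l :=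
  M.d_mem (fun i m0 h m' _ => by simp at h ⊢; omega) ha

theorem d_even {a : A} (ha : a ∈ M.Sp (fun m => Even (M.dg m))) : M.d a ∈ M.F 1 :=
  M.mem_F_of_odd (M.d_mem (fun i m0 h m' hm' => by
    have := hm'.2.1
    rw [Nat.even_iff] at h
    rw [Nat.odd_iff]
    simp at h ⊢; omega) ha)

theorem exists_parity (a : A) : ∃ b ∈ M.Sp (fun m => Even (M.dg m)),
    ∃ c ∈ M.Sp (fun m => Odd (M.dg m)), b + c = a := by
  have : a ∈ M.Sp (fun m => Even (M.dg m) ∨ Odd (M.dg m)) :=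
    M.Sp_mono (fun m _ => Nat.even_or_odd _) (M.mem_top a)
  rw [M.Sp_or] at this
  exact Submodule.mem_sup.1 this

/-- The ideal generated by the coboundaries and the odd generators. -/
noncomputable def cobIdeal : Ideal A where
  carrier := {x | ∃ w, x - M.d w ∈ M.F 1}
  zero_mem' := ⟨0, by simp⟩
  add_mem' := by
    rintro a b ⟨w, hw⟩ ⟨w', hw'⟩
    refine ⟨w + w', ?_⟩
    have := Submodule.add_mem _ hw hw'
    rwa [sub_add_sub_comm, ← map_add] at this
  smul_mem' := by
    rintro c x ⟨w, hw⟩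
    obtain ⟨c0, h0, c1, h1, rfl⟩ := M.exists_parity c
    refine ⟨c0 * w, ?_⟩
    have e : (c0 + c1) • x - M.d (c0 * w) =
        c0 * (x - M.d w) + c1 * x - M.d c0 * w := by
      rw [M.leib, M.σ_even h0, smul_eq_mul]; noncomm_ring
    rw [e]
    exact Submodule.sub_mem _ (Submodule.add_mem _ (M.F_mul_left _ hw)
      (M.F_mul_right (M.mem_F_of_odd h1) _)) (M.F_mul_right (M.d_even h0) _)

theorem mem_cobIdeal {x : A} : x ∈ M.cobIdeal ↔ ∃ w, x - M.d w ∈ M.F 1 := Iff.rfl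

theorem F_le_cob {x : A} (hx : x ∈ M.F 1) : x ∈ M.cobIdeal := ⟨0, by simpa using hx⟩

theorem comm_cob (a b : A) : a * b - b * a ∈ M.F 1 := by
  obtain ⟨a0, h0, a1, h1, rfl⟩ := M.exists_parity a
  have e : (a0 + a1) * b - b * (a0 + a1) = a1 * b - b * a1 := by
    rw [add_mul, mul_add, M.comm_even h0]; abel
  rw [e]
  exact Submodule.sub_mem _ (M.F_mul_right (M.mem_F_of_odd h1) _)
    (M.F_mul_left _ (M.mem_F_of_odd h1))

instance : M.cobIdeal.IsTwoSided where
  mul_mem_of_left := by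
    intro a b ha
    have := Ideal.add_mem _ (M.F_le_cob (M.comm_cob a b)) (M.cobIdeal.mul_mem_left b ha)
    rwa [sub_add_cancel] at this

/-- If each generator is nilpotent up to coboundaries modulo the previous generators, then each
even generator is nilpotent up to coboundaries modulo the odd generators. -/
theorem exists_common_pow (hB : ∀ j : Fin n, ∃ (N : ℕ) (b : A), M.v j ^ N - M.d b ∈ M.Id j) :
    ∃ N : ℕ, ∀ j : Fin n, ∃ w ∈ M.F 1, M.v j ^ N - M.d w ∈ M.F 1 := by
  let π := Ideal.Quotient.mk M.cobIdeal
  have hπ : ∀ {x}, π x = 0 ↔ x ∈ M.cobIdeal := Ideal.Quotient.eq_zero_iff_mem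
  have hcomm : ∀ a b : A, Commute (π a) (π b) := by
    intro a b
    have := hπ.2 (M.F_le_cob (M.comm_cob a b))
    rw [map_sub, map_mul, map_mul] at this
    exact sub_eq_zero.1 this
  let S : Submodule ℚ A :=
    { carrier := {x | IsNilpotent (π x)}
      zero_mem' := by simp
      add_mem' := fun {a b} ha hb => by
        change IsNilpotent (π (a + b))
        rw [map_add]
        exact (hcomm a b).isNilpotent_add ha hb
      smul_mem' := fun c a ha => by
        change IsNilpotent (π (c • a))
        rw [Algebra.smul_def, map_mul]
        exact (hcomm _ _).isNilpotent_mul_left ha }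
  have hS : ∀ {x}, x ∈ S ↔ IsNilpotent (π x) := Iff.rfl
  have hnil : ∀ k : ℕ, ∀ j : Fin n, (j : ℕ) < k → IsNilpotent (π (M.v j)) := by
    intro k
    induction k with
    | zero => intro j hj; omega
    | succ k ih =>
      intro j hj
      obtain ⟨N, b, hb⟩ := hB j
      have h1 : M.Id j ≤ S := by
        refine M.Sp_le ?_
        rintro m ⟨i, hi, hij⟩
        obtain ⟨m', rfl⟩ := Multiset.exists_cons_of_mem hi
        have h2 : M.v i * M.mono m' ∈ S := by
          rw [hS, map_mul]
          exact (hcomm _ _).isNilpotent_mul_right (ih i (by omega))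
        obtain ⟨e, he⟩ := M.mono_mul {i} m'
        rw [M.mono_singleton, Multiset.singleton_add] at he
        rw [he] at h2
        have h3 := S.smul_mem (((e : ℤ) : ℚ)) h2
        rcases Int.units_eq_one_or e with rfl | rfl <;> simpa using h3
      have h2 : IsNilpotent (π (M.v j ^ N)) := by
        have h3 := hS.1 (h1 hb)
        have h4 : π (M.d b) = 0 := hπ.2 ⟨b, by simp⟩
        rwa [map_sub, h4, sub_zero] at h3
      rw [map_pow] at h2
      obtain ⟨r, hr⟩ := h2
      exact ⟨N * r, by rw [pow_mul, hr]⟩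
  have hex : ∀ j : Fin n, ∃ N : ℕ, M.v j ^ N ∈ M.cobIdeal := by
    intro j
    obtain ⟨N, hN⟩ := hnil n j j.2
    exact ⟨N, hπ.1 (by rw [map_pow]; exact hN)⟩
  choose f hf using hex
  refine ⟨∑ j, f j, fun j => ?_⟩
  have h1 : M.v j ^ (∑ j, f j) ∈ M.cobIdeal := by
    have h2 : f j ≤ ∑ j, f j := Finset.single_le_sum (fun _ _ => Nat.zero_le _) (Finset.mem_univ j)
    rw [← Nat.sub_add_cancel h2, pow_add]
    exact M.cobIdeal.mul_mem_left _ (hf j)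
  obtain ⟨w, hw⟩ := h1
  obtain ⟨w0, h0, w1, h1, rfl⟩ := M.exists_parity w
  refine ⟨w1, M.mem_F_of_odd h1, ?_⟩
  have := Submodule.add_mem _ hw (M.d_even h0)
  rw [map_add] at this
  convert this using 1
  abel

/-- A monomial is divisible by the `N`-th power of a generator from `s`. -/
noncomputable def Pw (N : ℕ) (s : Finset (Fin n)) : Multiset (Fin n) → Prop :=
  fun m => ∃ a ∈ s, N ≤ m.count a

theorem mono_replicate (N : ℕ) (a : Fin n) : M.mono (Multiset.replicate N a) = M.v a ^ N := by
  have h : (Multiset.replicate N a).toList = List.replicate N a :=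
    List.eq_replicate_iff.2 ⟨by simp, fun b hb => by
      rw [Multiset.mem_toList] at hb; exact Multiset.eq_of_mem_replicate hb⟩
  rw [MonoBasis.mono, h]; simp

theorem oc_replicate (N : ℕ) {a : Fin n} (ha : M.deg a % 2 = 0) :
    M.oc (Multiset.replicate N a) = 0 := by
  simp [oc, ha]

/-- Modulo the `N`-th powers of the even generators in `s`, an element of `F i` with `i > |s|` whose
differential vanishes to leading order is a coboundary to leading order, as in a Koszul complex.
The proof is by descending induction on `s`: for `s` the set of all even generators, `F i` is zero.
If `v_a ^ N` is `d w` modulo `F 1`, then `w z` is an element of `F (i + 1)` to which the statement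
for `s ∪ {a}` applies. -/
theorem koszul {N : ℕ} (hN : ∀ j : Fin n, ∃ w ∈ M.F 1, M.v j ^ N - M.d w ∈ M.F 1)
    {ev : Finset (Fin n)} (hev : ∀ a, a ∈ ev → M.deg a % 2 = 0)
    (hoc : ∀ m, M.Valid m → M.oc m ≤ ev.card) :
    ∀ s ⊆ ev, ∀ (i : ℕ) (z : A), s.card < i → z ∈ M.F i →
      M.d z ∈ M.Sp (fun m => Pw N s m ∨ i ≤ M.oc m) →
      ∃ t ∈ M.F (i + 1), z - M.d t ∈ M.Sp (fun m => Pw N s m ∨ i + 1 ≤ M.oc m) := by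
  have hbase : ∀ (i : ℕ) (z : A), ev.card < i → z ∈ M.F i → z = 0 := by
    intro i z hi hz
    have h0 : z ∈ M.Sp (fun _ => False) := by
      rw [M.mem_Sp]
      intro m hm
      have h1 := M.mem_Sp.1 hz m hm
      have h2 := hoc m.1 m.2
      omega
    rw [M.Sp_false] at h0
    simpa using h0
  have main : ∀ k : ℕ, ∀ s ⊆ ev, ev.card = s.card + k → ∀ (i : ℕ) (z : A), s.card < i → z ∈ M.F i →
      M.d z ∈ M.Sp (fun m => Pw N s m ∨ i ≤ M.oc m) →
      ∃ t ∈ M.F (i + 1), z - M.d t ∈ M.Sp (fun m => Pw N s m ∨ i + 1 ≤ M.oc m) := by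
    intro k
    induction k with
    | zero =>
      intro s _ hk i z hi hz _
      have h0 := hbase i z (by omega) hz
      subst h0
      exact ⟨0, Submodule.zero_mem _, by simp⟩
    | succ k ih =>
      intro s hs hk i z hi hz hdz
      obtain ⟨a, ha, has⟩ := Finset.exists_of_ssubset
        (Finset.ssubset_iff_subset_ne.2 ⟨hs, by rintro rfl; omega⟩)
      obtain ⟨w, hw, hdw⟩ := hN a
      have hins : (insert a s).card = s.card + 1 := Finset.card_insert_of_notMem has
      have hva : M.v a ^ N ∈ M.Sp (fun m => N ≤ m.count a ∧ M.oc m = 0) := by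
        rw [← M.mono_replicate]
        exact M.mono_mem ⟨by simp, M.oc_replicate N (hev a ha)⟩
      have hdwz : M.d w * z - M.v a ^ N * z ∈ M.F (i + 1) := by
        have := Submodule.neg_mem _ (M.F_mul hdw hz)
        rw [← neg_mul, neg_sub, sub_mul, add_comm] at this
        exact this
      have hσw : M.σ w * M.d z ∈ M.Sp (fun m => Pw N s m ∨ i + 1 ≤ M.oc m) := by
        refine M.mul_mem ?_ (M.σ_mem hw) hdz
        rintro m m' h (⟨b, hb, h'⟩ | h')
        · exact Or.inl ⟨b, hb, by simp; omega⟩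
        · right; simp; omega
      have hd : M.d (w * z) - M.v a ^ N * z ∈ M.Sp (fun m => Pw N s m ∨ i + 1 ≤ M.oc m) := by
        rw [M.leib, add_sub_right_comm]
        exact Submodule.add_mem _ (M.Sp_mono (fun m hm => Or.inr hm) hdwz) hσw
      have hwz : w * z ∈ M.F (i + 1) := by
        have := M.F_mul hw hz
        rwa [add_comm] at this
      obtain ⟨t, ht, hzt⟩ := ih (insert a s) (Finset.insert_subset ha hs) (by omega) (i + 1) (w * z)
        (by omega) hwz (by
          have h1 : M.v a ^ N * z ∈ M.Sp (fun m => Pw N (insert a s) m ∨ i + 1 ≤ M.oc m) :=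
            M.mul_mem (fun m m' h _ => Or.inl ⟨a, by simp, by have := h.1; simp; omega⟩) hva
              (M.mem_top z)
          have h2 : M.Sp (fun m => Pw N s m ∨ i + 1 ≤ M.oc m) ≤
              M.Sp (fun m => Pw N (insert a s) m ∨ i + 1 ≤ M.oc m) :=
            M.Sp_mono fun m hm => hm.imp_left fun ⟨b, hb, h⟩ => ⟨b, by simp [hb], h⟩
          have := Submodule.add_mem _ (h2 hd) h1
          rwa [sub_add_cancel] at this)
      -- split the remainder into multiples of `v a ^ N` and the rest
      have hr : w * z - M.d t ∈ M.Sp (fun m => (N ≤ m.count a ∧ i + 1 ≤ M.oc m) ∨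
          ((Pw N s m ∨ i + 1 + 1 ≤ M.oc m) ∧ i + 1 ≤ M.oc m)) := by
        have h1 : w * z - M.d t ∈ M.F (i + 1) := Submodule.sub_mem _ hwz (M.d_F ht)
        have h2 := Submodule.mem_inf.2 ⟨hzt, h1⟩
        rw [F, ← M.Sp_and] at h2
        refine M.Sp_mono ?_ h2
        rintro m ⟨⟨b, hb, hbm⟩ | h, h'⟩
        · rcases Finset.mem_insert.1 hb with rfl | hb
          · exact Or.inl ⟨hbm, h'⟩
          · exact Or.inr ⟨Or.inl ⟨b, hb, hbm⟩, h'⟩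
        · exact Or.inr ⟨Or.inr h, h'⟩
      rw [M.Sp_or] at hr
      obtain ⟨g, hg, r, hr, hgr⟩ := Submodule.mem_sup.1 hr
      have hg' : ∃ u ∈ M.F (i + 1), M.v a ^ N * u = g := by
        have : g ∈ (M.F (i + 1)).map (LinearMap.mulLeft ℚ (M.v a ^ N)) := by
          refine M.Sp_le ?_ hg
          rintro m ⟨hm, hm'⟩
          obtain ⟨m', rfl⟩ := Multiset.le_iff_exists_add.1 (Multiset.le_count_iff_replicate_le.1 hm)
          obtain ⟨e, he⟩ := M.mono_mul (Multiset.replicate N a) m'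
          refine ⟨((e : ℤ) : ℚ) • M.mono m', Submodule.smul_mem _ _ (M.mono_mem ?_), ?_⟩
          · rw [M.oc_add, M.oc_replicate N (hev a ha), zero_add] at hm'; exact hm'
          · rw [LinearMap.mulLeft_apply, mul_smul_comm, ← M.mono_replicate, he, smul_smul]
            rcases Int.units_eq_one_or e with rfl | rfl <;> simp
        obtain ⟨u, hu, rfl⟩ := this
        exact ⟨u, hu, rfl⟩
      obtain ⟨u, hu, rfl⟩ := hg'
      refine ⟨u, hu, ?_⟩
      have hdr : M.d r ∈ M.Sp (fun m => Pw N s m ∨ i + 1 ≤ M.oc m) := by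
        refine M.d_mem ?_ hr
        rintro j m0 ⟨h1, h2⟩ m' hm'
        have h3 := M.oc_cons j m0
        rcases h1 with ⟨b, hb, hbm⟩ | h1
        · by_cases hbj : b = j
          · subst hbj
            right
            have := hev b (hs hb)
            simp; omega
          · left
            refine ⟨b, hb, ?_⟩
            rw [Multiset.count_cons_of_ne hbj] at hbm
            simp; omega
        · right; simp; omega
      have hdva : M.d (M.v a ^ N) ∈ M.F 1 := by
        refine M.d_mem ?_ hva
        rintro j m0 ⟨h1, h2⟩ m' hm'
        have h3 := M.oc_cons j m0
        have := hm'.oc_even (by omega)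
        simp; omega
      have hσva : M.σ (M.v a ^ N) = M.v a ^ N :=
        M.σ_even (M.Sp_mono (fun m hm => by
          have := M.oc_mod m
          rw [Nat.even_iff]; omega) hva)
      have hfin : M.v a ^ N * (z - M.d u) ∈ M.Sp (fun m => Pw N s m ∨ i + 1 ≤ M.oc m) := by
        have h1 : M.d (w * z) = M.d (M.v a ^ N) * u + M.v a ^ N * M.d u + M.d r := by
          have := congrArg M.d hgr
          rw [map_add, map_sub, M.d_sq, sub_zero, M.leib, hσva] at this
          exact this.symm
        have h2 : M.d (M.v a ^ N) * u ∈ M.Sp (fun m => Pw N s m ∨ i + 1 ≤ M.oc m) :=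
          M.Sp_mono (fun m hm => Or.inr hm) (M.F_mul_left _ hu)
        have := Submodule.sub_mem _ (Submodule.add_mem _ h2 hdr) hd
        rw [h1] at this
        convert this using 1
        rw [mul_sub]; abel
      rw [← M.mono_replicate] at hfin
      refine M.cancel _ hfin ?_
      intro m hm h
      rcases h (by
        intro j hj
        have : j ≠ a := by
          rintro rfl
          have := hev j ha
          rw [Nat.odd_iff] at hj
          omega
        rw [Multiset.count_add, Multiset.count_replicate, if_neg (Ne.symm this), zero_add]
        exact hm j hj) with ⟨b, hb, hbm⟩ | h'
      · left
        have : a ≠ b := by rintro rfl; exact has hb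
        refine ⟨b, hb, ?_⟩
        rwa [Multiset.count_add, Multiset.count_replicate, if_neg this, zero_add] at hbm
      · right
        rwa [M.oc_add, M.oc_replicate N (hev a ha), zero_add] at h'
  intro s hs
  exact main (ev.card - s.card) s hs (by have := Finset.card_le_card hs; omega)

/-- Cocycles of filtration `1` are coboundaries of elements of filtration `2`. -/
theorem exact_of_F {N : ℕ} (hN : ∀ j : Fin n, ∃ w ∈ M.F 1, M.v j ^ N - M.d w ∈ M.F 1)
    {ev : Finset (Fin n)} (hev : ∀ a, a ∈ ev → M.deg a % 2 = 0)
    (hoc : ∀ m, M.Valid m → M.oc m ≤ ev.card) {z : A} (hz : z ∈ M.F 1) (hd : M.d z = 0) :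
    ∃ t ∈ M.F 2, M.d t = z := by
  have key : ∀ k i : ℕ, 1 ≤ i → ev.card + 1 ≤ i + k → ∀ z ∈ M.F i, M.d z = 0 →
      ∃ t ∈ M.F (i + 1), M.d t = z := by
    intro k
    induction k with
    | zero =>
      intro i _ hi z hz _
      have h0 : z ∈ M.Sp (fun _ => False) := by
        rw [M.mem_Sp]
        intro m hm
        have h1 := M.mem_Sp.1 hz m hm
        have h2 := hoc m.1 m.2
        omega
      rw [M.Sp_false] at h0
      refine ⟨0, Submodule.zero_mem _, ?_⟩
      rw [map_zero]
      exact (by simpa using h0 : z = 0).symm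
    | succ k ih =>
      intro i hi1 hi z hz hd
      obtain ⟨t, ht, hzt⟩ := M.koszul hN hev hoc ∅ (by simp) i z (by simp; omega) hz
        (by rw [hd]; exact Submodule.zero_mem _)
      have hzt' : z - M.d t ∈ M.F (i + 1) := M.Sp_mono (fun m hm => by
        rcases hm with ⟨b, hb, _⟩ | h
        · simp at hb
        · exact h) hzt
      obtain ⟨t', ht', hd'⟩ := ih (i + 1) (by omega) (by omega) _ hzt'
        (by rw [map_sub, hd, M.d_sq, sub_zero])
      refine ⟨t + t', Submodule.add_mem _ ht (M.F_mono (by omega) ht'), ?_⟩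
      rw [map_add, hd']; abel
  exact key ev.card 1 le_rfl (by omega) z hz hd

/-- Generators of positive lower degree have odd degree. -/
theorem odd_of_low {N : ℕ} (hN : ∀ j : Fin n, ∃ w ∈ M.F 1, M.v j ^ N - M.d w ∈ M.F 1)
    {ev : Finset (Fin n)} (hev : ∀ a, a ∈ ev → M.deg a % 2 = 0)
    (hoc : ∀ m, M.Valid m → M.oc m ≤ ev.card)
    (hac : ∀ k, ∀ x ∈ M.Sp (fun m => M.lw m = k + 1), M.d x = 0 → ∃ y, M.d y = x)
    (j : Fin n) (hj : 1 ≤ M.low j) : Odd (M.deg j) := by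
  by_contra hodd
  rw [Nat.not_odd_iff_even] at hodd
  have hvE : M.v j ∈ M.Sp (fun m => Even (M.dg m)) := M.v_mem (by simpa using hodd)
  obtain ⟨u, hu, hdu⟩ := M.exact_of_F hN hev hoc (M.d_even hvE) (M.d_sq _)
  -- only the component of `u` of the same lower degree as the generator matters
  have hu' : u ∈ M.Sp (fun m => (M.lw m = M.low j ∧ 2 ≤ M.oc m) ∨ M.lw m ≠ M.low j) :=
    M.Sp_mono (fun m hm => by
      by_cases h : M.lw m = M.low j
      · exact Or.inl ⟨h, hm⟩
      · exact Or.inr h) hu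
  rw [M.Sp_or] at hu'
  obtain ⟨u1, h1, u2, h2, rfl⟩ := Submodule.mem_sup.1 hu'
  have hc1 : M.v j - u1 ∈ M.Sp (fun m => M.lw m = (M.low j - 1) + 1) :=
    Submodule.sub_mem _ (M.v_mem (by simp; omega)) (M.Sp_mono (fun m hm => by
      have := hm.1; omega) h1)
  have hc2 : M.d (M.v j - u1) ∈ M.Sp (fun m => M.lw m + 1 = M.low j) :=
    M.d_mem (fun i m0 h m' hm' => by
      have := hm'.2.2
      simp at h ⊢; omega) hc1
  have hc3 : M.d u2 ∈ M.Sp (fun m => M.lw m + 1 ≠ M.low j) :=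
    M.d_mem (fun i m0 h m' hm' => by
      have := hm'.2.2
      simp at h ⊢; omega) h2
  have heq : M.d (M.v j - u1) = M.d u2 := by
    rw [map_sub, ← hdu, map_add]; abel
  have h0 : M.d (M.v j - u1) ∈ M.Sp (fun _ => False) := by
    have := Submodule.mem_inf.2 ⟨hc2, heq ▸ hc3⟩
    rw [← M.Sp_and] at this
    exact M.Sp_mono (fun m hm => hm.2 hm.1) this
  rw [M.Sp_false] at h0
  obtain ⟨y, hy⟩ := hac _ _ hc1 (by simpa using h0)
  have h3 : M.d y ∈ M.Sp (fun m => 2 ≤ m.card) :=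
    M.d_mem (fun i m0 _ m' hm' => by have := hm'.1; simp; omega) (M.mem_top y)
  have h4 : M.v j ∈ M.Sp (fun m => 2 ≤ m.card) := by
    have := Submodule.add_mem _ (hy ▸ h3) (M.Sp_mono (fun m hm => by
      have := hm.2
      exact le_trans this (M.oc_le_card m)) h1)
    rwa [sub_add_cancel] at this
  rw [← M.mono_singleton, M.mono_mem_iff] at h4
  · simp at h4
  · intro i _
    exact (Multiset.count_le_card _ _).trans (by simp)

end Setup
end RHT

namespace RHT

/-! ### Counting generators -/

section Counting

open PowerSeries

variable {n : ℕ} (wt : Fin n → ℕ) (od : Fin n → Prop)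

theorem card_le_sum (hwt : ∀ i, 1 ≤ wt i) (m : Multiset (Fin n)) : m.card ≤ (m.map wt).sum := by
  induction m using Multiset.induction_on with
  | empty => simp
  | cons i m ih => have := hwt i; simp; omega

open Classical in
/-- The monomials of weight `w` in the generators from `s`, where the generators satisfying `od`
have multiplicity at most one. -/
noncomputable def mset (s : Finset (Fin n)) (w : ℕ) : Finset (Multiset (Fin n)) :=
  (Multiset.powerset (w • (Finset.univ : Finset (Fin n)).val)).toFinset.filter
    fun m => (∀ i ∈ m, i ∈ s) ∧ (∀ i, od i → m.count i ≤ 1) ∧ (m.map wt).sum = w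

theorem mem_mset (hwt : ∀ i, 1 ≤ wt i) {s : Finset (Fin n)} {w : ℕ} {m : Multiset (Fin n)} :
    m ∈ mset wt od s w ↔
      (∀ i ∈ m, i ∈ s) ∧ (∀ i, od i → m.count i ≤ 1) ∧ (m.map wt).sum = w := by
  classical
  rw [mset, Finset.mem_filter, and_iff_right_iff_imp]
  rintro ⟨_, _, h⟩
  rw [Multiset.mem_toFinset, Multiset.mem_powerset, Multiset.le_iff_count]
  intro i
  have h1 := card_le_sum wt hwt m
  have h2 := Multiset.count_le_card i m
  rw [Multiset.count_nsmul, Multiset.count_eq_one_of_mem (Finset.nodup _) (Finset.mem_univ_val i)]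
  omega

open Classical in
/-- The sign of a monomial. -/
noncomputable def msgn (m : Multiset (Fin n)) : ℤ := (m.map fun i => if od i then -1 else 1).prod

/-- The signed generating function of the monomials, by weight. -/
noncomputable def gf (s : Finset (Fin n)) : PowerSeries ℤ :=
  PowerSeries.mk fun w => ∑ m ∈ mset wt od s w, msgn od m

theorem gf_empty (hwt : ∀ i, 1 ≤ wt i) : gf wt od ∅ = 1 := by
  ext w
  rw [gf, coeff_mk, coeff_one]
  have : ∀ m, m ∈ mset wt od ∅ w ↔ m = 0 ∧ w = 0 := by
    intro m
    rw [mem_mset wt od hwt]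
    constructor
    · rintro ⟨h, -, h'⟩
      have : m = 0 := Multiset.eq_zero_of_forall_notMem fun i hi => by simpa using h i hi
      subst this
      exact ⟨rfl, by simpa using h'.symm⟩
    · rintro ⟨rfl, rfl⟩
      simp
  split_ifs with h
  · subst h
    rw [Finset.sum_eq_single_of_mem 0 ((this 0).2 ⟨rfl, rfl⟩)]
    · simp [msgn]
    · intro m hm h
      exact absurd ((this m).1 hm).1 h
  · exact Finset.sum_eq_zero fun m hm => absurd ((this m).1 hm).2 h

/-- Splitting off the monomials divisible by a generator. -/
theorem sum_insert (hwt : ∀ i, 1 ≤ wt i) {s s' : Finset (Fin n)} {i : Fin n} (hi : i ∉ s)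
    (hs' : ∀ m : Multiset (Fin n), (∀ j ∈ m, j ∈ s') ↔ (∀ j ∈ m, j ∈ insert i s) ∧ (od i → i ∉ m))
    (w : ℕ) : ∑ m ∈ mset wt od (insert i s) w, msgn od m = ∑ m ∈ mset wt od s w, msgn od m +
      msgn od {i} * (if wt i ≤ w then ∑ m ∈ mset wt od s' (w - wt i), msgn od m else 0) := by
  classical
  rw [← Finset.sum_filter_not_add_sum_filter _ (fun m => i ∈ m)]
  congr 1
  · refine Finset.sum_congr ?_ fun _ _ => rfl
    ext m
    rw [Finset.mem_filter, mem_mset wt od hwt, mem_mset wt od hwt]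
    constructor
    · rintro ⟨⟨h1, h2⟩, h3⟩
      refine ⟨fun j hj => ?_, h2⟩
      rcases Finset.mem_insert.1 (h1 j hj) with rfl | h
      · exact absurd hj h3
      · exact h
    · rintro ⟨h1, h2⟩
      exact ⟨⟨fun j hj => Finset.mem_insert_of_mem (h1 j hj), h2⟩, fun h => hi (h1 i h)⟩
  · split_ifs with hw
    · rw [Finset.mul_sum]
      refine Finset.sum_bij' (fun m _ => m.erase i) (fun m _ => i ::ₘ m) ?_ ?_ ?_ ?_ ?_
      · intro m hm
        rw [Finset.mem_filter, mem_mset wt od hwt] at hm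
        obtain ⟨⟨h1, h2, h3⟩, h4⟩ := hm
        obtain ⟨m, rfl⟩ := Multiset.exists_cons_of_mem h4
        rw [Multiset.erase_cons_head, mem_mset wt od hwt, hs']
        refine ⟨⟨fun j hj => h1 j (by simp [hj]), fun h => ?_⟩, fun j hj => ?_, ?_⟩
        · have := h2 i h
          rw [Multiset.count_cons_self] at this
          exact Multiset.count_eq_zero.1 (by omega)
        · exact (Multiset.count_le_count_cons _ _ _).trans (h2 j hj)
        · simp at h3; omega
      · intro m hm
        rw [mem_mset wt od hwt, hs'] at hm
        obtain ⟨⟨h1, h2⟩, h3, h4⟩ := hm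
        rw [Finset.mem_filter, mem_mset wt od hwt]
        refine ⟨⟨fun j hj => ?_, fun j hj => ?_, ?_⟩, by simp⟩
        · rcases Multiset.mem_cons.1 hj with rfl | h
          · simp
          · exact h1 j h
        · by_cases hji : j = i
          · subst hji
            rw [Multiset.count_cons_self, Multiset.count_eq_zero.2 (h2 hj)]
          · rw [Multiset.count_cons_of_ne hji]; exact h3 j hj
        · simp; omega
      · intro m hm
        rw [Finset.mem_filter] at hm
        exact Multiset.cons_erase hm.2
      · intro m hm
        simp
      · intro m hm
        rw [Finset.mem_filter] at hm
        obtain ⟨m, rfl⟩ := Multiset.exists_cons_of_mem hm.2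
        simp [msgn]
    · rw [mul_zero]
      refine Finset.sum_eq_zero fun m hm => ?_
      exfalso
      rw [Finset.mem_filter, mem_mset wt od hwt] at hm
      obtain ⟨⟨h1, h2, h3⟩, h4⟩ := hm
      obtain ⟨m, rfl⟩ := Multiset.exists_cons_of_mem h4
      simp at h3; omega

open Classical in
theorem gf_mul (hwt : ∀ i, 1 ≤ wt i) (s : Finset (Fin n)) :
    gf wt od s * ∏ i ∈ s.filter (fun i => ¬ od i), (1 - X ^ wt i) =
      ∏ i ∈ s.filter (fun i => od i), (1 - X ^ wt i) := by
  induction s using Finset.induction_on with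
  | empty => simp [gf_empty wt od hwt]
  | insert i s hi ih =>
    by_cases h : od i
    · have h1 : gf wt od (insert i s) = gf wt od s * (1 - X ^ wt i) := by
        ext w
        rw [mul_sub, mul_one, map_sub, PowerSeries.coeff_mul_X_pow', gf, coeff_mk,
          sum_insert wt od hwt hi (s' := s), gf, coeff_mk, coeff_mk, msgn]
        · simp only [Multiset.map_singleton, if_pos h, Multiset.prod_singleton]
          split_ifs <;> ring
        · intro m
          constructor
          · intro hm
            exact ⟨fun j hj => Finset.mem_insert_of_mem (hm j hj), fun _ hh => hi (hm i hh)⟩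
          · rintro ⟨h1, h2⟩ j hj
            rcases Finset.mem_insert.1 (h1 j hj) with rfl | h3
            · exact absurd hj (h2 h)
            · exact h3
      rw [Finset.filter_insert, if_neg (not_not.2 h), Finset.filter_insert, if_pos h,
        Finset.prod_insert (by simp [hi]), h1, ← ih]
      ring
    · have h1 : gf wt od (insert i s) * (1 - X ^ wt i) = gf wt od s := by
        rw [mul_sub, mul_one, sub_eq_iff_eq_add]
        ext w
        rw [map_add, PowerSeries.coeff_mul_X_pow', gf, coeff_mk,
          sum_insert wt od hwt hi (s' := insert i s), gf, coeff_mk, coeff_mk, msgn]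
        · simp [h]
        · intro m
          simp [h]
      rw [Finset.filter_insert, if_pos h, Finset.filter_insert, if_neg h,
        Finset.prod_insert (by simp [hi]), ← mul_assoc, h1, ih]

open Classical in
/-- If the generating function is a polynomial not vanishing at `1`, there are at most as many odd
as even generators: the generating function is the quotient of the products of `1 - t ^ wt i` over
the odd and over the even generators, so that otherwise it vanishes at `1`. -/
theorem card_le_of_gf (hwt : ∀ i, 1 ≤ wt i) (p : Polynomial ℤ) (hp : p.eval 1 ≠ 0)
    (h : gf wt od Finset.univ = (p : PowerSeries ℤ)) :
    (Finset.univ.filter fun i => od i).card ≤ (Finset.univ.filter fun i => ¬ od i).card := by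
  have h1 := gf_mul wt od hwt Finset.univ
  rw [h] at h1
  have h2 : p * ∏ i ∈ Finset.univ.filter (fun i => ¬ od i), (1 - Polynomial.X ^ wt i) =
      ∏ i ∈ Finset.univ.filter (fun i => od i), (1 - Polynomial.X ^ wt i) := by
    apply Polynomial.coe_injective (R := ℤ)
    have hc : ∀ s : Finset (Fin n), ((∏ i ∈ s, (1 - Polynomial.X ^ wt i) : Polynomial ℤ) :
        PowerSeries ℤ) = ∏ i ∈ s, (1 - X ^ wt i) := by
      intro s
      rw [← Polynomial.coeToPowerSeries.ringHom_apply, map_prod]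
      simp
    rw [Polynomial.coe_mul, hc, hc, h1]
  -- each factor is `(1 - X)` times a polynomial not vanishing at `1`
  have hfac : ∀ s : Finset (Fin n), ∃ r : Polynomial ℤ, r.eval 1 ≠ 0 ∧
      ∏ i ∈ s, (1 - Polynomial.X ^ wt i) = r * (Polynomial.X - Polynomial.C 1) ^ s.card := by
    intro s
    refine ⟨∏ i ∈ s, -(∑ k ∈ Finset.range (wt i), Polynomial.X ^ k), ?_, ?_⟩
    · rw [Polynomial.eval_prod, Finset.prod_ne_zero_iff]
      intro i _
      have := hwt i
      simp [Polynomial.eval_finsetSum]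
      omega
    · rw [← Finset.prod_const, ← Finset.prod_mul_distrib]
      refine Finset.prod_congr rfl fun i _ => ?_
      have := geom_sum_mul (Polynomial.X : Polynomial ℤ) (wt i)
      rw [map_one, neg_mul, this]; ring
  obtain ⟨r, hr, hre⟩ := hfac (Finset.univ.filter fun i => ¬ od i)
  obtain ⟨r', hr', hre'⟩ := hfac (Finset.univ.filter fun i => od i)
  rw [hre, hre', ← mul_assoc] at h2
  have hpr : p * r ≠ 0 := by
    intro h0
    have := congrArg (Polynomial.eval 1) h0
    simp at this
    exact this.elim hp hr
  by_contra! hlt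
  have h3 : (Polynomial.X - Polynomial.C (1 : ℤ)) ^ ((Finset.univ.filter fun i => ¬ od i).card) ≠ 0 :=
    pow_ne_zero _ (Polynomial.X_sub_C_ne_zero 1)
  obtain ⟨k, hk⟩ := Nat.exists_eq_add_of_lt hlt
  rw [hk, add_assoc, add_comm, pow_add, ← mul_assoc] at h2
  have h4 := mul_right_cancel₀ h3 h2
  have := congrArg (Polynomial.eval 1) h4
  simp at this
  exact this.elim hp hr

end Counting
end RHT

namespace RHT

/-! ### The Euler characteristic -/

theorem MonoBasis.finrank_Sp {A : Type} [Ring A] [Algebra ℚ A] {n : ℕ} (M : MonoBasis A n)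
    {p : Multiset (Fin n) → Prop} (s : Finset (Multiset (Fin n)))
    (hs : ∀ m, m ∈ s ↔ M.Valid m ∧ p m) :
    FiniteDimensional ℚ (M.Sp p) ∧ Module.finrank ℚ (M.Sp p) = s.card := by
  have h : M.Sp p = Submodule.span ℚ (Set.range fun m : s => M.mono m.1) := by
    apply le_antisymm
    · refine M.Sp_le fun m hm => ?_
      by_cases hv : M.Valid m
      · exact Submodule.subset_span ⟨⟨m, (hs m).2 ⟨hv, hm⟩⟩, rfl⟩
      · rw [M.mono_invalid hv]; exact Submodule.zero_mem _
    · rw [Submodule.span_le]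
      rintro _ ⟨m, rfl⟩
      exact M.mono_mem ((hs m.1).1 m.2).2
  have hli : LinearIndependent ℚ (fun m : s => M.mono m.1) := by
    have := M.bas.linearIndependent.comp
      (fun m : s => (⟨m.1, ((hs m.1).1 m.2).1⟩ : {m // M.Valid m}))
      (fun a b hab => Subtype.ext (congrArg (fun x => x.1) hab))
    convert this using 1
    funext m
    simp [M.bas_apply]
  rw [h]
  exact ⟨FiniteDimensional.span_of_finite ℚ (Set.finite_range _),
    by rw [finrank_span_eq_card hli, Fintype.card_coe]⟩

namespace Setup

variable {A : Type} [Ring A] [Algebra ℚ A] {n : ℕ} (M : Setup A n)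

/-- If the differential turns the condition `p` into `q`, then a coboundary satisfying `q` is the
differential of an element satisfying `p`. -/
theorem exists_of_d {p q : Multiset (Fin n) → Prop}
    (hpq : ∀ m m', M.lw m' + 1 = M.lw m → M.dg m' = M.dg m + 1 → (q m' ↔ p m)) {x : A}
    (hx : x ∈ M.Sp q) (hy : ∃ y, M.d y = x) : ∃ y ∈ M.Sp p, M.d y = x := by
  obtain ⟨y, rfl⟩ := hy
  have h : y ∈ M.Sp (fun m => p m ∨ ¬ p m) := M.Sp_mono (fun m _ => em _) (M.mem_top y)
  rw [M.Sp_or] at h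
  obtain ⟨y1, h1, y2, h2, rfl⟩ := Submodule.mem_sup.1 h
  have h3 : M.d y1 ∈ M.Sp q := M.d_mem (fun i m0 h m' hm' => (hpq (i ::ₘ m0) _
    (by have := hm'.2.2; simp; omega) (by have := hm'.2.1; simp; omega)).2 h) h1
  have h4 : M.d y2 ∈ M.Sp (fun m => ¬ q m) := M.d_mem (fun i m0 h m' hm' => fun h' => h
    ((hpq (i ::ₘ m0) _ (by have := hm'.2.2; simp; omega)
      (by have := hm'.2.1; simp; omega)).1 h')) h2
  have h5 : M.d y2 ∈ M.Sp q := by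
    have := Submodule.sub_mem _ hx h3
    rwa [map_add, add_sub_cancel_left] at this
  have h6 := Submodule.mem_inf.2 ⟨h5, h4⟩
  rw [← M.Sp_and] at h6
  have h7 : M.d y2 ∈ M.Sp (fun _ => False) := M.Sp_mono (fun m hm => hm.2 hm.1) h6
  rw [M.Sp_false] at h7
  refine ⟨y1, h1, ?_⟩
  rw [map_add, (by simpa using h7 : M.d y2 = 0), add_zero]

theorem exists_lw_le (a : A) : ∃ K, a ∈ M.Sp (fun m => M.lw m ≤ K) := by
  let S : Submodule ℚ A :=
    { carrier := {a | ∃ K, a ∈ M.Sp (fun m => M.lw m ≤ K)}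
      zero_mem' := ⟨0, Submodule.zero_mem _⟩
      add_mem' := by
        rintro a b ⟨K, hK⟩ ⟨L, hL⟩
        exact ⟨K + L, Submodule.add_mem _ (M.Sp_mono (fun m hm => by omega) hK)
          (M.Sp_mono (fun m hm => by omega) hL)⟩
      smul_mem' := by
        rintro c a ⟨K, hK⟩
        exact ⟨K, Submodule.smul_mem _ _ hK⟩ }
  exact M.Sp_le (S := S) (fun m _ => ⟨M.lw m, M.mono_mem le_rfl⟩) (M.mem_top a)

/-- An element splits into parts of lower degree zero and of positive lower degree. -/
theorem split_low {p : Multiset (Fin n) → Prop} {z : A} (hz : z ∈ M.Sp p) :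
    ∃ z0 ∈ M.Sp (fun m => M.lw m = 0 ∧ p m), ∃ z1 ∈ M.Sp (fun m => 1 ≤ M.lw m ∧ p m),
      z0 + z1 = z := by
  have h : z ∈ M.Sp (fun m => (M.lw m = 0 ∧ p m) ∨ (1 ≤ M.lw m ∧ p m)) :=
    M.Sp_mono (fun m hm => by
      rcases Nat.eq_zero_or_pos (M.lw m) with h | h
      · exact Or.inl ⟨h, hm⟩
      · exact Or.inr ⟨h, hm⟩) hz
  rw [M.Sp_or] at h
  exact Submodule.mem_sup.1 h

theorem d_low_zero {z : A} (hz : z ∈ M.Sp (fun m => M.lw m = 0)) : M.d z = 0 := by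
  have : M.d z ∈ M.Sp (fun _ => False) := M.d_mem (fun i m0 h m' hm' => by
    have := hm'.2.2
    simp at h; omega) hz
  rw [M.Sp_false] at this
  simpa using this

section Acyclic

variable (hac : ∀ k, ∀ x ∈ M.Sp (fun m => M.lw m = k + 1), M.d x = 0 → ∃ y, M.d y = x)

include hac

theorem exact_of_low {z : A} (hz : z ∈ M.Sp (fun m => 1 ≤ M.lw m)) (hd : M.d z = 0) :
    ∃ y, M.d y = z := by
  have key : ∀ K, ∀ z ∈ M.Sp (fun m => 1 ≤ M.lw m ∧ M.lw m ≤ K), M.d z = 0 → ∃ y, M.d y = z := by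
    intro K
    induction K with
    | zero =>
      intro z hz _
      have : z ∈ M.Sp (fun _ => False) := M.Sp_mono (fun m hm => by omega) hz
      rw [M.Sp_false] at this
      exact ⟨0, by rw [map_zero]; exact (by simpa using this : z = 0).symm⟩
    | succ K ih =>
      intro z hz hd
      have h : z ∈ M.Sp (fun m => (1 ≤ M.lw m ∧ M.lw m ≤ K) ∨ M.lw m = K + 1) :=
        M.Sp_mono (fun m hm => by omega) hz
      rw [M.Sp_or] at h
      obtain ⟨z1, h1, z2, h2, rfl⟩ := Submodule.mem_sup.1 h
      have h3 : M.d z1 ∈ M.Sp (fun m => M.lw m < K) := M.d_mem (fun i m0 h m' hm' => by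
        have := hm'.2.2
        simp at h ⊢; omega) h1
      have h4 : M.d z2 ∈ M.Sp (fun m => M.lw m = K) := M.d_mem (fun i m0 h m' hm' => by
        have := hm'.2.2
        simp at h ⊢; omega) h2
      rw [map_add] at hd
      have h5 : M.d z2 ∈ M.Sp (fun m => M.lw m < K) := by
        rw [eq_neg_of_add_eq_zero_right hd]; exact Submodule.neg_mem _ h3
      have h6 := Submodule.mem_inf.2 ⟨h5, h4⟩
      rw [← M.Sp_and] at h6
      have h7 : M.d z2 ∈ M.Sp (fun _ => False) := M.Sp_mono (fun m hm => by omega) h6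
      rw [M.Sp_false] at h7
      have h8 : M.d z2 = 0 := by simpa using h7
      obtain ⟨y1, rfl⟩ := ih z1 h1 (by rw [h8, add_zero] at hd; exact hd)
      obtain ⟨y2, rfl⟩ := hac _ _ h2 h8
      exact ⟨y1 + y2, map_add _ _ _⟩
  obtain ⟨K, hK⟩ := M.exists_lw_le z
  have := Submodule.mem_inf.2 ⟨hz, hK⟩
  rw [← M.Sp_and] at this
  exact key K z this hd

/-- Euler characteristics of the complexes of fixed total weight `dg + lw`, and comparison of the
generating functions. -/
theorem card_odd_le (h : ℕ → ℕ)
    (hh : ∀ w, h w + Module.finrank ℚ ((M.Sp (fun m => M.lw m = 1 ∧ M.dg m + M.lw m = w)).map M.d) =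
      Module.finrank ℚ (M.Sp (fun m => M.lw m = 0 ∧ M.dg m + M.lw m = w)))
    (N : ℕ) (hN : ∀ w, N ≤ w → h w = 0)
    (hchi : ∑ w ∈ Finset.range N, (-1 : ℤ) ^ w * (h w : ℤ) ≠ 0) :
    (Finset.univ.filter fun i => Odd (M.deg i)).card ≤
      (Finset.univ.filter fun i => ¬ Odd (M.deg i)).card := by
  classical
  set wt : Fin n → ℕ := fun i => M.deg i + M.low i with hwt_def
  set od : Fin n → Prop := fun i => Odd (M.deg i) with hod
  have hwt : ∀ i, 1 ≤ wt i := fun i => by have := M.deg_ge i; simp only [hwt_def]; omega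
  have hsum : ∀ m : Multiset (Fin n), (m.map wt).sum = M.dg m + M.lw m := fun m => by
    simp [hwt_def, dg, lw, Multiset.sum_map_add]
  have hsg : ∀ m : Multiset (Fin n), msgn od m = (-1) ^ M.dg m := by
    intro m
    induction m using Multiset.induction_on with
    | empty => simp [msgn]
    | cons i m ih =>
      rw [msgn] at ih ⊢
      rw [Multiset.map_cons, Multiset.prod_cons, ih, M.dg_cons, pow_add]
      congr 1
      split_ifs with h
      · exact h.neg_one_pow.symm
      · exact (Nat.not_odd_iff_even.1 h).neg_one_pow.symm
  have hmem : ∀ w m, m ∈ mset wt od Finset.univ w ↔ M.Valid m ∧ M.dg m + M.lw m = w := by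
    intro w m
    rw [mem_mset wt od hwt, hsum]
    simp [MonoBasis.Valid, hod]
  have hcoef : ∀ w, ∑ m ∈ mset wt od Finset.univ w, msgn od m = (-1) ^ w * (h w : ℤ) := by
    intro w
    let C : ℕ → Submodule ℚ A := fun k => M.Sp (fun m => M.lw m = k ∧ M.dg m + M.lw m = w)
    let r : ℕ → ℕ := fun k => Module.finrank ℚ ((C k).map M.d)
    let c : ℕ → ℕ := fun k => ((mset wt od Finset.univ w).filter fun m => M.lw m = k).card
    have hC : ∀ k, FiniteDimensional ℚ (C k) ∧ Module.finrank ℚ (C k) = c k := fun k =>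
      M.finrank_Sp _ (fun m => by rw [Finset.mem_filter, hmem]; tauto)
    have hc : ∀ k, c (k + 1) = r (k + 1) + r (k + 2) := by
      intro k
      have := (hC (k + 1)).1
      rw [← (hC (k + 1)).2, ← LinearMap.finrank_range_add_finrank_ker (M.d.domRestrict (C (k + 1))),
        LinearMap.range_domRestrict]
      congr 1
      rw [← Submodule.finrank_map_subtype_eq]
      suffices hE : (M.d.domRestrict (C (k + 1))).ker.map (C (k + 1)).subtype =
          (C (k + 2)).map M.d by rw [hE]
      ext x
      simp only [Submodule.mem_map, LinearMap.mem_ker, Subtype.exists, Submodule.coe_subtype,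
        exists_and_right, exists_eq_right, LinearMap.domRestrict_apply]
      constructor
      · rintro ⟨hx, hd⟩
        exact M.exists_of_d (fun m m' h h' => by omega) hx
          (hac k x (M.Sp_mono (fun m hm => hm.1) hx) hd)
      · rintro ⟨y, hy, rfl⟩
        refine ⟨M.d_mem (fun i m0 h m' hm' => ?_) hy, M.d_sq y⟩
        have h1 := hm'.2.1
        have h2 := hm'.2.2
        simp at h ⊢; omega
    have hc0 : h w + r 1 = c 0 := by
      rw [← (hC 0).2]; exact hh w
    have htel : ∀ K : ℕ, ∑ k ∈ Finset.range (K + 1), (-1 : ℤ) ^ k * (c k : ℤ) =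
        h w + (-1) ^ K * r (K + 1) := by
      intro K
      induction K with
      | zero => simp [← hc0]
      | succ K ih =>
        rw [Finset.sum_range_succ, ih, hc K, pow_succ]
        push_cast
        ring
    have hr : r (w + 1) = 0 := by
      have h0 : C (w + 1) = ⊥ := by
        rw [eq_bot_iff, ← M.Sp_false]
        exact M.Sp_mono fun m hm => by omega
      change Module.finrank ℚ ((C (w + 1)).map M.d) = 0
      rw [h0, Submodule.map_bot, finrank_bot]
    have hfib : ∑ m ∈ mset wt od Finset.univ w, msgn od m =
        ∑ k ∈ Finset.range (w + 1), (-1 : ℤ) ^ w * ((-1 : ℤ) ^ k * (c k : ℤ)) := by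
      rw [← Finset.sum_fiberwise_of_maps_to (t := Finset.range (w + 1)) (g := M.lw)]
      · refine Finset.sum_congr rfl fun k _ => ?_
        rw [Finset.sum_congr rfl (g := fun _ => (-1 : ℤ) ^ w * (-1) ^ k), Finset.sum_const,
          nsmul_eq_mul]
        · simp only [c]; ring
        · intro m hm
          rw [Finset.mem_filter, hmem] at hm
          rw [hsg, ← hm.1.2, hm.2, pow_add, mul_assoc, ← pow_add,
            (Even.add_self k).neg_one_pow, mul_one]
      · intro m hm
        rw [hmem] at hm
        rw [Finset.mem_range]; omega
    rw [hfib, ← Finset.mul_sum, htel, hr]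
    simp
  suffices hfinal : (Finset.univ.filter fun i => od i).card ≤
      (Finset.univ.filter fun i => ¬ od i).card by
    convert hfinal
  convert card_le_of_gf wt od hwt (∑ w ∈ Finset.range N,
    Polynomial.monomial w ((-1 : ℤ) ^ w * (h w : ℤ))) ?_ ?_
  · rw [Polynomial.eval_finsetSum]
    simpa using hchi
  · ext w
    rw [gf, PowerSeries.coeff_mk, hcoef, Polynomial.coeff_coe, Polynomial.finsetSum_coeff]
    simp only [Polynomial.coeff_monomial]
    rw [Finset.sum_ite_eq' (Finset.range N) w]
    split_ifs with hw
    · rfl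
    · rw [hN w (by simpa using hw)]; simp

end Acyclic

end Setup

/-- An elliptic bigraded model of positive Euler characteristic has at least as many even as odd
generators. -/
theorem BigradedSullivan.card_odd_le (S : BigradedSullivan) {n : ℕ} (M : Setup S.A n)
    (hchi : S.toSullivan.PosEuler) (hd : M.d = S.d)
    (hgr : ∀ i, S.grading i = M.Sp (fun m => M.dg m = i))
    (hac : ∀ k, ∀ x ∈ M.Sp (fun m => M.lw m = k + 1), M.d x = 0 → ∃ y, M.d y = x) :
    (Finset.univ.filter fun i => Odd (M.deg i)).card ≤
      (Finset.univ.filter fun i => ¬ Odd (M.deg i)).card := by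
  obtain ⟨N, hN, hpos⟩ := hchi
  refine M.card_odd_le hac (fun w => Module.finrank ℚ (S.toCDGA.cohomology w)) ?_ N ?_ hpos.ne'
  · intro w
    set C := M.Sp (fun m => M.lw m = 0 ∧ M.dg m + M.lw m = w) with hC
    have hCz : C ≤ S.toCDGA.cocycles w := by
      intro x hx
      refine Submodule.mem_inf.2 ⟨?_, ?_⟩
      · rw [hgr]; exact M.Sp_mono (fun m hm => by omega) hx
      · rw [LinearMap.mem_ker, ← hd]
        exact M.d_low_zero (M.Sp_mono (fun m hm => hm.1) hx)
    let φ : C →ₗ[ℚ] S.toCDGA.cohomology w := (Submodule.mkQ _).comp (Submodule.inclusion hCz)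
    have hfin : FiniteDimensional ℚ C := (M.finrank_Sp
      (mset (fun i => M.deg i + M.low i) (fun i => Odd (M.deg i)) Finset.univ w |>.filter
        fun m => M.lw m = 0) (fun m => by
        rw [Finset.mem_filter, mem_mset _ _ (fun i => by have := M.deg_ge i; omega),
          Multiset.sum_map_add]
        simp only [Finset.mem_univ, implies_true, true_and]
        change (M.Valid m ∧ M.dg m + M.lw m = w) ∧ _ ↔ _
        tauto)).1
    have hsurj : LinearMap.range φ = ⊤ := by
      rw [LinearMap.range_eq_top]
      intro y
      obtain ⟨⟨z, hz⟩, rfl⟩ := Submodule.mkQ_surjective _ y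
      obtain ⟨hz1, hz2⟩ := Submodule.mem_inf.1 hz
      rw [LinearMap.mem_ker, ← hd] at hz2
      rw [hgr] at hz1
      obtain ⟨z0, h0, z1, h1, hzz⟩ := M.split_low hz1
      have hd0 := M.d_low_zero (M.Sp_mono (fun m hm => hm.1) h0)
      obtain ⟨u, hu⟩ := M.exact_of_low hac (M.Sp_mono (fun m hm => hm.1) h1)
        (by rw [← hzz, map_add, hd0, zero_add] at hz2; exact hz2)
      refine ⟨⟨z0, M.Sp_mono (fun m hm => by omega) h0⟩, ?_⟩
      simp only [φ, LinearMap.comp_apply, Submodule.mkQ_apply]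
      rw [Submodule.Quotient.eq, Submodule.mem_comap]
      refine Submodule.mem_inf.2 ⟨?_, ⟨-u, ?_⟩⟩
      · rw [hgr]
        exact Submodule.sub_mem _ (M.Sp_mono (fun m hm => hm.2) h0) hz1
      · change S.d (-u) = z0 - z
        rw [map_neg, ← hd, hu, ← hzz]; abel
    rw [← LinearMap.finrank_range_add_finrank_ker φ, hsurj, finrank_top]
    congr 1
    rw [← Submodule.finrank_map_subtype_eq]
    suffices hE : (M.Sp (fun m => M.lw m = 1 ∧ M.dg m + M.lw m = w)).map M.d =
        φ.ker.map C.subtype by rw [hE]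
    ext x
    simp only [Submodule.mem_map, LinearMap.mem_ker, Subtype.exists, Submodule.coe_subtype,
      exists_and_right, exists_eq_right]
    have hx : ∀ hx : x ∈ C, φ ⟨x, hx⟩ = 0 ↔ ∃ y, M.d y = x := by
      intro hx
      simp only [φ, LinearMap.comp_apply, Submodule.mkQ_apply]
      rw [Submodule.Quotient.mk_eq_zero, Submodule.mem_comap, hd]
      exact ⟨fun h => (Submodule.mem_inf.1 h).2,
        fun h => Submodule.mem_inf.2 ⟨(Submodule.mem_inf.1 (hCz hx)).1, h⟩⟩
    constructor
    · rintro ⟨y, hy, rfl⟩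
      have hyC : M.d y ∈ C := M.d_mem (fun i m0 h m' hm' => by
        have h1 := hm'.2.1
        have h2 := hm'.2.2
        simp at h ⊢; omega) hy
      exact ⟨hyC, (hx hyC).2 ⟨y, rfl⟩⟩
    · rintro ⟨hxC, h0⟩
      exact M.exists_of_d (fun m m' h h' => by omega) hxC ((hx hxC).1 h0)
  · intro w hw
    have := hN w hw
    exact Module.finrank_zero_of_subsingleton

end RHT

namespace RHT

/-! ### The kernel of the bigraded-model quasi-isomorphism -/

section Kernel

variable (BF : BigradedSullivan) (HF : CDGA) (ρ : Hom BF.toCDGA HF)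

theorem Hom.map_sgn {C D : CDGA} (f : Hom C D) (x : C.A) : f.toAlgHom (C.sgn x) = D.sgn (f.toAlgHom x) := by
  refine C.hom_induction (p := fun x => f.toAlgHom (C.sgn x) = D.sgn (f.toAlgHom x)) x
    (fun i x hx => ?_) (by simp) (fun a b ha hb => ?_)
  · rw [C.sgn_apply hx, D.sgn_apply (f.map_grading hx), map_smul]
  · rw [map_add, map_add, map_add, map_add, ha, hb]

/-- A coboundary maps to zero in an algebra with zero differential. -/
theorem Hom.map_d_zero {C D : CDGA} (f : Hom C D) (hD : D.ZeroDiff) (x : C.A) :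
    f.toAlgHom (C.d x) = 0 := by rw [f.comm_d, hD]

/-- The kernel of a quasi-isomorphism onto an algebra with zero differential is acyclic. -/
theorem Hom.ker_acyclic {C D : CDGA} (f : Hom C D) (hD : D.ZeroDiff) (hf : QuasiIso f) {x : C.A}
    (hx : f.toAlgHom x = 0) (hd : C.d x = 0) : ∃ y, f.toAlgHom y = 0 ∧ C.d y = x := by
  obtain ⟨y, rfl⟩ := hf.2 x hd (by rw [hx]; exact ⟨0, map_zero _⟩)
  obtain ⟨z, hz, w, hw⟩ := hf.1 (f.toAlgHom y) (hD _)
  rw [hD] at hw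
  exact ⟨y - z, by rw [map_sub, ← neg_sub, ← hw, neg_zero], by rw [map_sub, hz, sub_zero]⟩

variable (hBFmin : BF.toSullivan.Minimal) (hBFell : BF.toSullivan.Elliptic)
  (hBFchi : BF.toSullivan.PosEuler) (hHF : HF.ZeroDiff) (hρqi : QuasiIso ρ)
  (hρ : ∀ k : ℕ, ∀ x ∈ BF.low (k + 1), ρ.toAlgHom x = 0)

include hBFmin hBFell hBFchi hHF hρqi hρ in
/-- The kernel of `ρ` contains all elements of odd degree, and is preserved by every even
derivation (twisted by the degree involution) which anticommutes with the differential. -/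
theorem kernel_facts :
    (∀ x : BF.A, BF.toCDGA.sgn x = -x → ρ.toAlgHom x = 0) ∧
    (∀ θ : BF.A →ₗ[ℚ] BF.A,
      (∀ a b, θ (a * b) = θ a * BF.toCDGA.sgn b + BF.toCDGA.sgn a * θ b) →
      (∀ a, θ (BF.d a) = - BF.d (θ a)) →
      (∀ a, BF.toCDGA.sgn a = -a → BF.toCDGA.sgn (θ a) = - θ a) →
      ∀ a, ρ.toAlgHom a = 0 → ρ.toAlgHom (θ a) = 0) := by
  obtain ⟨n, M, hd, hσ, hgr, hlow, -⟩ := BF.exists_setup hBFell hBFmin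
  have hgr' : ∀ i, BF.grading i = M.Sp (fun m => M.dg m = i) := hgr
  have hlow' : ∀ k, BF.low k = M.Sp (fun m => M.lw m = k) := hlow
  have hac : ∀ k, ∀ x ∈ M.Sp (fun m => M.lw m = k + 1), M.d x = 0 → ∃ y, M.d y = x := by
    intro k x hx h0
    rw [hd] at h0 ⊢
    exact BF.acyclic_plus k x (by rw [hlow']; exact hx) h0
  have hmonoρ : ∀ m, 1 ≤ M.lw m → ρ.toAlgHom (M.mono m) = 0 := by
    intro m hm
    refine hρ (M.lw m - 1) _ ?_
    rw [hlow']
    exact M.mono_mem (by omega)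
  have hposρ : ∀ {z}, z ∈ M.Sp (fun m => 1 ≤ M.lw m) → ρ.toAlgHom z = 0 := fun {z} hz =>
    M.linear_le ρ.toAlgHom.toLinearMap (S := ⊥) (fun m hm => by simpa using hmonoρ m hm) hz
  have hdρ : ∀ x, ρ.toAlgHom (M.d x) = 0 := fun x => by rw [hd]; exact ρ.map_d_zero hHF x
  -- the hypotheses of the nilpotence theorem hold for the kernel of `ρ`
  obtain ⟨L, hL⟩ := hBFell.2.2
  have hWK : M.Sp (fun m => L ≤ m.card) ≤ LinearMap.ker ρ.toAlgHom.toLinearMap := by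
    refine M.Sp_le fun m hm => ?_
    change ρ.toAlgHom (M.mono m) = 0
    rcases Nat.eq_zero_or_pos (M.lw m) with h0 | h0
    · have hz := M.d_low_zero (M.mono_mem (p := fun m => M.lw m = 0) h0)
      have hg : M.mono m ∈ BF.grading (M.dg m) := by rw [hgr']; exact M.mono_mem rfl
      have hc : M.mono m ∈ BF.toCDGA.cocycles (M.dg m) :=
        Submodule.mem_inf.2 ⟨hg, by rw [LinearMap.mem_ker, ← hd]; exact hz⟩
      have := hL (M.dg m) (by have := M.two_mul_card_le m; omega)
      have h1 : (Submodule.Quotient.mk ⟨M.mono m, hc⟩ : BF.toCDGA.cohomology (M.dg m)) = 0 :=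
        Subsingleton.elim _ _
      rw [Submodule.Quotient.mk_eq_zero, Submodule.mem_comap] at h1
      obtain ⟨y, hy⟩ := (Submodule.mem_inf.1 h1).2
      have hy' : BF.d y = M.mono m := hy
      rw [← hy']
      exact ρ.map_d_zero hHF y
    · exact hmonoρ m h0
  have hB := M.exists_pow (LinearMap.ker ρ.toAlgHom.toLinearMap) L
    (fun {a} b ha => by
      have ha' : ρ.toAlgHom a = 0 := ha
      change ρ.toAlgHom (a * b) = 0
      rw [map_mul, ha', zero_mul])
    (fun {a} _ => hdρ a)
    (fun {a} ha => by
      have ha' : ρ.toAlgHom a = 0 := ha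
      change ρ.toAlgHom (M.σ a) = 0
      rw [hσ, ρ.map_sgn, ha', map_zero])
    hWK
    (fun {e} he h0 => by
      rw [hd] at h0
      obtain ⟨y, hy, hye⟩ := ρ.ker_acyclic hHF hρqi he h0
      exact ⟨y, hy, by rw [hd]; exact hye⟩)
  obtain ⟨N, hN⟩ := M.exists_common_pow hB
  have hcard := BF.card_odd_le M hBFchi hd hgr' hac
  have hev : ∀ a, a ∈ Finset.univ.filter (fun i => ¬ Odd (M.deg i)) → M.deg a % 2 = 0 := by
    intro a ha
    have := (Finset.mem_filter.1 ha).2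
    rwa [Nat.odd_iff, Nat.mod_two_not_eq_one] at this
  have hoc : ∀ m, M.Valid m → M.oc m ≤ (Finset.univ.filter fun i => ¬ Odd (M.deg i)).card := by
    intro m hm
    refine le_trans ?_ hcard
    rw [Setup.oc, Finset.sum_multiset_map_count, Finset.card_eq_sum_ones, Finset.sum_filter]
    refine (Finset.sum_le_sum_of_subset (Finset.subset_univ _)).trans (Finset.sum_le_sum ?_)
    intro i _
    split_ifs with h
    · rw [Nat.odd_iff.1 h, smul_eq_mul, mul_one]; exact hm i h
    · rw [Nat.odd_iff, Nat.mod_two_not_eq_one] at h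
      rw [h, smul_zero]
  have hoddgen := M.odd_of_low hN hev hoc hac
  have hmemodd : ∀ x : BF.A, BF.toCDGA.sgn x = -x → x ∈ M.Sp (fun m => Odd (M.dg m)) := by
    intro x hx
    obtain ⟨b, hb, c, hc, rfl⟩ := M.exists_parity x
    rw [← hσ, map_add, M.σ_even hb, M.σ_odd hc] at hx
    have h1 : (2 : ℚ) • b = 0 := by
      rw [two_smul]
      have := congrArg (fun t => t + (b + c)) hx
      simp only [neg_add_cancel] at this
      rw [← this]; abel
    rw [smul_eq_zero_iff_right two_ne_zero] at h1
    rw [h1, zero_add]; exact hc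
  have hodd : ∀ x : BF.A, BF.toCDGA.sgn x = -x → ρ.toAlgHom x = 0 := by
    intro x hx
    obtain ⟨x0, h0, x1, h1, rfl⟩ := M.split_low (hmemodd x hx)
    obtain ⟨t, -, ht⟩ := M.exact_of_F hN hev hoc (M.mem_F_of_odd (M.Sp_mono (fun m hm => hm.2) h0))
      (M.d_low_zero (M.Sp_mono (fun m hm => hm.1) h0))
    rw [map_add, hposρ (M.Sp_mono (fun m hm => hm.1) h1), ← ht, hdρ, add_zero]
  refine ⟨hodd, ?_⟩
  intro θ hmul hθd hθo a ha
  obtain ⟨x0, h0, x1, h1, rfl⟩ := M.split_low (M.mem_top a)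
  have hx1 : x1 ∈ M.Sp (fun m => 1 ≤ M.lw m) := M.Sp_mono (fun m hm => hm.1) h1
  have hx0 : ρ.toAlgHom x0 = 0 := by rwa [map_add, hposρ hx1, add_zero] at ha
  have hd0 : BF.d x0 = 0 := by
    rw [← hd]; exact M.d_low_zero (M.Sp_mono (fun m hm => hm.1) h0)
  obtain ⟨y, -, rfl⟩ := ρ.ker_acyclic hHF hρqi hx0 hd0
  have h2 : ρ.toAlgHom (θ x1) = 0 := by
    refine M.linear_le (ρ.toAlgHom.toLinearMap ∘ₗ θ) (S := ⊥) (fun m hm => ?_) hx1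
    change ρ.toAlgHom (θ (M.mono m)) = 0
    obtain ⟨i, hi, hil⟩ : ∃ i ∈ m, 1 ≤ M.low i := by
      by_contra! hcon
      have : M.lw m = 0 := by
        rw [Setup.lw]
        refine Multiset.sum_eq_zero fun k hk => ?_
        obtain ⟨i, hi, rfl⟩ := Multiset.mem_map.1 hk
        have := hcon i hi
        omega
      omega
    obtain ⟨m', rfl⟩ := Multiset.exists_cons_of_mem hi
    obtain ⟨e, he⟩ := M.mono_mul {i} m'
    rw [M.mono_singleton, Multiset.singleton_add] at he
    have hv : ρ.toAlgHom (M.v i) = 0 := hposρ (M.v_mem (by simpa using hil))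
    have hvo : BF.toCDGA.sgn (M.v i) = - M.v i := by
      rw [← hσ]; exact M.σ_odd (M.v_mem (by simpa using hoddgen i hil))
    have h3 : ρ.toAlgHom (θ (M.v i * M.mono m')) = 0 := by
      rw [hmul, map_add, map_mul, map_mul, hodd _ (hθo _ hvo), hvo, map_neg, hv]
      simp
    rw [he, map_smul, map_smul] at h3
    rcases Int.units_eq_one_or e with rfl | rfl <;> simpa using h3
  rw [map_add, map_add, h2, hθd, map_neg, ρ.map_d_zero hHF, neg_zero, add_zero]

end Kernel
end RHT

namespace RHT

/-! ### The cohomology algebra of a wedge of odd spheres -/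

theorem CDGA.sgn_sgn (C : CDGA) (x : C.A) : C.sgn (C.sgn x) = x := by
  refine C.hom_induction (p := fun x => C.sgn (C.sgn x) = x) x
    (fun i x hx => ?_) (by simp) (fun a b ha hb => by rw [map_add, map_add, ha, hb])
  rw [C.sgn_apply hx, map_smul, C.sgn_apply hx, smul_smul, ← pow_add, ← two_mul, pow_mul]; simp

/-- Graded commutativity written with the degree involution, for arbitrary elements: `y + sgn y`
is twice the even part of `y`, and `y - sgn y` twice the odd part. -/
theorem CDGA.comm_sgn (C : CDGA) (x y : C.A) :
    (2 : ℚ) • (x * y) = (y + C.sgn y) * x + (y - C.sgn y) * C.sgn x := by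
  refine C.hom_induction
    (p := fun x => (2 : ℚ) • (x * y) = (y + C.sgn y) * x + (y - C.sgn y) * C.sgn x) x
    (fun i x hx => ?_) (by simp) (fun a b ha hb => by
      rw [add_mul, smul_add, ha, hb, map_add, mul_add, mul_add]; abel)
  refine C.hom_induction
    (p := fun y => (2 : ℚ) • (x * y) = (y + C.sgn y) * x + (y - C.sgn y) * C.sgn x) y
    (fun j y hy => ?_) (by simp) (fun a b ha hb => by
      rw [mul_add, smul_add, ha, hb, map_add]; noncomm_ring)
  rw [C.gcomm hx hy, C.sgn_apply hx, C.sgn_apply hy]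
  rcases Nat.even_or_odd j with hj | hj
  · rw [(hj.mul_left i).neg_one_pow, hj.neg_one_pow]
    simp [add_mul, two_smul]
  · rw [hj.neg_one_pow, mul_comm i j, pow_mul, hj.neg_one_pow]
    simp [two_smul, add_mul]

theorem CDGA.comm_of_odd (C : CDGA) {b : C.A} (hb : C.sgn b = -b) (t : C.A) :
    t * b = b * C.sgn t := by
  have h := C.comm_sgn t b
  rw [hb, add_neg_cancel, zero_mul, zero_add, sub_neg_eq_add, ← two_smul ℚ b, smul_mul_assoc] at h
  exact smul_right_injective _ (two_ne_zero) h

theorem CDGA.comm_parity (C : CDGA) {i j : ℕ} {x y : C.A} (hx : C.sgn x = ((-1 : ℚ) ^ i) • x)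
    (hy : C.sgn y = ((-1 : ℚ) ^ j) • y) : x * y = ((-1 : ℚ) ^ (i * j)) • (y * x) := by
  have h := C.comm_sgn x y
  refine smul_right_injective _ (two_ne_zero (α := ℚ)) ?_
  simp only
  rw [h, hx, hy]
  rcases Nat.even_or_odd j with hj | hj
  · rw [(hj.mul_left i).neg_one_pow, hj.neg_one_pow]
    simp [add_mul, two_smul]
  · rw [hj.neg_one_pow, mul_comm i j, pow_mul, hj.neg_one_pow]
    simp [two_smul, add_mul]

/-- Linear maps shifting degrees by `k` commute with taking homogeneous components. -/
theorem CDGA.component_map {C D : CDGA} (f : C.A →ₗ[ℚ] D.A) (k : ℕ)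
    (hf : ∀ i, ∀ x ∈ C.grading i, f x ∈ D.grading (i + k)) (i : ℕ) (x : C.A) :
    f (DirectSum.decompose C.grading x i : C.A) = DirectSum.decompose D.grading (f x) (i + k) := by
  refine C.hom_induction (p := fun x => f (DirectSum.decompose C.grading x i : C.A) =
    DirectSum.decompose D.grading (f x) (i + k)) x (fun j x hx => ?_) (by simp) (fun a b ha hb => ?_)
  · by_cases h : j = i
    · subst h
      rw [DirectSum.decompose_of_mem_same _ hx, DirectSum.decompose_of_mem_same _ (hf _ _ hx)]
    · rw [DirectSum.decompose_of_mem_ne _ hx h,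
        DirectSum.decompose_of_mem_ne _ (hf _ _ hx) (by omega), map_zero]
  · rw [DirectSum.decompose_add, map_add, DirectSum.decompose_add]
    simp only [DirectSum.add_apply, Submodule.coe_add, map_add, ha, hb]

section Base

variable {SB : Sullivan} {HB : CDGA} (ψ : Hom SB.toCDGA HB)

/-- The positive-degree part of a cochain algebra. -/
def CDGA.pos (C : CDGA) : Submodule ℚ C.A := ⨆ i, C.grading (i + 1)

/-- Every homogeneous class of the base is represented by a homogeneous cocycle of its minimal
model. -/
theorem lift_cocycle (hHB : HB.ZeroDiff) (hψ : QuasiIso ψ) {i : ℕ} {y : HB.A}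
    (hy : y ∈ HB.grading i) : ∃ x ∈ SB.grading i, SB.d x = 0 ∧ ψ.toAlgHom x = y := by
  obtain ⟨x, hx, w, hw⟩ := hψ.1 y (hHB y)
  rw [hHB] at hw
  have hxy : ψ.toAlgHom x = y := (sub_eq_zero.1 hw.symm)
  refine ⟨DirectSum.decompose SB.grading x i, SetLike.coe_mem _, ?_, ?_⟩
  · have := CDGA.component_map (C := SB.toCDGA) (D := SB.toCDGA) SB.d 1 (fun i x => SB.d_mem) i x
    rw [hx] at this
    simpa using this
  · have := CDGA.component_map (C := SB.toCDGA) (D := HB) ψ.toAlgHom.toLinearMap 0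
      (fun i x => ψ.map_grading) i x
    simp only [AlgHom.toLinearMap_apply, hxy] at this
    exact this.trans (DirectSum.decompose_of_mem_same _ hy)

theorem Sullivan.one_sup_pos (S : Sullivan) (x : S.A) :
    ∃ c : ℚ, ∃ y ∈ S.toCDGA.pos, x = c • 1 + y := by
  have hx : x ∈ Algebra.adjoin ℚ (⋃ i, (S.V i : Set S.A)) := by rw [S.generates]; trivial
  have hmul : ∀ a ∈ S.toCDGA.pos, ∀ b ∈ S.toCDGA.pos, a * b ∈ S.toCDGA.pos := by
    intro a ha b hb
    have : S.toCDGA.pos * S.toCDGA.pos ≤ S.toCDGA.pos := by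
      unfold CDGA.pos
      rw [Submodule.iSup_mul]
      refine iSup_le fun i => ?_
      rw [Submodule.mul_iSup]
      refine iSup_le fun j => Submodule.mul_le.2 fun a ha b hb => ?_
      have h : a * b ∈ S.grading (i + 1 + (j + 1)) := SetLike.mul_mem_graded ha hb
      exact Submodule.mem_iSup_of_mem (p := fun i => S.grading (i + 1)) (i + 1 + j) h
    exact this (Submodule.mul_mem_mul ha hb)
  induction hx using Algebra.adjoin_induction with
  | mem x hx =>
    obtain ⟨i, hi⟩ := Set.mem_iUnion.1 hx
    refine ⟨0, x, ?_, by simp⟩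
    rcases i with _ | i
    · rw [S.V_zero] at hi
      rw [show x = 0 from hi]; exact Submodule.zero_mem _
    · exact Submodule.mem_iSup_of_mem i (S.V_le _ hi)
  | algebraMap r => exact ⟨r, 0, Submodule.zero_mem _, by rw [Algebra.algebraMap_eq_smul_one, add_zero]⟩
  | add x y _ _ hx hy =>
    obtain ⟨c, x', hx', rfl⟩ := hx
    obtain ⟨c', y', hy', rfl⟩ := hy
    exact ⟨c + c', x' + y', Submodule.add_mem _ hx' hy', by rw [add_smul]; abel⟩
  | mul x y _ _ hx hy =>
    obtain ⟨c, x', hx', rfl⟩ := hx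
    obtain ⟨c', y', hy', rfl⟩ := hy
    refine ⟨c * c', c • y' + c' • x' + x' * y', Submodule.add_mem _ (Submodule.add_mem _
      (Submodule.smul_mem _ _ hy') (Submodule.smul_mem _ _ hx')) (hmul _ hx' _ hy'), ?_⟩
    simp only [add_mul, mul_add, smul_mul_assoc, mul_smul_comm, one_mul, mul_one, smul_add,
      smul_smul, mul_comm c' c]
    abel

theorem base_one_sup_pos (hHB : HB.ZeroDiff) (hψ : QuasiIso ψ) (y : HB.A) :
    ∃ c : ℚ, ∃ z ∈ HB.pos, y = c • 1 + z := by
  obtain ⟨x, hx, w, hw⟩ := hψ.1 y (hHB y)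
  rw [hHB] at hw
  obtain ⟨c, z, hz, rfl⟩ := SB.one_sup_pos x
  refine ⟨c, ψ.toAlgHom z, ?_, ?_⟩
  · have : SB.toCDGA.pos ≤ HB.pos.comap ψ.toAlgHom.toLinearMap :=
      iSup_le fun i x hx => Submodule.mem_iSup_of_mem (p := fun i => HB.grading (i + 1)) i
        (ψ.map_grading hx)
    exact this hz
  · rw [← sub_eq_zero.1 hw.symm, map_add, map_smul, map_one]

theorem base_mul_zero (hSB : SB.WedgeOddSpheres) (hHB : HB.ZeroDiff) (hψ : QuasiIso ψ) {x y : HB.A}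
    (hx : x ∈ HB.pos) (hy : y ∈ HB.pos) : x * y = 0 := by
  have : HB.pos * HB.pos ≤ ⊥ := by
    conv_lhs => unfold CDGA.pos
    rw [Submodule.iSup_mul]
    refine iSup_le fun i => ?_
    rw [Submodule.mul_iSup]
    refine iSup_le fun j => Submodule.mul_le.2 fun a ha b hb => ?_
    obtain ⟨a', ha', hda, rfl⟩ := lift_cocycle ψ hHB hψ ha
    obtain ⟨b', hb', hdb, rfl⟩ := lift_cocycle ψ hHB hψ hb
    obtain ⟨z, hz⟩ := hSB.2.2 _ _ a' b' (Nat.succ_pos i) (Nat.succ_pos j) ha' hb' hda hdb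
    rw [← map_mul, ← hz]
    exact ψ.map_d_zero hHB z
  exact this (Submodule.mul_mem_mul hx hy)

theorem base_sgn (hSB : SB.WedgeOddSpheres) (hHB : HB.ZeroDiff) (hψ : QuasiIso ψ) {x : HB.A}
    (hx : x ∈ HB.pos) : HB.sgn x = -x := by
  have : HB.pos ≤ LinearMap.ker (HB.sgn.toLinearMap + LinearMap.id) := by
    refine iSup_le fun i x hx => ?_
    rw [LinearMap.mem_ker, LinearMap.add_apply, AlgHom.toLinearMap_apply, LinearMap.id_apply,
      HB.sgn_apply hx]
    rcases Nat.even_or_odd' (i + 1) with ⟨k, hk | hk⟩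
    · rw [hk] at hx
      obtain ⟨x', hx', hdx, rfl⟩ := lift_cocycle ψ hHB hψ hx
      obtain ⟨z, hz⟩ := hSB.2.1 k (by omega) x' hx' hdx
      have := ψ.map_d_zero hHB z
      rw [hz] at this
      rw [this, smul_zero, add_zero]
    · rw [hk, Odd.neg_one_pow ⟨k, rfl⟩]; simp
  have h := this hx
  rw [LinearMap.mem_ker, LinearMap.add_apply] at h
  exact eq_neg_of_add_eq_zero_left h

end Base
end RHT

namespace RHT

/-! ### The splitting of the total algebra -/

/-- The elements `x` of `E ⊕ E s` whose coefficient of `1` has the parity of `i` and whose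
coefficient of `s` has the parity of `i + 1`. -/
def parityPart (C : CDGA) (i : ℕ) : Submodule ℚ (OddExt C.sgn) where
  carrier := {x | C.sgn x.re = ((-1 : ℚ) ^ i) • x.re ∧ C.sgn x.im = ((-1 : ℚ) ^ (i + 1)) • x.im}
  zero_mem' := by simp
  add_mem' := by
    rintro x y ⟨h1, h2⟩ ⟨h3, h4⟩
    exact ⟨by rw [OddExt.add_re, map_add, h1, h3, smul_add],
      by rw [OddExt.add_im, map_add, h2, h4, smul_add]⟩
  smul_mem' := by
    rintro c x ⟨h1, h2⟩
    exact ⟨by rw [OddExt.smul_re, map_smul, h1, smul_comm],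
      by rw [OddExt.smul_im, map_smul, h2, smul_comm]⟩

theorem parityPart_mul (C : CDGA) (i j : ℕ) (x y : OddExt C.sgn) (hx : x ∈ parityPart C i)
    (hy : y ∈ parityPart C j) : x * y ∈ parityPart C (i + j) := by
  obtain ⟨h1, h2⟩ := hx
  obtain ⟨h3, h4⟩ := hy
  constructor
  · rw [OddExt.mul_re, map_mul, h1, h3, smul_mul_smul_comm, pow_add]
  · rw [OddExt.mul_im, map_add, map_mul, map_mul, h1, h2, h4, h3, map_smul, h3]
    simp only [smul_add, mul_smul_comm, smul_mul_assoc, smul_smul]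
    congr 2 <;> ring

theorem parityPart_comm (C : CDGA) (i j : ℕ) (x y : OddExt C.sgn) (hx : x ∈ parityPart C i)
    (hy : y ∈ parityPart C j) : x * y = ((-1 : ℚ) ^ (i * j)) • (y * x) := by
  obtain ⟨h1, h2⟩ := hx
  obtain ⟨h3, h4⟩ := hy
  have hsq : ∀ k : ℕ, (-1 : ℚ) ^ k * (-1 : ℚ) ^ k = 1 := fun k => by
    rw [← pow_add, ← two_mul, pow_mul]; simp
  ext
  · simpa using C.comm_parity h1 h3
  · rw [OddExt.mul_im, OddExt.smul_im, OddExt.mul_im, h1, h3, mul_smul_comm, mul_smul_comm,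
      C.comm_parity h1 h4, C.comm_parity h2 h3, smul_smul, smul_add, smul_smul, add_comm]
    congr 2
    · rw [add_mul, one_mul, pow_add, mul_comm _ ((-1 : ℚ) ^ j),
        ← mul_assoc, hsq, one_mul]
    · rw [mul_add, mul_one, pow_add]

namespace FibrationModel

section Section

variable {B : CDGA} {F : Sullivan} (P : FibrationModel B F)

/-- The fibre subalgebra `1 ⊗ ΛV`, as a subalgebra. -/
def fiberAlg : Subalgebra ℚ P.T.A := Algebra.adjoin ℚ (⋃ i, (P.V i : Set P.T.A))

theorem proj_fiber_bijective :
    Function.Bijective (P.proj.toAlgHom.comp P.fiberAlg.val) := by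
  constructor
  · rw [injective_iff_map_eq_zero]
    intro x hx
    exact Subtype.ext (P.fiber_inj x x.2 hx)
  · rw [← AlgHom.range_eq_top, ← top_le_iff, ← F.generates, Algebra.adjoin_le_iff]
    intro y hy
    obtain ⟨i, hi⟩ := Set.mem_iUnion.1 hy
    rw [← P.proj_V i] at hi
    obtain ⟨v, hv, rfl⟩ := hi
    exact ⟨⟨v, Algebra.subset_adjoin (Set.mem_iUnion.2 ⟨i, hv⟩)⟩, rfl⟩

/-- The section `ΛV → 1 ⊗ ΛV` of the projection onto the fibre; it is a map of graded algebras
but not of differential algebras. -/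
noncomputable def sec : F.A →ₐ[ℚ] P.T.A :=
  P.fiberAlg.val.comp (AlgEquiv.ofBijective _ P.proj_fiber_bijective).symm.toAlgHom

theorem proj_sec (a : F.A) : P.proj.toAlgHom (P.sec a) = a :=
  (AlgEquiv.ofBijective _ P.proj_fiber_bijective).apply_symm_apply a

theorem sec_mem (a : F.A) : P.sec a ∈ P.fiberSub :=
  ((AlgEquiv.ofBijective _ P.proj_fiber_bijective).symm a).2

theorem sec_proj {x : P.T.A} (hx : x ∈ P.fiberSub) : P.sec (P.proj.toAlgHom x) = x := by
  have h : x - P.sec (P.proj.toAlgHom x) = 0 :=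
    P.fiber_inj _ (Submodule.sub_mem _ hx (P.sec_mem _)) (by rw [map_sub, P.proj_sec, sub_self])
  exact (sub_eq_zero.1 h).symm

theorem V_le_fiberSub {i : ℕ} {v : P.T.A} (hv : v ∈ P.V i) : v ∈ P.fiberSub :=
  Algebra.subset_adjoin (Set.mem_iUnion.2 ⟨i, hv⟩)

theorem sgn_sec (a : F.A) : P.T.sgn (P.sec a) = P.sec (F.toCDGA.sgn a) := by
  have : P.T.sgn.comp P.sec = P.sec.comp F.toCDGA.sgn := by
    refine AlgHom.ext_of_adjoin_eq_top F.generates ?_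
    intro y hy
    obtain ⟨i, hi⟩ := Set.mem_iUnion.1 hy
    have hi' := hi
    rw [← P.proj_V i] at hi'
    obtain ⟨v, hv, rfl⟩ := hi'
    change P.T.sgn (P.sec (P.proj.toAlgHom v)) = P.sec (F.toCDGA.sgn (P.proj.toAlgHom v))
    have hi'' : P.proj.toAlgHom v ∈ F.V i := hi
    rw [F.toCDGA.sgn_apply (F.V_le i hi''), map_smul, P.sec_proj (P.V_le_fiberSub hv),
      P.T.sgn_apply (P.V_le i hv)]
  exact DFunLike.congr_fun this a

theorem mem_fiberComap (K : Submodule ℚ F.A) (x : P.T.A) :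
    x ∈ P.fiberComap K ↔ ∃ a ∈ K, P.sec a = x := by
  constructor
  · rintro ⟨h1, h2⟩
    exact ⟨_, h2, P.sec_proj h1⟩
  · rintro ⟨a, ha, rfl⟩
    refine ⟨P.sec_mem a, ?_⟩
    change P.proj.toAlgHom (P.sec a) ∈ K
    rwa [P.proj_sec]

theorem incl_mem (b : B.A) : P.incl.toAlgHom b ∈ P.baseSub := ⟨b, rfl⟩

end Section

/-- The properties of the base used below: it is `ℚ ⊕ B⁺` with zero differential, where `B⁺` is
concentrated in odd degrees and has zero multiplication. -/
structure OddBase (B : CDGA) : Prop where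
  d_zero : B.ZeroDiff
  split : ∀ y : B.A, ∃ c : ℚ, ∃ z ∈ B.pos, y = c • 1 + z
  mul_zero : ∀ {x y : B.A}, x ∈ B.pos → y ∈ B.pos → x * y = 0
  sgn_neg : ∀ {x : B.A}, x ∈ B.pos → B.sgn x = -x

section Split

variable {B : CDGA} {F : Sullivan} (P : FibrationModel B F) (hB : OddBase B)

theorem proj_pos {b : B.A} (hb : b ∈ B.pos) : P.proj.toAlgHom (P.incl.toAlgHom b) = 0 := by
  have : B.pos ≤ LinearMap.ker (P.proj.toAlgHom.comp P.incl.toAlgHom).toLinearMap :=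
    iSup_le fun i x hx => P.proj_incl _ (Nat.succ_pos i) x hx
  exact this hb

include hB in
theorem incl_mul_eq_zero {b : B.A} (hb : b ∈ B.pos) {t : P.T.A} (ht : P.proj.toAlgHom t = 0) :
    P.incl.toAlgHom b * t = 0 := by
  rw [P.ker_proj] at ht
  induction ht using Submodule.mul_induction_on' with
  | mem_mul_mem m hm n _ =>
    obtain ⟨b', hb', rfl⟩ := hm
    rw [AlgHom.toLinearMap_apply, ← mul_assoc, ← map_mul, hB.mul_zero hb hb', map_zero, zero_mul]
  | add x _ y _ hx hy => rw [mul_add, hx, hy, add_zero]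

include hB in
/-- Since `B⁺` has zero products, multiplication by an element of `B⁺` only depends on the component
in the fibre. -/
theorem incl_mul {b : B.A} (hb : b ∈ B.pos) (t : P.T.A) :
    P.incl.toAlgHom b * t = P.incl.toAlgHom b * P.sec (P.proj.toAlgHom t) := by
  rw [← sub_eq_zero, ← mul_sub]
  exact P.incl_mul_eq_zero hB hb (by rw [map_sub, P.proj_sec, sub_self])

include hB in
theorem mul_incl {b : B.A} (hb : b ∈ B.pos) (t : P.T.A) :
    t * P.incl.toAlgHom b = P.incl.toAlgHom b * P.T.sgn t :=
  P.T.comm_of_odd (by rw [← P.incl.map_sgn, hB.sgn_neg hb, map_neg]) t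

include hB in
theorem d_incl_mul {b : B.A} (hb : b ∈ B.pos) (a : F.A) :
    P.T.d (P.incl.toAlgHom b * P.sec a) = - (P.incl.toAlgHom b * P.sec (F.d a)) := by
  rw [P.T.leibniz_sgn, ← P.incl.comm_d, hB.d_zero, map_zero, zero_mul, zero_add,
    ← P.incl.map_sgn, hB.sgn_neg hb, map_neg, neg_mul, P.incl_mul hB hb, P.proj.comm_d, P.proj_sec]

variable {I : Type} (β : Module.Basis I ℚ B.pos)

/-- The map `B⁺ ⊗ ΛV → B ⊗ ΛV`, in terms of a basis of `B⁺`. -/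
noncomputable def posMap : (I →₀ F.A) →ₗ[ℚ] P.T.A :=
  Finsupp.lsum ℚ fun i => (LinearMap.mulLeft ℚ (P.incl.toAlgHom (β i : B.A))) ∘ₗ P.sec.toLinearMap

theorem posMap_single (i : I) (a : F.A) :
    P.posMap β (Finsupp.single i a) = P.incl.toAlgHom (β i : B.A) * P.sec a := by
  rw [posMap, Finsupp.lsum_single]; rfl

/-- `B⁺ ⊗ K`, in terms of a basis of `B⁺`. -/
noncomputable def coordIn (I : Type) (K : Submodule ℚ F.A) : Submodule ℚ (I →₀ F.A) :=
  ⨅ i, K.comap (Finsupp.lapply i)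

theorem mem_coordIn {K : Submodule ℚ F.A} {c : I →₀ F.A} : c ∈ coordIn I K ↔ ∀ i, c i ∈ K := by
  simp [coordIn]

theorem incl_mul_sec_mem {K : Submodule ℚ F.A} {b : B.A} (hb : b ∈ B.pos) {a : F.A} (ha : a ∈ K) :
    P.incl.toAlgHom b * P.sec a ∈ (coordIn I K).map (P.posMap β) := by
  have h : (⟨b, hb⟩ : B.pos) ∈ Submodule.span ℚ (Set.range β) := by rw [β.span_eq]; trivial
  have key : ∀ b : B.pos, b ∈ Submodule.span ℚ (Set.range β) →
      P.incl.toAlgHom b * P.sec a ∈ (coordIn I K).map (P.posMap β) := by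
    intro b hb
    induction hb using Submodule.span_induction with
    | mem x hx =>
      obtain ⟨i, rfl⟩ := hx
      refine ⟨Finsupp.single i a, mem_coordIn.2 fun j => ?_, P.posMap_single β i a⟩
      classical
      rw [Finsupp.single_apply]
      split_ifs
      · exact ha
      · exact K.zero_mem
    | zero => rw [Submodule.coe_zero, map_zero, zero_mul]; exact Submodule.zero_mem _
    | add x y _ _ hx hy =>
      rw [Submodule.coe_add, map_add, add_mul]; exact Submodule.add_mem _ hx hy
    | smul r x _ hx =>
      rw [Submodule.coe_smul, map_smul, smul_mul_assoc]; exact Submodule.smul_mem _ _ hx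
  exact key _ h

include hB in
theorem mem_range_posMap {x : P.T.A} (hx : P.proj.toAlgHom x = 0) : ∃ c, x = P.posMap β c := by
  rw [P.ker_proj] at hx
  induction hx using Submodule.mul_induction_on' with
  | mem_mul_mem m hm n _ =>
    obtain ⟨b, hb, rfl⟩ := hm
    rw [AlgHom.toLinearMap_apply, P.incl_mul hB hb]
    obtain ⟨c, -, hc⟩ := P.incl_mul_sec_mem (K := ⊤) β hb (a := P.proj.toAlgHom n) trivial
    exact ⟨c, hc.symm⟩
  | add x _ y _ hx hy =>
    obtain ⟨c, rfl⟩ := hx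
    obtain ⟨c', rfl⟩ := hy
    exact ⟨c + c', (map_add _ _ _).symm⟩

theorem proj_posMap (c : I →₀ F.A) : P.proj.toAlgHom (P.posMap β c) = 0 := by
  have : P.proj.toAlgHom.toLinearMap ∘ₗ P.posMap β = 0 := by
    refine Finsupp.lhom_ext fun i a => ?_
    rw [LinearMap.comp_apply, P.posMap_single, AlgHom.toLinearMap_apply, map_mul,
      P.proj_pos (β i).2, zero_mul]; rfl
  exact LinearMap.congr_fun this c

include hB in
theorem d_posMap (c : I →₀ F.A) :
    P.T.d (P.posMap β c) = - P.posMap β (Finsupp.mapRange.linearMap F.d c) := by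
  have : P.T.d ∘ₗ P.posMap β = - (P.posMap β ∘ₗ Finsupp.mapRange.linearMap F.d) := by
    refine Finsupp.lhom_ext fun i a => ?_
    rw [LinearMap.comp_apply, P.posMap_single, LinearMap.neg_apply, LinearMap.comp_apply,
      P.d_incl_mul hB (β i).2, Finsupp.mapRange.linearMap_apply, Finsupp.mapRange_single,
      P.posMap_single]
  exact LinearMap.congr_fun this c

include hB in
theorem sgn_posMap (c : I →₀ F.A) : P.T.sgn (P.posMap β c) =
    - P.posMap β (Finsupp.mapRange.linearMap F.toCDGA.sgn.toLinearMap c) := by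
  have : P.T.sgn.toLinearMap ∘ₗ P.posMap β =
      - (P.posMap β ∘ₗ Finsupp.mapRange.linearMap F.toCDGA.sgn.toLinearMap) := by
    refine Finsupp.lhom_ext fun i a => ?_
    rw [LinearMap.comp_apply, P.posMap_single, LinearMap.neg_apply, LinearMap.comp_apply,
      Finsupp.mapRange.linearMap_apply, Finsupp.mapRange_single, P.posMap_single,
      AlgHom.toLinearMap_apply, map_mul, ← P.incl.map_sgn, hB.sgn_neg (β i).2, map_neg, P.sgn_sec,
      neg_mul, AlgHom.toLinearMap_apply]
  exact LinearMap.congr_fun this c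

include hB in
/-- `B ⊗ K = K ⊕ (B⁺ ⊗ K)`. -/
theorem mem_base_mul (K : Submodule ℚ F.A) (x : P.T.A) :
    x ∈ P.baseSub * P.fiberComap K ↔
      ∃ a ∈ K, ∃ c : I →₀ F.A, (∀ i, c i ∈ K) ∧ x = P.sec a + P.posMap β c := by
  constructor
  · intro hx
    have : P.baseSub * P.fiberComap K ≤
        K.map P.sec.toLinearMap ⊔ (coordIn I K).map (P.posMap β) := by
      refine Submodule.mul_le.2 ?_
      rintro _ ⟨b, rfl⟩ n hn
      obtain ⟨a, ha, rfl⟩ := (P.mem_fiberComap K n).1 hn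
      obtain ⟨c, z, hz, rfl⟩ := hB.split b
      rw [AlgHom.toLinearMap_apply, map_add, map_smul, map_one, add_mul, smul_mul_assoc, one_mul]
      exact Submodule.add_mem_sup (Submodule.smul_mem _ _ ⟨a, ha, rfl⟩)
        (P.incl_mul_sec_mem β hz ha)
    obtain ⟨_, ⟨a, ha, rfl⟩, _, ⟨c, hc, rfl⟩, rfl⟩ := Submodule.mem_sup.1 (this hx)
    exact ⟨a, ha, c, mem_coordIn.1 hc, rfl⟩
  · rintro ⟨a, ha, c, hc, rfl⟩
    refine Submodule.add_mem _ ?_ ?_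
    · rw [← one_mul (P.sec a), ← map_one P.incl.toAlgHom]
      exact Submodule.mul_mem_mul (P.incl_mem _) ((P.mem_fiberComap K _).2 ⟨a, ha, rfl⟩)
    · rw [posMap, Finsupp.lsum_apply, Finsupp.sum]
      refine Submodule.sum_mem _ fun i _ => ?_
      exact Submodule.mul_mem_mul (P.incl_mem _) ((P.mem_fiberComap K _).2 ⟨c i, hc i, rfl⟩)

include hB in
theorem base_mul_top (x : P.T.A) : x ∈ P.baseSub * P.fiberComap ⊤ := by
  obtain ⟨c, hc⟩ := P.mem_range_posMap hB (Module.Basis.ofVectorSpace ℚ B.pos)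
    (x := x - P.sec (P.proj.toAlgHom x)) (by rw [map_sub, P.proj_sec, sub_self])
  exact (P.mem_base_mul hB (Module.Basis.ofVectorSpace ℚ B.pos) ⊤ x).2
    ⟨_, trivial, c, fun _ => trivial, by rw [← hc]; abel⟩

include hB in
/-- `B ⊗ K` is an ideal when `K` is a graded ideal. -/
theorem base_mul_ideal {K : Submodule ℚ F.A} (hl : ∀ a, ∀ k ∈ K, a * k ∈ K)
    (hr : ∀ a, ∀ k ∈ K, k * a ∈ K) (hs : ∀ k ∈ K, F.toCDGA.sgn k ∈ K) (t : P.T.A) {x : P.T.A}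
    (hx : x ∈ P.baseSub * P.fiberComap K) :
    t * x ∈ P.baseSub * P.fiberComap K ∧ x * t ∈ P.baseSub * P.fiberComap K := by
  have hmem : ∀ (b : B.A) (k : F.A), k ∈ K →
      P.incl.toAlgHom b * P.sec k ∈ P.baseSub * P.fiberComap K := fun b k hk =>
    Submodule.mul_mem_mul (P.incl_mem _) ((P.mem_fiberComap K _).2 ⟨k, hk, rfl⟩)
  have hswap : ∀ (a : F.A) (b : B.A), ∃ (c : ℚ) (z : B.A),
      P.sec a * P.incl.toAlgHom b = c • P.sec a + P.incl.toAlgHom z * P.sec (F.toCDGA.sgn a) := by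
    intro a b
    obtain ⟨c, z, hz, rfl⟩ := hB.split b
    exact ⟨c, z, by rw [map_add, map_smul, map_one, mul_add, P.mul_incl hB hz, P.sgn_sec,
      mul_smul_comm, mul_one]⟩
  have ht := P.base_mul_top hB t
  induction hx using Submodule.mul_induction_on' with
  | add x _ y _ hx hy =>
    rw [mul_add, add_mul]
    exact ⟨Submodule.add_mem _ hx.1 hy.1, Submodule.add_mem _ hx.2 hy.2⟩
  | mem_mul_mem m hm n hn =>
    obtain ⟨b, rfl⟩ := hm
    obtain ⟨k, hk, rfl⟩ := (P.mem_fiberComap K n).1 hn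
    induction ht using Submodule.mul_induction_on' with
    | add x _ y _ hx hy =>
      rw [mul_add, add_mul]
      exact ⟨Submodule.add_mem _ hx.1 hy.1, Submodule.add_mem _ hx.2 hy.2⟩
    | mem_mul_mem m' hm n' hn =>
      obtain ⟨b', rfl⟩ := hm
      obtain ⟨a, -, rfl⟩ := (P.mem_fiberComap ⊤ n').1 hn
      rw [AlgHom.toLinearMap_apply, AlgHom.toLinearMap_apply]
      constructor
      · obtain ⟨c, z, h⟩ := hswap a b
        have : P.incl.toAlgHom b' * P.sec a * (P.incl.toAlgHom b * P.sec k) =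
            c • (P.incl.toAlgHom b' * P.sec (a * k)) +
              P.incl.toAlgHom (b' * z) * P.sec (F.toCDGA.sgn a * k) := by
          rw [mul_assoc, ← mul_assoc (P.sec a), h]
          simp only [map_mul, add_mul, mul_add, smul_mul_assoc, mul_smul_comm, mul_assoc]
        rw [this]
        exact Submodule.add_mem _ (Submodule.smul_mem _ _ (hmem _ _ (hl _ _ hk)))
          (hmem _ _ (hl _ _ hk))
      · obtain ⟨c, z, h⟩ := hswap k b'
        have : P.incl.toAlgHom b * P.sec k * (P.incl.toAlgHom b' * P.sec a) =
            c • (P.incl.toAlgHom b * P.sec (k * a)) +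
              P.incl.toAlgHom (b * z) * P.sec (F.toCDGA.sgn k * a) := by
          rw [mul_assoc, ← mul_assoc (P.sec k), h]
          simp only [map_mul, add_mul, mul_add, smul_mul_assoc, mul_smul_comm, mul_assoc]
        rw [this]
        exact Submodule.add_mem _ (Submodule.smul_mem _ _ (hmem _ _ (hr _ _ hk)))
          (hmem _ _ (hr _ _ (hs _ hk)))

end Split

end FibrationModel
end RHT

namespace RHT

/-! ### The derivations of the fibre defined by the total differential -/

namespace FibrationModel

theorem OddBase.exists_pr {B : CDGA} (hB : OddBase B) :
    ∃ pr : B.A →ₗ[ℚ] B.pos, (∀ x ∈ B.grading 0, pr x = 0) ∧ ∀ z : B.pos, pr z = z := by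
  let q : B.A →ₗ[ℚ] B.A := LinearMap.id - GradedAlgebra.proj B.grading 0
  have h0 : ∀ x ∈ B.grading 0, q x = 0 := by
    intro x hx
    rw [LinearMap.sub_apply, GradedAlgebra.proj_apply, DirectSum.decompose_of_mem_same _ hx]
    exact sub_self x
  have h1 : ∀ i, ∀ x ∈ B.grading (i + 1), q x = x := by
    intro i x hx
    rw [LinearMap.sub_apply, GradedAlgebra.proj_apply,
      DirectSum.decompose_of_mem_ne _ hx (Nat.succ_ne_zero i)]
    exact sub_zero x
  have h2 : B.pos ≤ LinearMap.ker (q - LinearMap.id) := by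
    refine iSup_le fun i x hx => ?_
    rw [LinearMap.mem_ker, LinearMap.sub_apply, h1 i x hx]; exact sub_self x
  have h3 : ∀ z ∈ B.pos, q z = z := fun z hz => sub_eq_zero.1 (h2 hz)
  refine ⟨q.codRestrict B.pos fun x => ?_, fun x hx => Subtype.ext (h0 x hx),
    fun z => Subtype.ext (h3 z z.2)⟩
  obtain ⟨c, z, hz, rfl⟩ := hB.split x
  rw [map_add, map_smul, h0 1 SetLike.GradedOne.one_mem, smul_zero, zero_add, h3 z hz]
  exact hz

variable {B : CDGA} {F : Sullivan} (P : FibrationModel B F) (hB : OddBase B)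

include hB in
/-- A linear functional `l` on `B⁺` induces a map of algebras `B ⊗ ΛV → ΛV ⊕ ΛV s` which sends
`b ∈ B⁺` to `l(b) s` and is the identity on `ΛV`. -/
theorem exists_eval (l : B.pos →ₗ[ℚ] ℚ) :
    ∃ φ : P.T.A →ₐ[ℚ] OddExt F.toCDGA.sgn, (∀ a, φ (P.sec a) = OddExt.inl _ a) ∧
      ∀ z : B.pos, φ (P.incl.toAlgHom z) = OddExt.mk 0 (l z • 1) := by
  obtain ⟨pr, hpr0, hpr⟩ := hB.exists_pr
  have hpr1 : pr 1 = 0 := hpr0 1 SetLike.GradedOne.one_mem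
  have hf : ∀ c : ℚ, ∀ z ∈ B.pos, P.proj.toAlgHom (P.incl.toAlgHom (c • 1 + z)) = c • 1 := by
    intro c z hz
    rw [map_add, map_add, P.proj_pos hz, map_smul, map_smul, map_one, map_one, add_zero]
  have hprc : ∀ c : ℚ, ∀ z (hz : z ∈ B.pos), pr (c • 1 + z) = ⟨z, hz⟩ := by
    intro c z hz
    rw [map_add, map_smul, hpr1, smul_zero, zero_add]; exact hpr ⟨z, hz⟩
  let g : B.A →ₐ[ℚ] OddExt F.toCDGA.sgn := AlgHom.ofLinearMap
    { toFun := fun b => OddExt.mk (P.proj.toAlgHom (P.incl.toAlgHom b)) (l (pr b) • 1)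
      map_add' := fun x y => by ext <;> simp [add_smul]
      map_smul' := fun c x => by ext <;> simp [smul_smul] }
    (by ext <;> simp [hpr1])
    (fun x y => by
      obtain ⟨c, z, hz, rfl⟩ := hB.split x
      obtain ⟨c', z', hz', rfl⟩ := hB.split y
      have hxy : (c • 1 + z) * (c' • 1 + z') = (c * c') • 1 + (c • z' + c' • z) := by
        simp only [add_mul, mul_add, smul_mul_assoc, mul_smul_comm, one_mul, mul_one,
          hB.mul_zero hz hz', smul_smul, smul_add, add_zero, mul_comm c' c]
        abel
      have hm : c • z' + c' • z ∈ B.pos :=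
        Submodule.add_mem _ (Submodule.smul_mem _ _ hz') (Submodule.smul_mem _ _ hz)
      have hl : l ⟨c • z' + c' • z, hm⟩ = c * l ⟨z', hz'⟩ + c' * l ⟨z, hz⟩ := by
        rw [show (⟨c • z' + c' • z, hm⟩ : B.pos) = c • ⟨z', hz'⟩ + c' • ⟨z, hz⟩ from rfl, map_add,
          map_smul, map_smul, smul_eq_mul, smul_eq_mul]
      ext
      · simp only [LinearMap.coe_mk, AddHom.coe_mk, OddExt.mul_re, OddExt.mk_re]
        rw [← map_mul, ← map_mul]
      · simp only [LinearMap.coe_mk, AddHom.coe_mk, OddExt.mul_im, OddExt.mk_re, OddExt.mk_im]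
        rw [hxy, hprc _ _ hm, hprc _ _ hz, hprc _ _ hz', hf _ _ hz, hf _ _ hz', hl]
        simp only [map_smul, map_one, smul_mul_smul_comm, mul_one, add_smul]
        rw [mul_comm c'])
  have hg : ∀ b, g b = OddExt.mk (P.proj.toAlgHom (P.incl.toAlgHom b)) (l (pr b) • 1) :=
    fun b => rfl
  obtain ⟨φ, ⟨hφ1, hφ2⟩, -⟩ := P.relFree (OddExt F.toCDGA.sgn) (parityPart F.toCDGA)
    ⟨by simp, by simp⟩ (parityPart_mul F.toCDGA) (parityPart_comm F.toCDGA) g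
    (by
      intro i x hx
      rw [hg]
      refine ⟨F.toCDGA.sgn_apply (P.proj.map_grading (P.incl.map_grading hx)), ?_⟩
      rw [OddExt.mk_im, map_smul, map_one]
      rcases Nat.even_or_odd i with hi | hi
      · -- a positive even degree component of the base is zero
        have : pr x = 0 := by
          rcases i with _ | i
          · exact hpr0 x hx
          · have h1 := hB.sgn_neg (Submodule.mem_iSup_of_mem (p := fun i => B.grading (i + 1)) i hx)
            rw [B.sgn_apply hx, hi.neg_one_pow, one_smul] at h1
            have h2 : (2 : ℚ) • x = 0 := by
              rw [two_smul]; nth_rw 1 [h1]; exact neg_add_cancel x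
            rw [smul_eq_zero_iff_right two_ne_zero] at h2
            rw [h2, map_zero]
        rw [this, map_zero, zero_smul, smul_zero]
      · rw [hi.add_one.neg_one_pow, one_smul])
    (fun i => (OddExt.inl _).toLinearMap ∘ₗ P.proj.toAlgHom.toLinearMap ∘ₗ (P.V i).subtype)
    (fun i v => ⟨F.toCDGA.sgn_apply (P.proj.map_grading (P.V_le i v.2)), by simp⟩)
  refine ⟨φ, fun a => ?_, fun z => ?_⟩
  · have : φ.comp P.sec = OddExt.inl _ := by
      refine AlgHom.ext_of_adjoin_eq_top F.generates ?_
      intro y hy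
      obtain ⟨i, hi⟩ := Set.mem_iUnion.1 hy
      rw [← P.proj_V i] at hi
      obtain ⟨v, hv, rfl⟩ := hi
      change φ (P.sec (P.proj.toAlgHom v)) = _
      rw [P.sec_proj (P.V_le_fiberSub hv)]
      exact hφ2 i ⟨v, hv⟩
    exact DFunLike.congr_fun this a
  · rw [hφ1, hg, P.proj_pos z.2, hpr]

variable {I : Type} (β : Module.Basis I ℚ B.pos)

include hB in
/-- The component of the total differential along a basis element of `B⁺` is a derivation of
`ΛV`, twisted by the degree involution. -/
theorem exists_derivation (i : I) : ∃ θ : F.A →ₗ[ℚ] F.A,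
    (∀ a b, θ (a * b) = θ a * F.toCDGA.sgn b + F.toCDGA.sgn a * θ b) ∧
    (∀ a, θ (F.d a) = - F.d (θ a)) ∧
    (∀ a, F.toCDGA.sgn a = -a → F.toCDGA.sgn (θ a) = -θ a) ∧
    (∀ a c, P.T.d (P.sec a) = P.sec (F.d a) + P.posMap β c → c i = F.toCDGA.sgn (θ a)) := by
  obtain ⟨φ, hφs, hφz⟩ := P.exists_eval hB (β.coord i)
  have hφc : ∀ c, (φ (P.posMap β c)).im = F.toCDGA.sgn (c i) := by
    intro c
    have : OddExt.imLin _ ∘ₗ φ.toLinearMap ∘ₗ P.posMap β =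
        F.toCDGA.sgn.toLinearMap ∘ₗ Finsupp.lapply i := by
      classical
      refine Finsupp.lhom_ext fun j a => ?_
      simp only [LinearMap.comp_apply, P.posMap_single, AlgHom.toLinearMap_apply, map_mul,
        OddExt.imLin_apply, hφz, hφs, OddExt.mul_im, OddExt.mk_re, OddExt.mk_im, OddExt.inl_re,
        zero_mul, zero_add, Finsupp.lapply_apply, Finsupp.single_apply, β.coord_apply,
        β.repr_self]
      split_ifs <;> simp
    exact LinearMap.congr_fun this c
  let θ : F.A →ₗ[ℚ] F.A := OddExt.imLin _ ∘ₗ φ.toLinearMap ∘ₗ P.T.d ∘ₗ P.sec.toLinearMap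
  have hθ : ∀ a, θ a = (φ (P.T.d (P.sec a))).im := fun a => rfl
  have hθc : ∀ a c, P.T.d (P.sec a) = P.sec (F.d a) + P.posMap β c →
      θ a = F.toCDGA.sgn (c i) := by
    intro a c h
    rw [hθ, h, map_add, OddExt.add_im, hφs, OddExt.inl_im, zero_add, hφc]
  have hex : ∀ a, ∃ c, P.T.d (P.sec a) = P.sec (F.d a) + P.posMap β c := by
    intro a
    obtain ⟨c, hc⟩ := P.mem_range_posMap hB β (x := P.T.d (P.sec a) - P.sec (F.d a))
      (by rw [map_sub, P.proj_sec, P.proj.comm_d, P.proj_sec, sub_self])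
    exact ⟨c, by rw [← hc]; abel⟩
  refine ⟨θ, fun a b => ?_, fun a => ?_, fun a ha => ?_, fun a c h => ?_⟩
  · rw [hθ, map_mul, P.T.leibniz_sgn, P.sgn_sec, map_add, map_mul, map_mul, hφs, hφs]
    simp [hθ]
  · obtain ⟨c, hc⟩ := hex a
    have h := P.T.d_sq (P.sec a)
    rw [hc, map_add, P.d_posMap hB β] at h
    have h1 := congrArg (fun x => (φ x).im) h
    simp only [map_add, map_neg, OddExt.add_im, OddExt.neg_im, hφc, map_zero, OddExt.zero_im,
      Finsupp.mapRange.linearMap_apply, Finsupp.mapRange_apply] at h1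
    rw [← hθ, F.toCDGA.sgn_d, neg_neg, ← hθc a c hc] at h1
    exact eq_neg_of_add_eq_zero_left h1
  · obtain ⟨c, hc⟩ := hex a
    have h := P.T.sgn_d (P.sec a)
    rw [P.sgn_sec, ha, map_neg, map_neg, neg_neg] at h
    have h1 := congrArg (fun x => (φ x).im) h
    rw [← hθ, hc, map_add, P.sgn_sec, P.sgn_posMap hB β, map_add, OddExt.add_im, hφs,
      OddExt.inl_im, zero_add, map_neg, OddExt.neg_im, hφc, Finsupp.mapRange.linearMap_apply,
      Finsupp.mapRange_apply, AlgHom.toLinearMap_apply, F.toCDGA.sgn_sgn] at h1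
    rw [hθc a c hc, F.toCDGA.sgn_sgn, ← neg_eq_iff_eq_neg, h1, hθc a c hc]
  · rw [hθc a c h, F.toCDGA.sgn_sgn]

include hB in
/-- The coordinates of an element of `B⁺ ⊗ ΛV` are well defined. -/
theorem posMap_injective : Function.Injective (P.posMap β) := by
  rw [← LinearMap.ker_eq_bot, LinearMap.ker_eq_bot']
  intro c hc
  ext i
  obtain ⟨θ, -, -, -, h⟩ := P.exists_derivation hB β i
  rw [h 0 c (by rw [hc]; simp), map_zero, map_zero]; rfl

end FibrationModel

/-- A graded differential ideal `K` of the fibre which is acyclic and preserved by the components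
of the total differential gives an acyclic ideal `B ⊗ K` of the total algebra. -/
theorem FibrationModel.base_mul_acyclic {B : CDGA} {F : Sullivan} (P : FibrationModel B F)
    (hB : OddBase B) {K : Submodule ℚ F.A} (hs : ∀ k ∈ K, F.toCDGA.sgn k ∈ K)
    (hd : ∀ k ∈ K, F.d k ∈ K) (hac : ∀ k ∈ K, F.d k = 0 → ∃ y ∈ K, F.d y = k)
    (hθ : ∀ θ : F.A →ₗ[ℚ] F.A,
      (∀ a b, θ (a * b) = θ a * F.toCDGA.sgn b + F.toCDGA.sgn a * θ b) →
      (∀ a, θ (F.d a) = - F.d (θ a)) →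
      (∀ a, F.toCDGA.sgn a = -a → F.toCDGA.sgn (θ a) = - θ a) → ∀ a ∈ K, θ a ∈ K) :
    (∀ x ∈ P.baseSub * P.fiberComap K, P.T.d x ∈ P.baseSub * P.fiberComap K) ∧
    (∀ x ∈ P.baseSub * P.fiberComap K, P.T.d x = 0 →
      ∃ y ∈ P.baseSub * P.fiberComap K, P.T.d y = x) := by
  let β := Module.Basis.ofVectorSpace ℚ B.pos
  have hex : ∀ a ∈ K, ∃ c, (∀ i, c i ∈ K) ∧ P.T.d (P.sec a) = P.sec (F.d a) + P.posMap β c := by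
    intro a ha
    obtain ⟨c, hc⟩ := P.mem_range_posMap hB β (x := P.T.d (P.sec a) - P.sec (F.d a))
      (by rw [map_sub, P.proj_sec, P.proj.comm_d, P.proj_sec, sub_self])
    have hc' : P.T.d (P.sec a) = P.sec (F.d a) + P.posMap β c := by rw [← hc]; abel
    refine ⟨c, fun i => ?_, hc'⟩
    obtain ⟨θ, h1, h2, h3, h4⟩ := P.exists_derivation hB β i
    rw [h4 a c hc']
    exact hs _ (hθ θ h1 h2 h3 a ha)
  refine ⟨fun x hx => ?_, fun x hx hdx => ?_⟩
  · obtain ⟨a, ha, c, hc, rfl⟩ := (P.mem_base_mul hB β K x).1 hx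
    obtain ⟨c', hc', h⟩ := hex a ha
    refine (P.mem_base_mul hB β K _).2 ⟨F.d a, hd a ha, c' - Finsupp.mapRange.linearMap F.d c,
      fun i => ?_, ?_⟩
    · rw [Finsupp.sub_apply, Finsupp.mapRange.linearMap_apply, Finsupp.mapRange_apply]
      exact K.sub_mem (hc' i) (hd _ (hc i))
    · rw [map_add, h, P.d_posMap hB β, map_sub]; abel
  · obtain ⟨a, ha, c, hc, rfl⟩ := (P.mem_base_mul hB β K x).1 hx
    -- the fibre component is a cocycle, hence bounds in `K`; subtracting reduces to `B⁺ ⊗ K`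
    have hda : F.d a = 0 := by
      have := congrArg P.proj.toAlgHom hdx
      rwa [map_add, map_add, map_zero, P.d_posMap hB β, map_neg, P.proj_posMap, neg_zero, add_zero,
        P.proj.comm_d, P.proj_sec] at this
    obtain ⟨y, hy, rfl⟩ := hac a ha hda
    obtain ⟨c', hc', h⟩ := hex y hy
    have hdc : Finsupp.mapRange.linearMap F.d (c - c') = 0 := by
      have h1 := hdx
      rw [← sub_eq_iff_eq_add.2 h, map_add, map_sub, P.T.d_sq, zero_sub, ← map_neg, ← map_add,
        ← map_neg, ← map_add, neg_add_eq_sub, P.d_posMap hB β, neg_eq_zero] at h1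
      exact P.posMap_injective hB β (by rw [h1, map_zero])
    have hcoord : ∀ i, ∃ z ∈ K, F.d z = (c - c') i ∧ ((c - c') i = 0 → z = 0) := by
      intro i
      by_cases h0 : (c - c') i = 0
      · exact ⟨0, K.zero_mem, by rw [h0, map_zero], fun _ => rfl⟩
      · obtain ⟨z, hz, hdz⟩ := hac ((c - c') i)
          (by rw [Finsupp.sub_apply]; exact K.sub_mem (hc i) (hc' i))
          (by simpa using DFunLike.congr_fun hdc i)
        exact ⟨z, hz, hdz, fun h => absurd h h0⟩
    choose z hzK hdz hz0 using hcoord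
    let e : _ →₀ F.A := Finsupp.onFinset (c - c').support z fun i hi =>
      Finsupp.mem_support_iff.2 fun h => hi (hz0 i h)
    have he : Finsupp.mapRange.linearMap F.d e = c - c' := by
      ext i
      rw [Finsupp.mapRange.linearMap_apply, Finsupp.mapRange_apply]
      exact hdz i
    refine ⟨P.sec y + P.posMap β (-e), (P.mem_base_mul hB β K _).2 ⟨y, hy, -e, fun i => ?_, rfl⟩, ?_⟩
    · rw [Finsupp.neg_apply]; exact K.neg_mem (hzK i)
    · rw [map_add, h, P.d_posMap hB β, map_neg, map_neg, he, neg_neg, map_sub]; abel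

end RHT


open RHT in
/-- from the proof of Theorem 4.7.  Let `F → E → B` be a rational
fibration in which `F` is elliptic with positive Euler characteristic and `B` is a wedge
of odd-dimensional spheres, with model `H(B),0 → H(B) ⊗ ΛV, D → ΛV, d`, where
`ρ : ΛV,d → H*(F;ℚ)` is the bigraded-model quasi-isomorphism of `F` (`ρ(V_1) = 0`).
Then `H(B) ⊗ ker ρ` is a `D`-stable ideal of `H(B) ⊗ ΛV, D`, and it is acyclic:
every `D`-cocycle lying in `H(B) ⊗ ker ρ` is the `D`-differential of an element of
`H(B) ⊗ ker ρ`. -/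
theorem halperin_variations_stmt14
    (SB : Sullivan) (hSBmin : SB.Minimal) (hSB : SB.WedgeOddSpheres)
    (BF : BigradedSullivan) (hBFmin : BF.toSullivan.Minimal)
    (hBFell : BF.toSullivan.Elliptic) (hBFchi : BF.toSullivan.PosEuler)
    (HB : CDGA) (hHB : HB.ZeroDiff) (ψ : Hom SB.toCDGA HB) (hψ : QuasiIso ψ)
    (P : FibrationModel HB BF.toSullivan)
    -- the bigraded-model quasi-isomorphism `ρ : ΛV,d → H*(F;ℚ)`, killing `V_+`
    (HF : CDGA) (hHF : HF.ZeroDiff) (ρ : Hom BF.toCDGA HF) (hρqi : QuasiIso ρ)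
    (hρ : ∀ k : ℕ, ∀ x ∈ BF.low (k + 1), ρ.toAlgHom x = 0) :
    -- `J = H(B) ⊗ ker ρ` is a `D`-stable ideal …
    (∀ x ∈ P.baseSub * P.fiberComap (LinearMap.ker ρ.toAlgHom.toLinearMap),
      P.T.d x ∈ P.baseSub * P.fiberComap (LinearMap.ker ρ.toAlgHom.toLinearMap)) ∧
    (∀ a : P.T.A,
      ∀ x ∈ P.baseSub * P.fiberComap (LinearMap.ker ρ.toAlgHom.toLinearMap),
        a * x ∈ P.baseSub * P.fiberComap (LinearMap.ker ρ.toAlgHom.toLinearMap) ∧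
        x * a ∈ P.baseSub * P.fiberComap (LinearMap.ker ρ.toAlgHom.toLinearMap)) ∧
    -- … and it is acyclic
    (∀ x ∈ P.baseSub * P.fiberComap (LinearMap.ker ρ.toAlgHom.toLinearMap),
      P.T.d x = 0 →
        ∃ y ∈ P.baseSub * P.fiberComap (LinearMap.ker ρ.toAlgHom.toLinearMap),
          P.T.d y = x) := by
  have hB : FibrationModel.OddBase HB :=
    ⟨hHB, base_one_sup_pos ψ hHB hψ, base_mul_zero ψ hSB hHB hψ, base_sgn ψ hSB hHB hψ⟩
  obtain ⟨-, hθ⟩ := kernel_facts BF HF ρ hBFmin hBFell hBFchi hHF hρqi hρ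
  have hker : ∀ a, a ∈ LinearMap.ker ρ.toAlgHom.toLinearMap ↔ ρ.toAlgHom a = 0 := fun a => Iff.rfl
  have hs : ∀ k ∈ LinearMap.ker ρ.toAlgHom.toLinearMap,
      BF.toCDGA.sgn k ∈ LinearMap.ker ρ.toAlgHom.toLinearMap := by
    intro k hk
    rw [hker] at hk ⊢
    rw [ρ.map_sgn, hk, map_zero]
  obtain ⟨h1, h2⟩ := P.base_mul_acyclic hB hs (fun k _ => ρ.map_d_zero hHF k)
    (fun k hk hdk => ρ.ker_acyclic hHF hρqi hk hdk) (fun θ hm hd ho a ha => hθ θ hm hd ho a ha)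
  refine ⟨h1, fun a x hx => P.base_mul_ideal hB (fun a k hk => ?_) (fun a k hk => ?_) hs a hx, h2⟩
  · rw [hker] at hk ⊢
    rw [map_mul, hk, mul_zero]
  · rw [hker] at hk ⊢
    rw [map_mul, hk, zero_mul]
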